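/- arXiv:math/0204143 — 3 statements merged into one kernel-verified Lean document; each statement's English description precedes it below -/
import Mathlib

section
/- For every cardinal number α ≥ 𝔠, there exists a metrizable topological space X with |X| = α with the following property: for every class M of continuous maps between topological spaces such that every member of M is injective, M contains every homeomorphism of a space onto a clopen subspace of another space, and M is closed under composition, every quasiordered set (Q, ≤) with |Q| ≤ α has an M-representation by clopen subspaces of X; that is, there is a family {X(q) : q ∈ Q} of pairwise non-homeomorphic clopen subsets of X such that q ≤ q' if and only if there exists a map in M with domain X(q) and codomain X(q'). -/
universe u

open Cardinal

/-- A class `M` of continuous maps between topological spaces (in universe `u`) such that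
every member of `M` is injective, `M` contains every homeomorphism of a space onto a clopen
subspace of another space, and `M` is closed under composition. -/
def IsGoodClass
    (M : ∀ (Y Z : Type u) [TopologicalSpace Y] [TopologicalSpace Z], C(Y, Z) → Prop) :
    Prop :=
  (∀ (Y Z : Type u) [TopologicalSpace Y] [TopologicalSpace Z] (f : C(Y, Z)),
      M Y Z f → Function.Injective f) ∧
  (∀ (Y Z : Type u) [TopologicalSpace Y] [TopologicalSpace Z] (f : C(Y, Z)),
      (IsClopen (Set.range f) ∧ ∃ e : Y ≃ₜ Set.range f, ∀ y, (e y : Z) = f y) →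
      M Y Z f) ∧
  (∀ (Y Z W : Type u) [TopologicalSpace Y] [TopologicalSpace Z] [TopologicalSpace W]
      (f : C(Y, Z)) (g : C(Z, W)), M Y Z f → M Z W g → M Y W (g.comp f))

/-- The `M`-representation property of the space `X` for every quasiorder and every
good class `M`. -/
def RepresentsByClasses (α : Cardinal.{u}) (X : Type u) [TopologicalSpace X] : Prop :=
  ∀ M : ∀ (Y Z : Type u) [TopologicalSpace Y] [TopologicalSpace Z], C(Y, Z) → Prop,
    IsGoodClass M →
    ∀ (Q : Type u) (le : Q → Q → Prop), #Q ≤ α →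
      (∀ q, le q q) → (∀ a b c, le a b → le b c → le a c) →
      ∃ Xq : Q → Set X,
        (∀ q, IsClopen (Xq q)) ∧
        (∀ q q', q ≠ q' → IsEmpty ((Xq q) ≃ₜ (Xq q'))) ∧
        (∀ q q', le q q' ↔ ∃ f : C((Xq q), (Xq q')), M (Xq q) (Xq q') f)


namespace S7

open Set Topology

/-- A set of pairs large enough for the diagonal construction. -/
def Large {P : Type} (T : Set (P × P)) : Prop :=
  ∀ A B : Set P, #A < 𝔠 → #B < 𝔠 → ∃ z ∈ T, z.1 ≠ z.2 ∧ z.1 ∉ A ∧ z.2 ∉ B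

theorem diag {P J : Type} (hJ : #J ≤ 𝔠) (T : J → Set (P × P)) (hT : ∀ j, Large (T j)) :
    ∃ K : Set P, ∀ j, ∃ z ∈ T j, z.1 ∈ K ∧ z.2 ∉ K := by
  classical
  obtain ⟨r, wo, hr⟩ := Cardinal.exists_ord_eq J
  have key : ∀ (j : J) (g : ∀ i, r i j → P × P), ∃ z ∈ T j, z.1 ≠ z.2 ∧
      (∀ i h, z.1 ≠ (g i h).2) ∧ (∀ i h, z.2 ≠ (g i h).1) := by
    intro j g
    have hs : #{i // r i j} < 𝔠 := (Cardinal.card_typein_lt j hr).trans_le hJ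
    obtain ⟨z, hz, h1, h2, h3⟩ := hT j (range fun i : {i // r i j} => (g i.1 i.2).2)
      (range fun i : {i // r i j} => (g i.1 i.2).1)
      (Cardinal.mk_range_le.trans_lt hs) (Cardinal.mk_range_le.trans_lt hs)
    refine ⟨z, hz, h1, fun i h e => h2 ⟨⟨i, h⟩, e.symm⟩, fun i h e => h3 ⟨⟨i, h⟩, e.symm⟩⟩
  choose F hF1 hF2 hF3 hF4 using key
  let Z : J → P × P := wo.toIsWellFounded.wf.fix F
  have hZ : ∀ j, Z j = F j (fun i _ => Z i) := fun j => WellFounded.fix_eq _ _ _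
  refine ⟨range fun j => (Z j).1, fun j => ⟨Z j, ?_, ⟨j, rfl⟩, ?_⟩⟩
  · rw [hZ]; exact hF1 _ _
  · rintro ⟨i, hi⟩
    rcases (trichotomous_of r i j) with h | h | h
    · have := hF4 j (fun i _ => Z i) i h
      rw [← hZ] at this
      exact this hi.symm
    · subst h
      have := hF2 i (fun i _ => Z i)
      rw [← hZ] at this
      exact this hi
    · have := hF3 i (fun i _ => Z i) j h
      rw [← hZ] at this
      exact this hi

/-- The plane bundle in which everything takes place. -/
abbrev P : Type := ℕ × (ℝ × ℝ)

def C0 : Set P := {z | z.2 = (0, 0) ∨ z.2 = (1, 0)}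

theorem C0_countable : C0.Countable := by
  have : C0 = (fun n : ℕ => ((n, ((0 : ℝ), (0 : ℝ))) : P)) '' univ ∪
      (fun n : ℕ => ((n, ((1 : ℝ), (0 : ℝ))) : P)) '' univ := by
    ext ⟨n, x⟩
    simp [C0, eq_comm]
  rw [this]
  exact (countable_univ.image _).union (countable_univ.image _)

theorem closed_code (Y : Type) [TopologicalSpace Y] [SecondCountableTopology Y] :
    ∃ (J : Type) (F : J → Set Y), #J ≤ 𝔠 ∧ (∀ S, IsClosed S → ∃ j, F j = S) := by
  refine ⟨Set (TopologicalSpace.countableBasis Y), fun b => (⋃ s ∈ b, (s : Set Y))ᶜ, ?_, ?_⟩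
  · rw [Cardinal.mk_set, ← Cardinal.two_power_aleph0]
    exact Cardinal.power_le_power_left two_ne_zero (Cardinal.mk_le_aleph0_iff.2
      (TopologicalSpace.countable_countableBasis Y).to_subtype)
  · intro S hS
    refine ⟨{s | (s : Set Y) ⊆ Sᶜ}, ?_⟩
    rw [compl_eq_comm]
    apply Subset.antisymm
    · intro x hx
      obtain ⟨v, hv, hxv, hvS⟩ := (TopologicalSpace.isBasis_countableBasis Y).exists_subset_of_mem_open
        hx hS.isOpen_compl
      exact mem_iUnion₂.2 ⟨⟨v, hv⟩, hvS, hxv⟩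
    · exact iUnion₂_subset fun s hs => hs

theorem lt_union {Y : Type} {A B : Set Y} (hA : #A < 𝔠) (hB : #B < 𝔠) : #(A ∪ B : Set Y) < 𝔠 :=
  (Cardinal.mk_union_le A B).trans_lt (Cardinal.add_lt_of_lt Cardinal.aleph0_le_continuum hA hB)

theorem exists_not_mem {Y : Type} {A B : Set Y} (hA : 𝔠 ≤ #A) (hB : #B < 𝔠) : ∃ x ∈ A, x ∉ B := by
  by_contra h
  push Not at h
  exact absurd ((Cardinal.mk_le_mk_of_subset h).trans_lt hB) (not_lt.2 hA)

theorem mk_closed {F : Set P} (hF : IsClosed F) (hu : ¬ F.Countable) : 𝔠 ≤ #F := by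
  obtain ⟨f, hf, -, hi⟩ := hF.exists_nat_bool_injection_of_not_countable hu
  have := Cardinal.mk_le_of_injective (f := fun x => (⟨f x, hf ⟨x, rfl⟩⟩ : F))
    (fun a b h => hi (by simpa using h))
  simpa using this

theorem countable_lt {Y : Type} {A : Set Y} (h : A.Countable) : #A < 𝔠 :=
  (Cardinal.le_aleph0_iff_set_countable.2 h).trans_lt Cardinal.aleph0_lt_continuum

theorem mk_P : 𝔠 ≤ #(univ : Set P) := by
  have : Function.Injective (fun x : ℝ => ((0, (x, 0)) : P)) := fun a b h => by simpa using h
  have h := Cardinal.mk_le_of_injective this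
  rwa [Cardinal.mk_real, ← Cardinal.mk_univ] at h

theorem exists_K0 : ∃ K : Set P, C0 ⊆ K ∧
    (∀ F, IsClosed F → ¬ F.Countable → ∃ x ∈ F, x ∈ K ∧ x ∉ C0) ∧
    (∀ Γ : Set (P × P), IsClosed Γ → Large {z | z ∈ Γ ∧ ∀ y, (z.1, y) ∈ Γ → y = z.2} →
      ∃ x y, (x, y) ∈ Γ ∧ x ∈ K ∧ y ∉ K ) := by
  obtain ⟨J1, F1, hJ1, hF1⟩ := closed_code P
  obtain ⟨J2, F2, hJ2, hF2⟩ := closed_code (P × P)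
  let T : J1 ⊕ J2 → Set (P × P) := Sum.elim (fun j => {z | z.1 ∈ F1 j ∧ z.1 ∉ C0 ∧ z.2 ∉ C0})
    (fun j => {z | (z ∈ F2 j ∧ ∀ y, (z.1, y) ∈ F2 j → y = z.2) ∧ z.2 ∉ C0})
  have hJ : #{j // Large (T j)} ≤ 𝔠 := by
    refine (Cardinal.mk_subtype_le _).trans ?_
    rw [Cardinal.mk_sum, Cardinal.lift_id, Cardinal.lift_id]
    exact Cardinal.add_le_of_le Cardinal.aleph0_le_continuum hJ1 hJ2
  obtain ⟨K, hK⟩ := diag hJ (fun j => T j.1) (fun j => j.2)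
  refine ⟨K ∪ C0, subset_union_right, ?_, ?_⟩
  · intro F hF hu
    obtain ⟨j, rfl⟩ := hF1 F hF
    obtain ⟨z, ⟨h1, h2, h3⟩, h4, h5⟩ := hK ⟨Sum.inl j, by
      intro A B hA hB
      obtain ⟨x, hx, hxA⟩ := exists_not_mem (mk_closed hF hu) (lt_union hA (countable_lt C0_countable))
      obtain ⟨y, -, hy⟩ := exists_not_mem mk_P (lt_union (lt_union hB (countable_lt C0_countable))
        (countable_lt (countable_singleton x)))
      simp only [mem_union, not_or, mem_singleton_iff] at hxA hy
      exact ⟨(x, y), ⟨hx, hxA.2, hy.1.2⟩, fun h => hy.2 h.symm, hxA.1, hy.1.1⟩⟩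
    exact ⟨z.1, h1, Or.inl h4, h2⟩
  · intro Γ hΓ hL
    obtain ⟨j, rfl⟩ := hF2 Γ hΓ
    obtain ⟨z, ⟨h1, h2⟩, h4, h5⟩ := hK ⟨Sum.inr j, by
      intro A B hA hB
      obtain ⟨z, h1, h2, h3, h4⟩ := hL A (B ∪ C0) hA (lt_union hB (countable_lt C0_countable))
      simp only [mem_union, not_or] at h4
      exact ⟨z, ⟨h1, h4.2⟩, h2, h3, h4.1⟩⟩
    exact ⟨z.1, z.2, h1.1, Or.inl h4, by simp [h5, h2]⟩

/-- vertical segments -/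
theorem seg_closed (t : ℕ) (a b c : ℝ) : IsClosed ({t} ×ˢ ({a} ×ˢ Icc b c) : Set P) :=
  isClosed_singleton.prod (isClosed_singleton.prod isClosed_Icc)

theorem seg_unc (t : ℕ) (a b c : ℝ) (h : b < c) : ¬ ({t} ×ˢ ({a} ×ˢ Icc b c) : Set P).Countable := by
  intro hc
  have h2 := hc.image (fun z : P => z.2.2)
  have : Icc b c ⊆ (fun z : P => z.2.2) '' ({t} ×ˢ ({a} ×ˢ Icc b c) : Set P) := by
    intro y hy
    exact ⟨(t, (a, y)), by simpa using hy, rfl⟩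
  have h3 := countable_lt (h2.mono this)
  rw [Cardinal.mk_Icc_real h] at h3
  exact lt_irrefl _ h3

theorem open_box {U : Set P} (hU : IsOpen U) {z : P} (hz : z ∈ U) :
    ∃ ε > 0, ∀ x y : ℝ, x ∈ Icc (z.2.1 - ε) (z.2.1 + ε) → y ∈ Icc (z.2.2 - ε) (z.2.2 + ε) → (z.1, (x, y)) ∈ U := by
  obtain ⟨ε, he, h⟩ := Metric.isOpen_iff.1 hU z hz
  refine ⟨ε / 2, by positivity, fun x y hx hy => h ?_⟩
  rw [Metric.mem_ball, Prod.dist_eq, Prod.dist_eq, Real.dist_eq, Real.dist_eq]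
  simp only [dist_self, max_lt_iff, abs_lt]
  simp only [mem_Icc] at hx hy
  refine ⟨he, ⟨by linarith, by linarith⟩, ⟨by linarith, by linarith⟩⟩

theorem exists_K : ∃ K : Set P, C0 ⊆ K ∧
    (∀ F, IsClosed F → ¬ F.Countable → ∃ x ∈ F, x ∈ K ∧ x ∉ C0) ∧
    (∀ (U : Set P) (h : P → P), IsOpen U → ContinuousOn h (K ∩ U) → InjOn h (K ∩ U) →
      MapsTo h (K ∩ U) K → ∀ x ∈ K ∩ U, h x = x) := by
  obtain ⟨K, hC, hF, hΓ⟩ := exists_K0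
  refine ⟨K, hC, hF, ?_⟩
  have hbig : ∀ U : Set P, IsOpen U → U.Nonempty → 𝔠 ≤ #(K ∩ U : Set P) := by
    rintro U hU ⟨z, hz⟩
    obtain ⟨ε, he, hb⟩ := open_box hU hz
    have : ∀ s : Ioo (z.2.1 - ε) (z.2.1 + ε), ∃ w : (K ∩ U : Set P), w.1.2.1 = s := by
      rintro ⟨s, hs⟩
      obtain ⟨w, hw, hwK, -⟩ := hF _ (seg_closed z.1 s (z.2.2 - ε) (z.2.2 + ε))
        (seg_unc _ _ _ _ (by linarith))
      simp only [mem_prod, mem_singleton_iff] at hw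
      refine ⟨⟨w, hwK, ?_⟩, hw.2.1⟩
      have := hb s w.2.2 ⟨hs.1.le, hs.2.le⟩ hw.2.2
      rwa [← hw.1, ← hw.2.1] at this
    choose g hg using this
    have hi : Function.Injective g := fun a b e => Subtype.ext (by rw [← hg, ← hg, e])
    have := Cardinal.mk_le_of_injective hi
    rwa [Cardinal.mk_Ioo_real (by linarith)] at this
  intro U h hU hc hi hm x0 hx0
  by_contra hne
  obtain ⟨V, W, hV, hW, hxV, hxW, hd⟩ := t2_separation (Ne.symm hne)
  obtain ⟨N, hN, hxN, hNW⟩ := mem_nhdsWithin.1 (hc x0 hx0 (hW.mem_nhds hxW))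
  obtain ⟨B, ⟨hxB, hB⟩, hBc⟩ := (nhds_basis_opens x0).nhds_closure.mem_iff.1
    (((hV.inter hN).inter hU).mem_nhds ⟨⟨hxV, hxN⟩, hx0.2⟩)
  have hBU : closure B ⊆ U := fun x hx => (hBc hx).2
  have hBh : ∀ x ∈ K ∩ B, h x ∈ W := fun x hx =>
    hNW ⟨(hBc (subset_closure hx.2)).1.2, hx.1, hBU (subset_closure hx.2)⟩
  have hBn : ∀ x ∈ K ∩ B, x ≠ h x := fun x hx e =>
    disjoint_left.1 hd (hBc (subset_closure hx.2)).1.1 (e ▸ hBh x hx)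
  set Γ : Set (P × P) := closure ((fun x => (x, h x)) '' (K ∩ B)) with hΓd
  have star : ∀ x ∈ K ∩ U, ∀ y, (x, y) ∈ Γ → y = h x := by
    intro x hx y hy
    by_contra hne
    obtain ⟨N1, N2, hN1, hN2, hy1, hx2, hdd⟩ := t2_separation hne
    obtain ⟨O, hO, hxO, hO2⟩ := mem_nhdsWithin.1 (hc x hx (hN2.mem_nhds hx2))
    obtain ⟨_, hp, x', hx', rfl⟩ := mem_closure_iff.1 hy (O ×ˢ N1) (hO.prod hN1) ⟨hxO, hy1⟩
    exact disjoint_left.1 hdd hp.2 (hO2 ⟨hp.1, hx'.1, hBU (subset_closure hx'.2)⟩)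
  obtain ⟨x, y, hxy, hxK, hyK⟩ := hΓ Γ isClosed_closure (by
    intro A D hA hD
    have hpre : #((K ∩ B) ∩ h ⁻¹' D : Set P) < 𝔠 := by
      refine lt_of_le_of_lt ?_ hD
      refine Cardinal.mk_le_of_injective (f := fun x => (⟨h x.1, x.2.2⟩ : D)) ?_
      intro a b e
      have e' : h a.1 = h b.1 := by simpa using e
      exact Subtype.ext (hi ⟨a.2.1.1, hBU (subset_closure a.2.1.2)⟩
        ⟨b.2.1.1, hBU (subset_closure b.2.1.2)⟩ e')
    obtain ⟨x, hx, hxn⟩ := exists_not_mem (hbig B hB ⟨x0, hxB⟩) (lt_union hA hpre)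
    simp only [mem_union, not_or] at hxn
    refine ⟨(x, h x), ⟨subset_closure ⟨x, hx, rfl⟩, fun y hy => star x ⟨hx.1, hBU (subset_closure hx.2)⟩ y hy⟩,
      hBn x hx, hxn.1, fun hD => hxn.2 ⟨hx, hD⟩⟩)
  have hxc : x ∈ closure B := by
    have := ((continuous_fst (X := P) (Y := P)).closure_preimage_subset B)
    have h' : (x, y) ∈ closure (Prod.fst ⁻¹' B) := by
      refine closure_mono ?_ hxy
      rintro _ ⟨x, hx, rfl⟩
      exact hx.2
    exact this h'
  have hxU : x ∈ K ∩ U := ⟨hxK, hBU hxc⟩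
  rw [star x hxU y hxy] at hyK
  exact hyK (hm hxU)

end S7

namespace S7
open Set Topology

noncomputable def K : Set P := exists_K.choose
theorem K_C0 : C0 ⊆ K := exists_K.choose_spec.1
theorem K_closed : ∀ F, IsClosed F → ¬ F.Countable → ∃ x ∈ F, x ∈ K ∧ x ∉ C0 :=
  exists_K.choose_spec.2.1
theorem K_rigid : ∀ (U : Set P) (h : P → P), IsOpen U → ContinuousOn h (K ∩ U) →
    InjOn h (K ∩ U) → MapsTo h (K ∩ U) K → ∀ x ∈ K ∩ U, h x = x :=
  exists_K.choose_spec.2.2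

def Kt (t : ℕ) : Set (ℝ × ℝ) := {x | (t, x) ∈ K}
def St (t : ℕ) : Set (ℝ × ℝ) := {x | (t, x) ∈ K ∧ x ≠ (0, 0) ∧ x ≠ (1, 0)}

theorem zero_mem (t : ℕ) : ((0, 0) : ℝ × ℝ) ∈ Kt t := K_C0 (Or.inl rfl)
theorem one_mem (t : ℕ) : ((1, 0) : ℝ × ℝ) ∈ Kt t := K_C0 (Or.inr rfl)

theorem St_sub (t : ℕ) : St t ⊆ Kt t := fun _ h => h.1

theorem St_closed (t : ℕ) {F : Set (ℝ × ℝ)} (hF : IsClosed F) (hu : ¬ F.Countable) :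
    ∃ x ∈ F, x ∈ St t := by
  obtain ⟨⟨s, x⟩, hz, hK, hC⟩ := K_closed ({t} ×ˢ F) (isClosed_singleton.prod hF) (by
    intro hc
    apply hu
    have := hc.image Prod.snd
    have hsub : F ⊆ Prod.snd '' (({t} : Set ℕ) ×ˢ F) := fun x hx => ⟨(t, x), ⟨rfl, hx⟩, rfl⟩
    exact this.mono hsub)
  obtain ⟨h1, h2⟩ := hz
  simp only [mem_singleton_iff] at h1
  subst h1
  simp only [C0, mem_setOf_eq, not_or] at hC
  exact ⟨x, h2, hK, hC⟩

theorem St_open (t : ℕ) {W : Set (ℝ × ℝ)} (hW : IsOpen W) (hn : W.Nonempty) :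
    ∃ x ∈ W, x ∈ St t := by
  obtain ⟨x, hx⟩ := hn
  obtain ⟨ε, he, hb⟩ := open_box (U := Set.univ ×ˢ W) (isOpen_univ.prod hW) (z := (t, x)) ⟨trivial, hx⟩
  obtain ⟨⟨s, y⟩, hw, hK, hC⟩ := K_closed _ (seg_closed t x.1 (x.2 - ε) (x.2 + ε))
    (seg_unc _ _ _ _ (by linarith))
  simp only [mem_prod, mem_singleton_iff] at hw
  obtain ⟨rfl, h2, h3⟩ := hw
  simp only [C0, mem_setOf_eq, not_or] at hC
  refine ⟨y, ?_, hK, hC⟩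
  have := hb y.1 y.2 (by rw [h2]; constructor <;> simp only <;> linarith) h3
  exact this.2

theorem St_dense (t : ℕ) : Dense (St t) := by
  rw [dense_iff_inter_open]
  intro U hU hn
  obtain ⟨x, h1, h2⟩ := St_open t hU hn
  exact ⟨x, h1, h2⟩

theorem St_preconnected (t : ℕ) : IsPreconnected (St t) := by
  intro U V hU hV hc hSU hSV
  by_contra hne
  have hdis : U ∩ V = ∅ := by
    by_contra h
    obtain ⟨x, hx, hxS⟩ := St_open t (hU.inter hV) (nonempty_iff_ne_empty.2 h)
    exact hne ⟨x, hxS, hx⟩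
  have hco : ((U ∪ V)ᶜ).Countable := by
    by_contra hu
    obtain ⟨x, hx, hxS⟩ := St_closed t (hU.union hV).isClosed_compl hu
    exact hx (hc hxS)
  have := (hco.isConnected_compl_of_one_lt_rank (E := ℝ × ℝ) (by
    rw [rank_prod', Module.rank_self]; norm_num [one_add_one_eq_two])).isPreconnected
  rw [compl_compl] at this
  obtain ⟨x, -, hx⟩ := this U V hU hV subset_rfl
    (by obtain ⟨x, -, h⟩ := hSU; exact ⟨x, Or.inl h, h⟩)
    (by obtain ⟨x, -, h⟩ := hSV; exact ⟨x, Or.inr h, h⟩)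
  rw [hdis] at hx
  exact hx

theorem Kt_preconnected (t : ℕ) : IsPreconnected (Kt t) :=
  (St_preconnected t).subset_closure (St_sub t) (fun x _ => St_dense t x)

theorem St_two (t : ℕ) : ∃ x ∈ St t, ∃ y ∈ St t, x ≠ y := by
  obtain ⟨x, -, hx⟩ := St_open t isOpen_univ univ_nonempty
  obtain ⟨y, hy, hy'⟩ := St_open t (W := {x}ᶜ) isOpen_compl_singleton
    ⟨(x.1 + 1, x.2), by simp [Prod.ext_iff]⟩
  exact ⟨x, hx, y, hy', fun h => hy h.symm⟩

/-! ### Rigid colouring of a well-order with top -/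

theorem rigid_col (A : Type u) [LinearOrder A] [WellFoundedLT A] [OrderTop A] :
    ∃ c : A → A → ℕ, ∀ f : A → A, StrictMono f → (∀ x y, x < y → c (f x) (f y) = c x y) →
      ∀ x, f x = x := by
  classical
  let good : A → (A → ℕ) → Prop := fun m g =>
    (∀ x y, x ≤ y → y < m → g x ≤ g y) ∧ ∀ n, ∃ x, x < m ∧ n < g x
  let c : A → A → ℕ := fun x m => if h : ∃ g, good m g then h.choose x else 0
  have cmono : ∀ m x y, x ≤ y → y < m → c x m ≤ c y m := by
    intro m x y hxy hy
    by_cases h : ∃ g, good m g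
    · simp only [c, dif_pos h]
      exact h.choose_spec.1 x y hxy hy
    · simp only [c, dif_neg h, le_refl]
  have cunb : ∀ m, (∃ g, good m g) → ∀ n, ∃ x, x < m ∧ n < c x m := by
    intro m h n
    simp only [c, dif_pos h]
    exact h.choose_spec.2 n
  refine ⟨c, fun f hf hc x => ?_⟩
  by_contra hne
  have hx : x < f x := lt_of_le_of_ne hf.le_apply (Ne.symm hne)
  have htop : f ⊤ = ⊤ := le_antisymm le_top hf.le_apply
  let s : ℕ → A := fun n => f^[n] x
  have ss : ∀ n, s (n + 1) = f (s n) := fun n => Function.iterate_succ_apply' f n x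
  have sm : StrictMono s := by
    apply strictMono_nat_of_lt_succ
    intro n
    induction n with
    | zero => exact hx
    | succ n ih => rw [ss (n + 1)]; nth_rewrite 1 [ss n]; exact hf ih
  have st : ∀ n, s n < ⊤ := by
    intro n
    exact lt_of_lt_of_le (sm (Nat.lt_succ_self n)) le_top
  let B : Set A := {m | ∀ n, s n < m}
  have hB : B.Nonempty := ⟨⊤, st⟩
  let l := (wellFounded_lt (α := A)).min B hB
  have hl : ∀ n, s n < l := (wellFounded_lt (α := A)).min_mem B hB
  have hlm : ∀ y, y < l → ∃ k, y ≤ s k := by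
    intro y hy
    by_contra h
    push Not at h
    exact (wellFounded_lt (α := A)).not_lt_min B h hy
  have hgood : ∃ g, good l g := by
    refine ⟨fun y => sInf {k | y ≤ s k}, ?_, ?_⟩
    · intro y z hyz hz
      have : sInf {k | z ≤ s k} ∈ {k | z ≤ s k} := Nat.sInf_mem (hlm z hz)
      exact Nat.sInf_le (hyz.trans this)
    · intro n
      refine ⟨s (n + 1), hl _, ?_⟩
      have : sInf {k | s (n + 1) ≤ s k} ∈ {k | s (n + 1) ≤ s k} := Nat.sInf_mem ⟨n + 1, le_refl _⟩
      exact sm.le_iff_le.1 this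
  have hfl : ∀ y, y < l → f y < l := by
    intro y hy
    obtain ⟨k, hk⟩ := hlm y hy
    exact lt_of_le_of_lt (hf.monotone hk) (ss k ▸ hl (k + 1))
  have hll : f l = l := by
    by_contra h
    have hlt : l < f l := lt_of_le_of_ne hf.le_apply (Ne.symm h)
    obtain ⟨y, hy, hy2⟩ := cunb l hgood (c l (f l))
    rw [← hc y l hy] at hy2
    exact absurd (cmono (f l) (f y) l (hfl y hy).le hlt) (not_le.2 hy2)
  have hconst : ∀ k, c (s k) l = c x l := by
    intro k
    induction k with
    | zero => rfl
    | succ k ih =>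
      rw [← ih, ← hc (s k) l (hl k), hll, ss]
  obtain ⟨y, hy, hy2⟩ := cunb l hgood (c x l)
  obtain ⟨k, hk⟩ := hlm y hy
  have := cmono l y (s k) hk (hl k)
  rw [hconst] at this
  omega

/-! ### The glued spaces -/

section Glue
variable {A : Type u} [LinearOrder A]

abbrev W : Type := ℝ × (ℝ × ℝ)
abbrev L (A : Type u) : Type u := lp (fun _ : A ⊕ (A × A) => W) ⊤

noncomputable def den (x : ℝ × ℝ) : ℝ := ‖x‖ + ‖x - (1, 0)‖
theorem den_pos (x : ℝ × ℝ) : 0 < den x := by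
  unfold den
  have h1 := norm_nonneg x
  have h2 := norm_nonneg (x - (1, 0))
  rcases h1.lt_or_eq with h | h
  · linarith
  · have : x = 0 := norm_eq_zero.1 h.symm
    subst this
    simp [Prod.norm_def]
noncomputable def va (x : ℝ × ℝ) : ℝ := ‖x - (1, 0)‖ / den x
noncomputable def vb (x : ℝ × ℝ) : ℝ := ‖x‖ / den x
noncomputable def vw (x : ℝ × ℝ) : ℝ := va x * vb x

theorem va_add_vb (x : ℝ × ℝ) : va x + vb x = 1 := by
  have := (den_pos x).ne'
  unfold va vb
  rw [← add_div, div_eq_one_iff_eq this, den, add_comm]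

theorem va_zero : va (0, 0) = 1 := by simp [va, den, Prod.norm_def]
theorem vb_zero : vb (0, 0) = 0 := by simp [vb]
theorem va_one : va (1, 0) = 0 := by simp [va]
theorem vb_one : vb (1, 0) = 1 := by simp [vb, den]
theorem vw_zero : vw (0, 0) = 0 := by simp [vw, vb_zero]
theorem vw_one : vw (1, 0) = 0 := by simp [vw, va_one]
theorem vw_ne {x : ℝ × ℝ} (h0 : x ≠ (0, 0)) (h1 : x ≠ (1, 0)) : vw x ≠ 0 := by
  have := (den_pos x).ne'
  have h0' : ‖x‖ ≠ 0 := norm_ne_zero_iff.2 h0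
  have h1' : ‖x - (1, 0)‖ ≠ 0 := norm_ne_zero_iff.2 (sub_ne_zero.2 h1)
  unfold vw va vb
  positivity

theorem den_cont : Continuous den := by unfold den; fun_prop
theorem va_cont : Continuous va := by
  unfold va
  exact Continuous.div (by fun_prop) den_cont fun x => (den_pos x).ne'
theorem vb_cont : Continuous vb := by
  unfold vb
  exact Continuous.div (by fun_prop) den_cont fun x => (den_pos x).ne'
theorem vw_cont : Continuous vw := va_cont.mul vb_cont

noncomputable def sg (i : A ⊕ (A × A)) (w : W) : L A := lp.single ⊤ i w

noncomputable def Phi (a b : A) (x : ℝ × ℝ) : L A :=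
  sg (Sum.inl a) (va x, 0) + sg (Sum.inl b) (vb x, 0) + sg (Sum.inr (a, b)) (vw x, vw x • x)

noncomputable def vtx (a : A) : L A := sg (Sum.inl a) (1, 0)

theorem sg_cont (i : A ⊕ (A × A)) : Continuous (sg i) :=
  (lp.isometry_single (E := fun _ : A ⊕ (A × A) => W) (p := ⊤) i).continuous

theorem sg_zero (i : A ⊕ (A × A)) : sg i 0 = 0 := lp.single_zero ⊤ i

theorem sg_apply (i j : A ⊕ (A × A)) (w : W) : (sg i w) j = if j = i then w else 0 := by
  unfold sg
  rw [lp.single_apply, Pi.single_apply]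

theorem Phi_cont (a b : A) : Continuous (Phi a b) := by
  unfold Phi
  refine ((( sg_cont _).comp ?_).add ((sg_cont _).comp ?_)).add ((sg_cont _).comp ?_)
  · exact va_cont.prodMk continuous_const
  · exact vb_cont.prodMk continuous_const
  · exact vw_cont.prodMk (vw_cont.smul continuous_id)

theorem Phi_zero (a b : A) : Phi a b (0, 0) = vtx a := by
  have : ((0 : ℝ), ((0 : ℝ), (0 : ℝ))) = (0 : W) := rfl
  unfold Phi vtx
  rw [va_zero, vb_zero, vw_zero, zero_smul]
  change sg (Sum.inl a) (1, 0) + sg (Sum.inl b) (0 : W) + sg (Sum.inr (a, b)) (0 : W) = _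
  rw [sg_zero, sg_zero, add_zero, add_zero]

theorem Phi_one (a b : A) : Phi a b (1, 0) = vtx b := by
  simp [Phi, vtx, va_one, vb_one, vw_one, sg_zero, Prod.mk_zero_zero]

theorem Phi_inr (a b : A) (x : ℝ × ℝ) (e : A × A) :
    (Phi a b x) (Sum.inr e) = if e = (a, b) then (vw x, vw x • x) else 0 := by
  simp [Phi, sg_apply]

theorem Phi_inl (a b : A) (x : ℝ × ℝ) (v : A) :
    ((Phi a b x) (Sum.inl v)).1 = (if v = a then va x else 0) + (if v = b then vb x else 0) := by
  simp only [Phi, sg_apply, lp.coeFn_add, Pi.add_apply]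
  split_ifs <;> simp_all

theorem vtx_inl (a v : A) : ((vtx a) (Sum.inl v)).1 = if v = a then 1 else 0 := by
  simp only [vtx, sg_apply]
  split_ifs <;> simp_all

theorem vtx_inj {a b : A} (h : vtx a = vtx b) : a = b := by
  by_contra hne
  have h1 := vtx_inl a a
  rw [h, vtx_inl] at h1
  simp [hne] at h1

theorem coord_cont (i : A ⊕ (A × A)) : Continuous (fun g : L A => g i) :=
  (lp.evalCLM ℝ (fun _ : A ⊕ (A × A) => W) (p := ⊤) i).continuous

def G (τ : A → A → ℕ) : Set (L A) := {g | ∃ a b x, a < b ∧ x ∈ Kt (τ a b) ∧ g = Phi a b x}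

theorem edge (τ : A → A → ℕ) (t : ℕ) (f : ℝ × ℝ → L A) (hc : ContinuousOn f (Kt t))
    (hi : InjOn f (Kt t)) (hm : MapsTo f (Kt t) (G τ)) :
    ∃ a b, a < b ∧ τ a b = t ∧ ∀ x ∈ Kt t, f x = Phi a b x := by
  -- local rigidity
  have loc : ∀ a b, ∀ x ∈ Kt t, ((f x) (Sum.inr (a, b))).1 ≠ 0 →
      a < b ∧ τ a b = t ∧ f x = Phi a b x := by
    intro a b x0 hx0 hne0
    have hO : ∀ x ∈ Kt t, ((f x) (Sum.inr (a, b))).1 ≠ 0 →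
        ∃ y, a < b ∧ y ∈ Kt (τ a b) ∧ f x = Phi a b y ∧ vw y ≠ 0 := by
      intro x hx hne
      obtain ⟨a', b', y, hlt, hy, he⟩ := hm hx
      rw [he, Phi_inr] at hne
      split_ifs at hne with h
      · obtain ⟨rfl, rfl⟩ := Prod.mk.inj h
        exact ⟨y, hlt, hy, he, hne⟩
      · exact absurd rfl hne
    let inv : L A → ℝ × ℝ := fun g => (g (Sum.inr (a, b))).1⁻¹ • (g (Sum.inr (a, b))).2
    have hinv : ∀ y, vw y ≠ 0 → inv (Phi a b y) = y := by
      intro y hy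
      simp only [inv, Phi_inr, if_true]
      exact inv_smul_smul₀ hy y
    obtain ⟨O, hOo, hOe⟩ := (continuousOn_iff'.1 ((continuous_fst.comp (coord_cont (Sum.inr (a, b)))).comp_continuousOn hc))
      {0}ᶜ isOpen_compl_singleton
    have hOm : ∀ x, (x ∈ O ∧ x ∈ Kt t) ↔ (((f x) (Sum.inr (a, b))).1 ≠ 0 ∧ x ∈ Kt t) := by
      intro x
      have := Set.ext_iff.1 hOe x
      exact this.symm
    let h : P → P := fun z => (τ a b, inv (f z.2))
    have hU : IsOpen (({t} : Set ℕ) ×ˢ O) := (isOpen_discrete _).prod hOo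
    have hmem : ∀ z ∈ K ∩ (({t} : Set ℕ) ×ˢ O), z.2 ∈ Kt t ∧ ((f z.2) (Sum.inr (a, b))).1 ≠ 0 ∧ z.1 = t := by
      rintro ⟨s, x⟩ ⟨h1, h2, h3⟩
      simp only [mem_singleton_iff] at h2
      subst h2
      exact ⟨h1, ((hOm x).1 ⟨h3, h1⟩).1, rfl⟩
    have hmap : MapsTo (fun z : P => z.2) (K ∩ (({t} : Set ℕ) ×ˢ O)) (Kt t) := fun z hz => (hmem z hz).1
    have hfc : ContinuousOn (fun z : P => f z.2) (K ∩ (({t} : Set ℕ) ×ˢ O)) :=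
      hc.comp continuous_snd.continuousOn hmap
    have hcc := (coord_cont (A := A) (Sum.inr (a, b))).comp_continuousOn hfc
    have hx0' : ((t, x0) : P) ∈ K ∩ (({t} : Set ℕ) ×ˢ O) := ⟨hx0, rfl, ((hOm x0).2 ⟨hne0, hx0⟩).1⟩
    have := K_rigid _ h hU ?_ ?_ ?_ (t, x0) hx0'
    · obtain ⟨y, hlt, hy, he, hw⟩ := hO x0 hx0 hne0
      simp only [h, he, hinv y hw, Prod.mk.injEq] at this
      exact ⟨hlt, this.1, this.2 ▸ he⟩
    · refine continuousOn_const.prodMk ?_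
      refine ContinuousOn.smul (ContinuousOn.inv₀ (continuous_fst.comp_continuousOn hcc) ?_)
        (continuous_snd.comp_continuousOn hcc)
      exact fun z hz => (hmem z hz).2.1
    · intro z hz z' hz' hzz
      obtain ⟨m1, m2, m3⟩ := hmem z hz
      obtain ⟨n1, n2, n3⟩ := hmem z' hz'
      obtain ⟨y, -, hy, he, hw⟩ := hO z.2 m1 m2
      obtain ⟨y', -, hy', he', hw'⟩ := hO z'.2 n1 n2
      simp only [h, he, he', hinv y hw, hinv y' hw', Prod.mk.injEq] at hzz
      refine Prod.ext (m3.trans n3.symm) (hi m1 n1 ?_)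
      rw [he, he', hzz.2]
    · intro z hz
      obtain ⟨m1, m2, m3⟩ := hmem z hz
      obtain ⟨y, -, hy, he, hw⟩ := hO z.2 m1 m2
      simp only [h, he, hinv y hw]
      exact hy
  by_cases hex : ∃ x ∈ St t, ∃ a b, ((f x) (Sum.inr (a, b))).1 ≠ 0
  · obtain ⟨x0, hx0, a, b, hne0⟩ := hex
    obtain ⟨hlt, hτ, -⟩ := loc a b x0 hx0.1 hne0
    refine ⟨a, b, hlt, hτ, ?_⟩
    have hco : ContinuousOn (fun x => ((f x) (Sum.inr (a, b))).1) (St t) :=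
      ((continuous_fst.comp (coord_cont (Sum.inr (a, b)))).comp_continuousOn hc).mono (St_sub t)
    obtain ⟨O, hOo, hOe⟩ := continuousOn_iff'.1 hco {0}ᶜ isOpen_compl_singleton
    have hco2 : ContinuousOn (fun x => f x - Phi a b x) (St t) :=
      (hc.mono (St_sub t)).sub (Phi_cont a b).continuousOn
    obtain ⟨O2, hOo2, hOe2⟩ := continuousOn_iff'.1 hco2 {0}ᶜ isOpen_compl_singleton
    have m1 : ∀ x ∈ St t, (x ∈ O ↔ ((f x) (Sum.inr (a, b))).1 ≠ 0) := by
      intro x hx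
      have := Set.ext_iff.1 hOe x
      simp only [mem_inter_iff, hx, and_true] at this
      exact this.symm
    have m2 : ∀ x ∈ St t, (x ∈ O2 ↔ f x ≠ Phi a b x) := by
      intro x hx
      have := Set.ext_iff.1 hOe2 x
      simp only [mem_inter_iff, hx, and_true] at this
      rw [← this]
      exact not_congr sub_eq_zero
    have hS : ∀ x ∈ St t, f x = Phi a b x := by
      by_contra hcon
      push Not at hcon
      obtain ⟨x1, hx1, hx1'⟩ := hcon
      obtain ⟨x, hx, hxO, hxO2⟩ := St_preconnected t O O2 hOo hOo2 (by
        intro x hx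
        by_cases h : f x = Phi a b x
        · left
          rw [m1 x hx, h, Phi_inr, if_pos rfl]
          exact vw_ne hx.2.1 hx.2.2
        · right
          exact (m2 x hx).2 h) ⟨x0, hx0, (m1 x0 hx0).2 hne0⟩ ⟨x1, hx1, (m2 x1 hx1).2 hx1'⟩
      exact (m2 x hx).1 hxO2 (loc a b x hx.1 ((m1 x hx).1 hxO)).2.2
    intro x hx
    have hE : EqOn f (Phi a b) (Kt t) := by
      refine EqOn.of_subset_closure (s := St t) hS hc (Phi_cont a b).continuousOn (St_sub t) ?_
      exact fun x _ => St_dense t x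
    exact hE hx
  · exfalso
    push Not at hex
    have hv : ∀ x ∈ St t, ∃ v, f x = vtx v := by
      intro x hx
      obtain ⟨a, b, y, hlt, hy, he⟩ := hm hx.1
      have h0 := hex x hx a b
      rw [he, Phi_inr, if_pos rfl] at h0
      by_cases hy0 : y = (0, 0)
      · exact ⟨a, by rw [he, hy0, Phi_zero]⟩
      by_cases hy1 : y = (1, 0)
      · exact ⟨b, by rw [he, hy1, Phi_one]⟩
      exact absurd h0 (vw_ne hy0 hy1)
    obtain ⟨x, hx, y, hy, hxy⟩ := St_two t
    obtain ⟨v, hv1⟩ := hv x hx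
    have hco : ContinuousOn (fun x => ((f x) (Sum.inl v)).1) (St t) :=
      ((continuous_fst.comp (coord_cont (Sum.inl v))).comp_continuousOn hc).mono (St_sub t)
    have him := (St_preconnected t).image _ hco
    obtain ⟨w, hw1⟩ := hv y hy
    have hvw : w ≠ v := by
      rintro rfl
      exact hxy (hi hx.1 hy.1 (hv1.trans hw1.symm))
    have h1 : (1 : ℝ) ∈ (fun x => ((f x) (Sum.inl v)).1) '' St t :=
      ⟨x, hx, by simp [hv1, vtx_inl]⟩
    have h0 : (0 : ℝ) ∈ (fun x => ((f x) (Sum.inl v)).1) '' St t :=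
      ⟨y, hy, by simp [hw1, vtx_inl, Ne.symm hvw]⟩
    obtain ⟨z, hz, hz2⟩ := him.ordConnected.out h0 h1 (show (1 / 2 : ℝ) ∈ Icc 0 1 by norm_num)
    obtain ⟨u, hu⟩ := hv z hz
    simp only [hu, vtx_inl] at hz2
    split_ifs at hz2 <;> norm_num at hz2

theorem vtx_mem [Nontrivial A] (τ : A → A → ℕ) (v : A) : vtx v ∈ G τ := by
  obtain ⟨w, hw⟩ := exists_ne v
  rcases hw.lt_or_gt with h | h
  · exact ⟨w, v, (1, 0), h, one_mem _, (Phi_one _ _).symm⟩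
  · exact ⟨v, w, (0, 0), h, zero_mem _, (Phi_zero _ _).symm⟩

theorem G_map [Nontrivial A] (τ σ : A → A → ℕ) (f : L A → L A) (hc : ContinuousOn f (G τ))
    (hi : InjOn f (G τ)) (hm : MapsTo f (G τ) (G σ)) :
    ∃ F : A → A, StrictMono F ∧ ∀ a b, a < b → σ (F a) (F b) = τ a b ∧
      ∀ x ∈ Kt (τ a b), f (Phi a b x) = Phi (F a) (F b) x := by
  have main : ∀ a b, a < b → ∃ a' b', a' < b' ∧ σ a' b' = τ a b ∧
      ∀ x ∈ Kt (τ a b), f (Phi a b x) = Phi a' b' x := by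
    intro a b hab
    have hmap : MapsTo (Phi a b) (Kt (τ a b)) (G τ) := fun x hx => ⟨a, b, x, hab, hx, rfl⟩
    refine edge σ (τ a b) (fun x => f (Phi a b x)) (hc.comp (Phi_cont a b).continuousOn hmap) ?_
      (fun x hx => hm (hmap hx))
    have hP : InjOn (Phi a b) (Kt (τ a b)) := by
      have h01 : vtx a ≠ vtx b := fun h => hab.ne (vtx_inj h)
      intro x hx y hy hxy
      have e1 := congrArg (fun g : L A => g (Sum.inr (a, b))) hxy
      simp only [Phi_inr, if_true, Prod.mk.injEq] at e1
      have e2 := congrArg (fun g : L A => (g (Sum.inl a)).1) hxy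
      simp only [Phi_inl, if_true, if_neg hab.ne, add_zero] at e2
      by_cases hw : vw x = 0
      · have hx' : x = (0, 0) ∨ x = (1, 0) := by
          by_contra h
          push Not at h
          exact vw_ne h.1 h.2 hw
        have hy' : y = (0, 0) ∨ y = (1, 0) := by
          by_contra h
          push Not at h
          exact vw_ne h.1 h.2 (e1.1 ▸ hw)
        rcases hx' with rfl | rfl <;> rcases hy' with rfl | rfl <;>
          simp [va_zero, va_one] at e2 ⊢
      · have := e1.2
        rw [← e1.1] at this
        exact smul_right_injective _ hw this
    exact hi.comp hP hmap
  have hF : ∀ v, ∃ v', f (vtx v) = vtx v' := by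
    intro v
    obtain ⟨w, hw⟩ := exists_ne v
    rcases hw.lt_or_gt with h | h
    · obtain ⟨a', b', -, -, h3⟩ := main w v h
      exact ⟨b', by rw [← Phi_one w v, h3 _ (one_mem _), Phi_one]⟩
    · obtain ⟨a', b', -, -, h3⟩ := main v w h
      exact ⟨a', by rw [← Phi_zero v w, h3 _ (zero_mem _), Phi_zero]⟩
  choose F hF using hF
  have main2 : ∀ a b, a < b → F a < F b ∧ σ (F a) (F b) = τ a b ∧
      ∀ x ∈ Kt (τ a b), f (Phi a b x) = Phi (F a) (F b) x := by
    intro a b hab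
    obtain ⟨a', b', h1, h2, h3⟩ := main a b hab
    have ea : F a = a' := by
      apply vtx_inj
      rw [← hF, ← Phi_zero a b, h3 _ (zero_mem _), Phi_zero]
    have eb : F b = b' := by
      apply vtx_inj
      rw [← hF, ← Phi_one a b, h3 _ (one_mem _), Phi_one]
    rw [ea, eb]
    exact ⟨h1, h2, h3⟩
  exact ⟨F, fun a b h => (main2 a b h).1, fun a b h => (main2 a b h).2⟩

theorem G_preconnected [Nontrivial A] (τ : A → A → ℕ) : IsPreconnected (G τ) := by
  have hedge : ∀ a b, a < b → ∃ s ⊆ G τ, vtx a ∈ s ∧ vtx b ∈ s ∧ IsPreconnected s ∧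
      ∀ x ∈ Kt (τ a b), Phi a b x ∈ s := by
    intro a b hab
    refine ⟨Phi a b '' Kt (τ a b), ?_, ⟨_, zero_mem _, Phi_zero _ _⟩, ⟨_, one_mem _, Phi_one _ _⟩,
      (Kt_preconnected _).image _ (Phi_cont a b).continuousOn, fun x hx => ⟨x, hx, rfl⟩⟩
    rintro _ ⟨x, hx, rfl⟩
    exact ⟨a, b, x, hab, hx, rfl⟩
  obtain ⟨v0⟩ : Nonempty A := inferInstance
  refine isPreconnected_of_forall (vtx v0) ?_
  rintro _ ⟨a, b, x, hab, hx, rfl⟩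
  obtain ⟨s, hs, has, hbs, hsp, hxs⟩ := hedge a b hab
  rcases lt_trichotomy v0 a with h | h | h
  · obtain ⟨s', hs', has', hbs', hsp', -⟩ := hedge v0 a h
    exact ⟨s' ∪ s, union_subset hs' hs, Or.inl has', Or.inr (hxs x hx),
      hsp'.union (vtx a) hbs' has hsp⟩
  · exact ⟨s, hs, h ▸ has, hxs x hx, hsp⟩
  · obtain ⟨s', hs', has', hbs', hsp', -⟩ := hedge a v0 h
    exact ⟨s' ∪ s, union_subset hs' hs, Or.inl hbs', Or.inr (hxs x hx),
      hsp'.union (vtx a) has' has hsp⟩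

/-- bump functions at the vertices -/
noncomputable def bump (v : A) (g : L A) : ℝ := max 0 (2 * (g (Sum.inl v)).1 - 1)

theorem bump_cont (v : A) : Continuous (bump v) := by
  unfold bump
  have := continuous_fst.comp (coord_cont (A := A) (Sum.inl v))
  exact continuous_const.max ((continuous_const.mul this).sub continuous_const)

theorem bump_vtx (v w : A) : bump v (vtx w) = if v = w then 1 else 0 := by
  unfold bump
  rw [vtx_inl]
  split_ifs <;> norm_num

theorem bump_disj (τ : A → A → ℕ) {g : L A} (hg : g ∈ G τ) {u v : A} (hu : bump u g ≠ 0)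
    (hv : bump v g ≠ 0) : u = v := by
  obtain ⟨a, b, x, hab, hx, rfl⟩ := hg
  have h0a : 0 ≤ va x := div_nonneg (norm_nonneg _) (den_pos x).le
  have h0b : 0 ≤ vb x := div_nonneg (norm_nonneg _) (den_pos x).le
  have hsum := va_add_vb x
  have key : ∀ u, bump u (Phi a b x) ≠ 0 → (u = a ∧ va x > 1 / 2) ∨ (u = b ∧ vb x > 1 / 2) := by
    intro u hu
    unfold bump at hu
    have hpos : 0 < 2 * ((Phi a b x) (Sum.inl u)).1 - 1 := by
      by_contra h
      exact hu (max_eq_left (not_lt.1 h))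
    rw [Phi_inl] at hpos
    by_cases h1 : u = a
    · left
      have h2 : u ≠ b := h1 ▸ hab.ne
      rw [if_pos h1, if_neg h2] at hpos
      exact ⟨h1, by linarith⟩
    · rw [if_neg h1] at hpos
      by_cases h2 : u = b
      · rw [if_pos h2] at hpos
        exact Or.inr ⟨h2, by linarith⟩
      · rw [if_neg h2] at hpos
        linarith
  rcases key u hu with ⟨h1, h2⟩ | ⟨h1, h2⟩ <;> rcases key v hv with ⟨h3, h4⟩ | ⟨h3, h4⟩
  · rw [h1, h3]
  · linarith
  · linarith
  · rw [h1, h3]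

end Glue

/-- The rigid family. -/
theorem family (I : Type u) [LinearOrder I] [WellFoundedLT I] [Nonempty I] :
    ∃ τ : I → WithTop I → WithTop I → ℕ, ∀ i j (f : L (WithTop I) → L (WithTop I)),
      ContinuousOn f (G (τ i)) → InjOn f (G (τ i)) → MapsTo f (G (τ i)) (G (τ j)) →
      i = j ∧ ∀ g ∈ G (τ i), f g = g := by
  classical
  obtain ⟨c, hc⟩ := rigid_col (WithTop I)
  refine ⟨fun i a b => 2 * c a b + if a = (i : WithTop I) then 1 else 0, ?_⟩
  intro i j f h1 h2 h3
  obtain ⟨F, hF, hF2⟩ := G_map _ _ f h1 h2 h3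
  have hid : ∀ a, F a = a := by
    refine hc F hF fun x y hxy => ?_
    have := (hF2 x y hxy).1
    beta_reduce at this
    split_ifs at this <;> omega
  refine ⟨?_, ?_⟩
  · have := (hF2 (i : WithTop I) ⊤ (WithTop.coe_lt_top i)).1
    simp only [hid, if_true] at this
    by_contra hne
    rw [if_neg (by simpa using hne)] at this
    omega
  · rintro _ ⟨a, b, x, hab, hx, rfl⟩
    rw [(hF2 a b hab).2 x hx, hid, hid]

end S7

namespace S7
open Set Topology Filter

theorem counting (π : ℕ → ℕ) (hinj : Function.Injective π) (h0 : ∀ n, π n ≠ 0)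
    (hs : ∀ m, m ≠ 0 → ∃ n, π n = m) (k : ℤ) (N0 : ℕ)
    (hN : ∀ n, N0 ≤ n → (π n : ℤ) + 2 * k = n) : False := by
  obtain ⟨N, h1, h2⟩ : ∃ N : ℕ, N0 ≤ N ∧ 2 * k + 1 ≤ N :=
    ⟨max N0 (2 * k + 1).toNat, le_max_left _ _, by
      have := Int.self_le_toNat (2 * k + 1)
      have h3 : (2 * k + 1).toNat ≤ max N0 (2 * k + 1).toNat := le_max_right _ _
      have h4 : (((2 * k + 1).toNat : ℕ) : ℤ) ≤ ((max N0 (2 * k + 1).toNat : ℕ) : ℤ) :=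
        Int.ofNat_le.2 h3
      exact this.trans h4⟩
  obtain ⟨T, hT⟩ : ∃ T : ℕ, (T : ℤ) = N - 2 * k := ⟨(N - 2 * k).toNat, Int.toNat_of_nonneg (by omega)⟩
  have himg : (Finset.range N).image π = Finset.Ico 1 T := by
    ext m
    simp only [Finset.mem_image, Finset.mem_range, Finset.mem_Ico]
    constructor
    · rintro ⟨n, hn, rfl⟩
      refine ⟨Nat.one_le_iff_ne_zero.2 (h0 n), ?_⟩
      by_contra hlt
      have h5 := hN ((π n : ℤ) + 2 * k).toNat (by omega)
      have h6 : ((((π n : ℤ) + 2 * k).toNat : ℕ) : ℤ) = (π n : ℤ) + 2 * k :=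
        Int.toNat_of_nonneg (by omega)
      have h7 : π ((π n : ℤ) + 2 * k).toNat = π n := by omega
      have h8 := hinj h7
      omega
    · rintro ⟨hm1, hm2⟩
      obtain ⟨n, rfl⟩ := hs m (by omega)
      refine ⟨n, ?_, rfl⟩
      by_contra hlt
      have := hN n (by omega)
      omega
  have hc := congrArg Finset.card himg
  rw [Finset.card_image_of_injective _ hinj, Finset.card_range, Nat.card_Ico] at hc
  omega

section Space
variable {I : Type u} [LinearOrder I]

/-- The underlying set of the space. -/
inductive X (τ : I → WithTop I → WithTop I → ℕ) (d : ℤ → WithTop I) : Type u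
  | pt (i : I) (g : L (WithTop I)) (hg : g ∈ G (τ i)) (n : ℕ) : X τ d
  | pr (i : I) (k : ℤ) : X τ d

variable {τ : I → WithTop I → WithTop I → ℕ} {d : ℤ → WithTop I}

def X.idx : X τ d → I
  | .pt i _ _ _ => i
  | .pr i _ => i

noncomputable def X.val : X τ d → ℕ → L (WithTop I) × ℝ
  | .pt _ g _ n => fun m => if m = n then (g, 1) else 0
  | .pr _ _ => fun _ => 0

noncomputable def X.rho : X τ d → ℤ → ℝ
  | .pt _ g _ n => fun k => bump (d (n + 2 * k)) g
  | .pr _ k => fun j => if j = k then 1 else 0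

noncomputable def X.enc (x : X τ d) : I × (ℕ → L (WithTop I) × ℝ) × (ℤ → ℝ) :=
  (x.idx, x.val, x.rho)

theorem enc_inj : Function.Injective (X.enc : X τ d → _) := by
  intro x y h
  have h1 : x.idx = y.idx := congrArg (·.1) h
  have h2 : ∀ m, x.val m = y.val m := fun m => congrFun (congrArg (·.2.1) h) m
  have h3 : ∀ m, x.rho m = y.rho m := fun m => congrFun (congrArg (·.2.2) h) m
  rcases x with ⟨i, g, hg, n⟩ | ⟨i, k⟩ <;> rcases y with ⟨j, g', hg', n'⟩ | ⟨j, k'⟩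
  · have := h2 n
    simp only [X.val, if_true] at this
    by_cases hn : n = n'
    · rw [if_pos hn] at this
      simp only [X.idx] at h1
      simp only [Prod.mk.injEq, and_true] at this
      subst h1 this hn
      rfl
    · rw [if_neg hn] at this
      have := congrArg Prod.snd this
      simp at this
  · have := congrArg Prod.snd (h2 n)
    simp [X.val] at this
  · have := congrArg Prod.snd (h2 n')
    simp [X.val] at this
  · have := h3 k
    simp only [X.rho, if_true] at this
    simp only [X.idx] at h1
    by_cases hn : k = k'
    · subst h1 hn; rfl
    · rw [if_neg hn] at this
      simp at this

variable [TopologicalSpace I] [DiscreteTopology I]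

noncomputable instance : TopologicalSpace (X τ d) := TopologicalSpace.induced X.enc inferInstance

theorem enc_emb : IsEmbedding (X.enc : X τ d → _) := ⟨⟨rfl⟩, enc_inj⟩

theorem enc_cont : Continuous (X.enc : X τ d → _) := enc_emb.continuous

theorem idx_cont : Continuous (X.idx : X τ d → I) := continuous_fst.comp enc_cont
theorem val_cont (m : ℕ) : Continuous (fun x : X τ d => x.val m) :=
  (continuous_apply m).comp (continuous_fst.comp (continuous_snd.comp enc_cont))
theorem rho_cont (k : ℤ) : Continuous (fun x : X τ d => x.rho k) :=
  (continuous_apply k).comp (continuous_snd.comp (continuous_snd.comp enc_cont))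

theorem cont_of {Z : Type*} [TopologicalSpace Z] {f : Z → X τ d}
    (h1 : Continuous fun z => (f z).idx) (h2 : ∀ m, Continuous fun z => (f z).val m)
    (h3 : ∀ m, Continuous fun z => (f z).rho m) : Continuous f := by
  rw [enc_emb.continuous_iff]
  exact h1.prodMk ((continuous_pi h2).prodMk (continuous_pi h3))

theorem X_metrizable : TopologicalSpace.MetrizableSpace (X τ d) := enc_emb.metrizableSpace

theorem val_zero_one (x : X τ d) (m : ℕ) : (x.val m).2 = 0 ∨ (x.val m).2 = 1 := by
  rcases x with ⟨i, g, hg, n⟩ | ⟨i, k⟩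
  · simp only [X.val]
    split_ifs
    · exact Or.inr rfl
    · exact Or.inl rfl
  · exact Or.inl rfl

theorem idx_clopen (S : Set I) : IsClopen {x : X τ d | x.idx ∈ S} :=
  (isClopen_discrete S).preimage idx_cont

theorem lev_clopen (m : ℕ) : IsClopen {x : X τ d | (x.val m).2 = 1} := by
  have hc : Continuous fun x : X τ d => (x.val m).2 := continuous_snd.comp (val_cont m)
  refine ⟨isClosed_eq hc continuous_const, ?_⟩
  have : {x : X τ d | (x.val m).2 = 1} = {x : X τ d | (x.val m).2 ≠ 0} := by
    ext x
    rcases val_zero_one x m with h | h <;> simp [h]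
  rw [this]
  exact isOpen_ne_fun hc continuous_const

theorem ite_cont {Z : Type*} [TopologicalSpace Z] (i : I) {f g : X τ d → Z} (hf : Continuous f)
    (hg : Continuous g) [∀ x : X τ d, Decidable (x.idx = i)] :
    Continuous fun x : X τ d => if x.idx = i then f x else g x := by
  refine Continuous.if ?_ hf hg
  intro a ha
  have h : frontier {x : X τ d | x.idx = i} = ∅ := (idx_clopen (τ := τ) (d := d) {i}).frontier_eq
  rw [h] at ha
  exact ha.elim

/-- shift on one component -/
def sh (i : I) : X τ d → X τ d
  | .pt j g hg n => .pt j g hg (if j = i then n + 2 else n)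
  | .pr j k => .pr j (if j = i then k - 1 else k)

theorem sh_idx (i : I) (x : X τ d) : (sh i x).idx = x.idx := by
  rcases x with ⟨j, g, hg, n⟩ | ⟨j, k⟩ <;> rfl

theorem sh_val (i : I) (x : X τ d) (m : ℕ) :
    (sh i x).val m = if x.idx = i then (if m < 2 then 0 else x.val (m - 2)) else x.val m := by
  rcases x with ⟨j, g, hg, n⟩ | ⟨j, k⟩
  · by_cases hj : j = i
    · rw [if_pos (show (X.pt j g hg n : X τ d).idx = i from hj)]
      simp only [sh, X.val, if_pos hj]
      by_cases hm : m < 2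
      · rw [if_pos hm, if_neg (by omega)]
      · rw [if_neg hm]
        by_cases hh : m = n + 2
        · rw [if_pos hh, if_pos (by omega)]
        · rw [if_neg hh, if_neg (by omega)]
    · rw [if_neg (show ¬ (X.pt j g hg n : X τ d).idx = i from hj)]
      simp only [sh, X.val, if_neg hj]
  · simp [sh, X.val]

theorem sh_rho (i : I) (x : X τ d) (m : ℤ) :
    (sh i x).rho m = if x.idx = i then x.rho (m + 1) else x.rho m := by
  rcases x with ⟨j, g, hg, n⟩ | ⟨j, k⟩
  · by_cases hj : j = i
    · rw [if_pos (show (X.pt j g hg n : X τ d).idx = i from hj)]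
      simp only [sh, X.rho, if_pos hj]
      congr 2
      push_cast
      ring
    · rw [if_neg (show ¬ (X.pt j g hg n : X τ d).idx = i from hj)]
      simp only [sh, X.rho, if_neg hj]
  · by_cases hj : j = i
    · rw [if_pos (show (X.pr j k : X τ d).idx = i from hj)]
      simp only [sh, X.rho, if_pos hj]
      by_cases hh : m = k - 1
      · rw [if_pos hh, if_pos (by omega)]
      · rw [if_neg hh, if_neg (by omega)]
    · rw [if_neg (show ¬ (X.pr j k : X τ d).idx = i from hj)]
      simp only [sh, X.rho, if_neg hj]

theorem sh_cont (i : I) : Continuous (sh i : X τ d → X τ d) := by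
  apply cont_of
  · simpa only [sh_idx] using idx_cont
  · intro m
    simp only [sh_val]
    refine ite_cont i ?_ (val_cont m)
    split_ifs
    · exact continuous_const
    · exact val_cont _
  · intro m
    simp only [sh_rho]
    exact ite_cont i (rho_cont _) (rho_cont _)

theorem sh_emb (i : I) : IsEmbedding (sh i : X τ d → X τ d) := by
  let H : X τ d → I × (ℕ → L (WithTop I) × ℝ) × (ℤ → ℝ) := fun y =>
    (y.idx, fun m => if y.idx = i then y.val (m + 2) else y.val m,
      fun k => if y.idx = i then y.rho (k - 1) else y.rho k)
  have hH : Continuous H := by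
    refine idx_cont.prodMk ((continuous_pi fun m => ?_).prodMk (continuous_pi fun m => ?_))
    · exact ite_cont i (val_cont _) (val_cont _)
    · exact ite_cont i (rho_cont _) (rho_cont _)
  refine IsEmbedding.of_comp (sh_cont i) hH ?_
  have : H ∘ sh i = X.enc := by
    funext x
    simp only [H, Function.comp, X.enc, sh_idx, sh_val, sh_rho]
    by_cases hx : x.idx = i
    · simp [hx]
    · simp [hx]
  rw [this]
  exact enc_emb

theorem sh_range (i : I) : range (sh i : X τ d → X τ d) =
    {x | x.idx ∈ ({i}ᶜ : Set I)} ∪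
      ({x | (x.val 0).2 = 1}ᶜ ∩ {x | (x.val 1).2 = 1}ᶜ) := by
  ext x
  constructor
  · rintro ⟨x, rfl⟩
    by_cases hx : x.idx = i
    · right
      simp [sh_val, hx]
    · left
      simpa [sh_idx] using hx
  · intro h
    by_cases hx : x.idx = i
    · rcases h with h | ⟨h1, h2⟩
      · exact absurd hx h
      rcases x with ⟨j, g, hg, n⟩ | ⟨j, k⟩
      · simp only [X.idx] at hx
        subst hx
        refine ⟨.pt j g hg (n - 2), ?_⟩
        have h3 : 2 ≤ n := by
          by_contra hlt
          have : n = 0 ∨ n = 1 := by omega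
          rcases this with rfl | rfl
          · exact h1 (by simp [X.val])
          · exact h2 (by simp [X.val])
        simp only [sh, if_true]
        congr 1
        omega
      · simp only [X.idx] at hx
        subst hx
        exact ⟨.pr j (k + 1), by simp [sh]⟩
    · refine ⟨x, ?_⟩
      rcases x with ⟨j, g, hg, n⟩ | ⟨j, k⟩
      · simp only [X.idx] at hx
        simp [sh, hx]
      · simp only [X.idx] at hx
        simp [sh, hx]

theorem sh_range_clopen (i : I) : IsClopen (range (sh i : X τ d → X τ d)) := by
  rw [sh_range]
  exact (idx_clopen _).union ((lev_clopen 0).compl.inter (lev_clopen 1).compl)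

theorem sh_image_clopen (i : I) {S : Set (X τ d)} (hS : IsClopen S) : IsClopen (sh i '' S) :=
  ⟨(IsClosedEmbedding.mk (sh_emb i) (sh_range_clopen i).1).isClosedMap _ hS.1,
   (IsOpenEmbedding.mk (sh_emb i) (sh_range_clopen i).2).isOpenMap _ hS.2⟩

theorem lvl_cont (i : I) (n : ℕ) : Continuous fun g : G (τ i) => (X.pt i g.1 g.2 n : X τ d) := by
  apply cont_of
  · exact continuous_const
  · intro m
    simp only [X.val]
    split_ifs
    · exact continuous_subtype_val.prodMk continuous_const
    · exact continuous_const
  · intro m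
    simp only [X.rho]
    exact (bump_cont _).comp continuous_subtype_val

theorem lim (hd : Function.Injective d) [Nonempty I] (i : I) :
    Tendsto (fun n : ℕ => (X.pt i (vtx (d n)) (vtx_mem _ _) n : X τ d)) atTop (𝓝 (.pr i 0)) := by
  rw [enc_emb.tendsto_nhds_iff]
  refine (tendsto_const_nhds).prodMk_nhds (Tendsto.prodMk_nhds ?_ ?_)
  · rw [tendsto_pi_nhds]
    intro m
    refine tendsto_const_nhds.congr' ?_
    filter_upwards [eventually_gt_atTop m] with n hn
    simp [X.val, hn.ne]
  · rw [tendsto_pi_nhds]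
    intro m
    refine tendsto_const_nhds.congr' (Eventually.of_forall fun n => ?_)
    simp only [X.rho, bump_vtx, hd.eq_iff]
    by_cases hm : m = 0
    · rw [if_pos hm, if_pos (by omega)]
    · rw [if_neg hm, if_neg (by omega)]

theorem lev_mem (x : X τ d) (j : I) (m : ℕ) (h1 : x.idx = j) (h2 : (x.val m).2 = 1) :
    ∃ g hg, x = .pt j g hg m := by
  rcases x with ⟨j', g, hg, n⟩ | ⟨j', k⟩
  · simp only [X.idx] at h1
    subst h1
    by_cases hn : m = n
    · subst hn
      exact ⟨g, hg, rfl⟩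
    · simp [X.val, hn] at h2
  · simp [X.val] at h2

theorem stay [Nonempty I] (i : I) (h : G (τ i) → X τ d) (hc : Continuous h) (g1 : G (τ i))
    (j : I) (g' : L (WithTop I)) (hg' : g' ∈ G (τ j)) (m : ℕ) (h1 : h g1 = .pt j g' hg' m)
    (g : G (τ i)) : ∃ g'' hg'', h g = .pt j g'' hg'' m := by
  have hcl : IsClopen ({x : X τ d | x.idx ∈ ({j} : Set I)} ∩ {x | (x.val m).2 = 1}) :=
    (idx_clopen _).inter (lev_clopen m)
  have : PreconnectedSpace (G (τ i)) := Subtype.preconnectedSpace (G_preconnected _)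
  have hp : IsPreconnected (range h) := isPreconnected_range hc
  have hsub := hp.subset_isClopen hcl ⟨h g1, ⟨g1, rfl⟩, by rw [h1]; simp [X.idx, X.val]⟩
  have := hsub ⟨g, rfl⟩
  exact lev_mem _ j m this.1 this.2

theorem key [Nonempty I]
    (hτ : ∀ i j (f : L (WithTop I) → L (WithTop I)),
      ContinuousOn f (G (τ i)) → InjOn f (G (τ i)) → MapsTo f (G (τ i)) (G (τ j)) →
      i = j ∧ ∀ g ∈ G (τ i), f g = g)
    (i : I) (h : G (τ i) → X τ d) (hc : Continuous h)
    (hi : Function.Injective h) : ∃ m, ∀ g, h g = .pt i g.1 g.2 m := by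
  classical
  have : PreconnectedSpace (G (τ i)) := Subtype.preconnectedSpace (G_preconnected _)
  have hpt : ∃ (g1 : G (τ i)) (j : I) (g' : L (WithTop I)) (hg' : g' ∈ G (τ j)) (m : ℕ),
      h g1 = .pt j g' hg' m := by
    by_contra hno
    have hpr : ∀ g, ∃ j k, h g = .pr j k := by
      intro g
      rcases hx : h g with ⟨j, g', hg', n⟩ | ⟨j, k⟩
      · exact absurd ⟨g, j, g', hg', n, hx⟩ hno
      · exact ⟨j, k, rfl⟩
    obtain ⟨a, b, hab⟩ := exists_pair_ne (WithTop I)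
    let ga : G (τ i) := ⟨vtx a, vtx_mem _ _⟩
    let gb : G (τ i) := ⟨vtx b, vtx_mem _ _⟩
    have hne : ga ≠ gb := fun h => hab (vtx_inj (congrArg Subtype.val h))
    obtain ⟨j, k, h1⟩ := hpr ga
    obtain ⟨j', k', h2⟩ := hpr gb
    have hjj : j = j' := by
      have := isPreconnected_univ.constant (f := fun g => (h g).idx)
        (idx_cont.comp hc).continuousOn (mem_univ ga) (mem_univ gb)
      simpa [h1, h2, X.idx] using this
    have hkk : k ≠ k' := by
      rintro rfl
      apply hne
      apply hi
      rw [h1, h2, hjj]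
    have hiv := isPreconnected_univ.intermediate_value (mem_univ gb) (mem_univ ga)
      (f := fun g => (h g).rho k) ((rho_cont k).comp hc).continuousOn
    have : (1 / 2 : ℝ) ∈ Icc ((h gb).rho k) ((h ga).rho k) := by
      rw [h1, h2]
      simp only [X.rho, if_true, if_neg hkk]
      norm_num
    obtain ⟨g, -, hg⟩ := hiv this
    obtain ⟨l, l', hl⟩ := hpr g
    simp only [hl, X.rho] at hg
    split_ifs at hg <;> norm_num at hg
  obtain ⟨g1, j, g', hg', m, h1⟩ := hpt
  have hst := stay i h hc g1 j g' hg' m h1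
  let f : L (WithTop I) → L (WithTop I) := fun g =>
    if hg : g ∈ G (τ i) then ((h ⟨g, hg⟩).val m).1 else 0
  have hf : ∀ g : G (τ i), f g = ((h g).val m).1 := fun g => by simp [f]
  have hf2 : ∀ g : G (τ i), ∃ hg, h g = .pt j (f g) hg m := by
    intro g
    obtain ⟨g2, hg2, h2⟩ := hst g
    have : f g = g2 := by rw [hf, h2]; simp [X.val]
    subst this
    exact ⟨hg2, h2⟩
  have hC : ContinuousOn f (G (τ i)) := by
    rw [continuousOn_iff_continuous_restrict]
    have : (G (τ i)).domRestrict f = fun g => ((h g).val m).1 := funext hf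
    rw [this]
    exact continuous_fst.comp ((val_cont m).comp hc)
  have hI : InjOn f (G (τ i)) := by
    intro a ha b hb hab
    obtain ⟨h3, h4⟩ := hf2 ⟨a, ha⟩
    obtain ⟨h5, h6⟩ := hf2 ⟨b, hb⟩
    have : (⟨a, ha⟩ : G (τ i)) = ⟨b, hb⟩ := by
      apply hi
      rw [h4, h6]
      congr 1
    exact congrArg Subtype.val this
  have hM : MapsTo f (G (τ i)) (G (τ j)) := fun a ha => (hf2 ⟨a, ha⟩).1
  obtain ⟨hij, hid⟩ := hτ i j f hC hI hM
  refine ⟨m, fun g => ?_⟩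
  obtain ⟨hg, h2⟩ := hf2 g
  rw [h2]
  subst hij
  congr 1
  exact hid _ g.2

end Space
end S7

namespace S7
open Set Topology Filter

section Fin
variable {I : Type u} [LinearOrder I] {τ : I → WithTop I → WithTop I → ℕ} {d : ℤ → WithTop I}
variable {Q : Type u}

def Xq (τ : I → WithTop I → WithTop I → ℕ) (d : ℤ → WithTop I) (le : Q → Q → Prop)
    (emb : Q → I) (q : Q) : Set (X τ d) :=
  {x | x.idx ∈ ({emb q} : Set I)} ∪
    ({x | x.idx ∈ emb '' {q0 | le q0 q}} ∩ {x | (x.val 0).2 = 1}ᶜ)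

theorem pt_mem_self (le : Q → Q → Prop) (emb : Q → I) (q : Q) (g) (hg : g ∈ G (τ (emb q))) (n : ℕ) :
    (X.pt (emb q) g hg n) ∈ Xq τ d le emb q := Or.inl rfl

theorem le_of_mem (le : Q → Q → Prop) (hr : ∀ q, le q q) (emb : Q → I)
    (hemb : Function.Injective emb) (q q' : Q) (x : X τ d) (hx : x ∈ Xq τ d le emb q')
    (hi : x.idx = emb q) : le q q' := by
  rcases hx with h | ⟨⟨q0, h1, h2⟩, -⟩
  · have : emb q = emb q' := hi.symm.trans h
    rw [hemb this]
    exact hr _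
  · have : q0 = q := hemb (h2.trans hi)
    rw [← this]
    exact h1

variable [TopologicalSpace I] [DiscreteTopology I]

theorem Xq_clopen (le : Q → Q → Prop) (emb : Q → I) (q : Q) : IsClopen (Xq τ d le emb q) :=
  (idx_clopen _).union ((idx_clopen _).inter (lev_clopen 0).compl)

/-- An injective continuous map between members of the family. -/
theorem map_lvl [Nonempty I] (hτ : ∀ i j (f : L (WithTop I) → L (WithTop I)),
      ContinuousOn f (G (τ i)) → InjOn f (G (τ i)) → MapsTo f (G (τ i)) (G (τ j)) →
      i = j ∧ ∀ g ∈ G (τ i), f g = g) {S T : Set (X τ d)} (f : S → T)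
    (hf : Continuous f) (hi : Function.Injective f) (i : I) (n : ℕ)
    (hS : ∀ g hg, X.pt i g hg n ∈ S) :
    ∃ m, ∀ g hg, ((f ⟨X.pt i g hg n, hS g hg⟩ : T) : X τ d) = X.pt i g hg m := by
  obtain ⟨m, hm⟩ := key hτ i (fun g => ((f ⟨X.pt i g.1 g.2 n, hS g.1 g.2⟩ : T) : X τ d))
    (continuous_subtype_val.comp (hf.comp ((lvl_cont i n).subtype_mk _))) (by
      intro a b hab
      have h1 := congrArg Subtype.val (hi (Subtype.val_injective hab))
      simp only [X.pt.injEq] at h1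
      exact Subtype.ext h1.2.1)
  exact ⟨m, fun g hg => hm ⟨g, hg⟩⟩

theorem le_of_map [Nonempty I] (hτ : ∀ i j (f : L (WithTop I) → L (WithTop I)),
      ContinuousOn f (G (τ i)) → InjOn f (G (τ i)) → MapsTo f (G (τ i)) (G (τ j)) →
      i = j ∧ ∀ g ∈ G (τ i), f g = g) (le : Q → Q → Prop) (hr : ∀ q, le q q) (emb : Q → I)
    (hemb : Function.Injective emb) (q q' : Q) (f : Xq τ d le emb q → Xq τ d le emb q')
    (hf : Continuous f) (hi : Function.Injective f) : le q q' := by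
  obtain ⟨m, hm⟩ := map_lvl hτ f hf hi (emb q) 0 fun g hg => pt_mem_self le emb q g hg 0
  refine le_of_mem le hr emb hemb q q' _ (f ⟨.pt (emb q) (vtx ⊤) (vtx_mem _ _) 0,
    pt_mem_self _ _ _ _ _ _⟩).2 ?_
  rw [hm]
  rfl

theorem not_homeo [Nonempty I] (hτ : ∀ i j (f : L (WithTop I) → L (WithTop I)),
      ContinuousOn f (G (τ i)) → InjOn f (G (τ i)) → MapsTo f (G (τ i)) (G (τ j)) →
      i = j ∧ ∀ g ∈ G (τ i), f g = g) (hd : Function.Injective d)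
    (le : Q → Q → Prop) (hr : ∀ q, le q q) (emb : Q → I)
    (hemb : Function.Injective emb) (q q' : Q) (hqq : q ≠ q')
    (e : Xq τ d le emb q ≃ₜ Xq τ d le emb q') : False := by
  have hle : le q q' := le_of_map hτ le hr emb hemb q q' e e.continuous e.injective
  have hii : emb q ≠ emb q' := fun h => hqq (hemb h)
  set i := emb q with hi
  have hS : ∀ n g hg, (X.pt i g hg n : X τ d) ∈ Xq τ d le emb q := fun n g hg =>
    pt_mem_self le emb q g hg n
  have hT : ∀ n, n ≠ 0 → ∀ g hg, (X.pt i g hg n : X τ d) ∈ Xq τ d le emb q' := by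
    intro n hn g hg
    refine Or.inr ⟨⟨q, hle, rfl⟩, ?_⟩
    simp [X.val, hn.symm]
  have h1 : ∀ n, ∃ m, ∀ g hg, ((e ⟨X.pt i g hg n, hS n g hg⟩ : Xq τ d le emb q') : X τ d) =
      X.pt i g hg m := fun n => map_lvl hτ e e.continuous e.injective i n (hS n)
  choose π hπ using h1
  have h2 : ∀ n (hn : n ≠ 0), ∃ m, ∀ g hg,
      ((e.symm ⟨X.pt i g hg n, hT n hn g hg⟩ : Xq τ d le emb q) : X τ d) = X.pt i g hg m :=
    fun n hn => map_lvl hτ e.symm e.symm.continuous e.symm.injective i n (hT n hn)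
  have hback : ∀ m, m ≠ 0 → ∃ n, ∀ g hg (hm : X.pt i g hg m ∈ Xq τ d le emb q'),
      e ⟨X.pt i g hg n, hS n g hg⟩ = ⟨X.pt i g hg m, hm⟩ := by
    intro m hm
    obtain ⟨n, hn⟩ := h2 m hm
    refine ⟨n, fun g hg hmem => ?_⟩
    have : (⟨X.pt i g hg n, hS n g hg⟩ : Xq τ d le emb q) = e.symm ⟨X.pt i g hg m, hmem⟩ :=
      Subtype.ext (hn g hg).symm
    rw [this, e.apply_symm_apply]
  have hne0 : ∀ y ∈ Xq τ d le emb q', y.idx = i → ¬ (y.val 0).2 = 1 := by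
    intro y hy hyi
    rcases hy with h | ⟨-, h⟩
    · exact absurd (hyi.symm.trans h) hii
    · exact h
  have hπ0 : ∀ n, π n ≠ 0 := by
    intro n h0
    have h3 := hπ n (vtx ⊤) (vtx_mem _ _)
    refine hne0 _ (e ⟨X.pt i (vtx ⊤) (vtx_mem _ _) n, hS n _ _⟩).2 ?_ ?_
    · rw [h3]; rfl
    · rw [h3, h0]; simp [X.val]
  have hπi : Function.Injective π := by
    intro a b hab
    have h3 := hπ a (vtx ⊤) (vtx_mem _ _)
    have h4 := hπ b (vtx ⊤) (vtx_mem _ _)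
    rw [hab, ← h4] at h3
    have h5 := congrArg Subtype.val (e.injective (Subtype.val_injective h3))
    simp only [X.pt.injEq] at h5
    exact h5.2.2
  have hπs : ∀ m, m ≠ 0 → ∃ n, π n = m := by
    intro m hm
    obtain ⟨n, hn⟩ := hback m hm
    refine ⟨n, ?_⟩
    have h3 := hπ n (vtx ⊤) (vtx_mem _ _)
    rw [hn (vtx ⊤) (vtx_mem _ _) (hT m hm _ _)] at h3
    simp only [X.pt.injEq] at h3
    exact h3.2.2.symm
  have hr0 : (X.pr i 0 : X τ d) ∈ Xq τ d le emb q := Or.inl rfl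
  have hlim : Tendsto (fun n : ℕ => (X.pt i (vtx (d n)) (vtx_mem _ _) (π n) : X τ d)) atTop
      (𝓝 (e ⟨.pr i 0, hr0⟩ : X τ d)) := by
    have h3 : Tendsto (fun n : ℕ => (⟨X.pt i (vtx (d n)) (vtx_mem _ _) n, hS n _ _⟩ :
        Xq τ d le emb q)) atTop (𝓝 ⟨.pr i 0, hr0⟩) := by
      rw [tendsto_subtype_rng]
      exact lim hd i
    have h4 := ((continuous_subtype_val.comp e.continuous).tendsto _).comp h3
    refine h4.congr fun n => ?_
    exact hπ n _ _
  have hidx : (e ⟨.pr i 0, hr0⟩ : X τ d).idx = i :=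
    tendsto_nhds_unique ((idx_cont.tendsto _).comp hlim) tendsto_const_nhds
  rcases hy : (e ⟨.pr i 0, hr0⟩ : X τ d) with ⟨j, g, hg, m⟩ | ⟨j, k⟩
  · have hmem := (e ⟨.pr i 0, hr0⟩).2
    rw [hy] at hidx hmem
    have hm : m ≠ 0 := by
      intro h0
      refine hne0 _ hmem hidx ?_
      rw [h0]; simp [X.val]
    have hji : j = i := hidx
    subst hji
    obtain ⟨n, hn⟩ := hback m hm
    have h3 := hn g hg hmem
    have h4 : e ⟨.pr i 0, hr0⟩ = ⟨X.pt i g hg m, hmem⟩ := Subtype.ext hy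
    rw [← h4] at h3
    have h5 := congrArg Subtype.val (e.injective h3)
    simp at h5
  · rw [hy] at hlim
    have h3 := ((rho_cont k).tendsto _).comp hlim
    have h4 : ((X.pr j k : X τ d).rho k) = 1 := by simp [X.rho]
    rw [h4] at h3
    have h5 := h3.eventually_ne (one_ne_zero)
    obtain ⟨N, hN⟩ := eventually_atTop.1 h5
    refine counting π hπi hπ0 hπs k N fun n hn => ?_
    have h6 := hN n hn
    simp only [Function.comp, X.rho, bump_vtx] at h6
    by_contra hne
    apply h6
    rw [if_neg]
    exact fun h => hne (hd h)

theorem map_of_le (le : Q → Q → Prop) (ht : ∀ a b c, le a b → le b c → le a c) (emb : Q → I)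
    (q q' : Q) (hq : le q q') :
    ∃ f : C(Xq τ d le emb q, Xq τ d le emb q'),
      IsClopen (range f) ∧ ∃ e : Xq τ d le emb q ≃ₜ range f,
        ∀ y, (e y : Xq τ d le emb q') = f y := by
  have hmaps : ∀ x : Xq τ d le emb q, sh (emb q) x.1 ∈ Xq τ d le emb q' := by
    rintro ⟨x, hx⟩
    by_cases hxi : x.idx = emb q
    · refine Or.inr ⟨⟨q, hq, by rw [sh_idx]; exact hxi.symm⟩, ?_⟩
      simp [sh_val, hxi]
    · rcases hx with h | ⟨⟨q0, h1, h2⟩, h3⟩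
      · exact absurd h hxi
      · refine Or.inr ⟨⟨q0, ht _ _ _ h1 hq, by rw [sh_idx]; exact h2⟩, ?_⟩
        simpa [sh_val, hxi] using h3
  have hemb : IsEmbedding fun x : Xq τ d le emb q => (⟨sh (emb q) x.1, hmaps x⟩ : Xq τ d le emb q') :=
    ((sh_emb (emb q)).comp IsEmbedding.subtypeVal).codRestrict _ hmaps
  refine ⟨⟨_, hemb.continuous⟩, ?_, hemb.toHomeomorph, fun y => rfl⟩
  have : range (fun x : Xq τ d le emb q => (⟨sh (emb q) x.1, hmaps x⟩ : Xq τ d le emb q')) =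
      Subtype.val ⁻¹' (sh (emb q) '' Xq τ d le emb q) := by
    ext y
    constructor
    · rintro ⟨x, rfl⟩
      exact ⟨x.1, x.2, rfl⟩
    · rintro ⟨x, hx, h⟩
      exact ⟨⟨x, hx⟩, Subtype.ext h⟩
  change IsClopen (range (fun x : Xq τ d le emb q =>
    (⟨sh (emb q) x.1, hmaps x⟩ : Xq τ d le emb q')))
  rw [this]
  exact (sh_image_clopen _ (Xq_clopen _ _ _)).preimage continuous_subtype_val

end Fin

theorem X_card {I : Type u} [LinearOrder I] (τ : I → WithTop I → WithTop I → ℕ)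
    (d : ℤ → WithTop I) (α : Cardinal.{u}) (hα : Cardinal.continuum ≤ α) (hI : #I = α) :
    #(X τ d) = α := by
  classical
  have hinf : ℵ₀ ≤ α := aleph0_le_continuum.trans hα
  apply le_antisymm
  · let T : Type u := (I × ((WithTop I × WithTop I) × (ℝ × ℝ)) × ℕ) ⊕ (I × ℤ)
    let F : T → X τ d := fun t => match t with
      | Sum.inl (i, ((a, b), x), n) =>
        if h : Phi a b x ∈ G (τ i) then X.pt i (Phi a b x) h n else X.pr i 0
      | Sum.inr (i, k) => X.pr i k
    have hF : Function.Surjective F := by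
      rintro (⟨i, g, hg, n⟩ | ⟨i, k⟩)
      · obtain ⟨a, b, x, hab, hx, rfl⟩ := id hg
        exact ⟨Sum.inl (i, ((a, b), x), n), dif_pos hg⟩
      · exact ⟨Sum.inr (i, k), rfl⟩
    refine (mk_le_of_surjective hF).trans ?_
    have hA : #(WithTop I) = α := by
      rw [show #(WithTop I) = #(Option I) from rfl, mk_option, hI]
      exact add_one_eq hinf
    have hc : Cardinal.lift.{u} #ℝ = Cardinal.continuum := by rw [mk_real, lift_continuum]
    simp only [T, mk_sum, mk_prod, lift_id, lift_uzero, lift_mul, hA, hI, hc, mk_nat, mk_int, lift_aleph0, mul_eq_self hinf, continuum_mul_self]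
    simp only [mul_eq_left hinf hα continuum_ne_zero, mul_eq_left hinf hinf aleph0_ne_zero,
      mul_eq_self hinf, add_eq_self hinf, le_refl]
  · rw [← hI]
    exact mk_le_of_injective (f := fun i => (X.pr i 0 : X τ d)) fun a b h => by
      simpa using h

end S7

theorem statement7 (α : Cardinal.{u}) (hα : Cardinal.continuum ≤ α) :
    ∃ (X : Type u) (tX : TopologicalSpace X),
      @TopologicalSpace.MetrizableSpace X tX ∧ #X = α ∧
      @RepresentsByClasses α X tX := by
  classical
  have hinf : ℵ₀ ≤ α := aleph0_le_continuum.trans hα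
  obtain ⟨I, iL, iW, hI⟩ : ∃ (I : Type u) (_ : LinearOrder I) (_ : WellFoundedLT I), #I = α :=
    ⟨α.ord.ToType, inferInstance, inferInstance, mk_ord_toType α⟩
  have hInf : Infinite I := by rw [infinite_iff, hI]; exact hinf
  letI tI : TopologicalSpace I := ⊥
  have hD : DiscreteTopology I := ⟨rfl⟩
  obtain ⟨τ, hτ⟩ := S7.family I
  let d : ℤ → WithTop I := fun k => ((Infinite.natEmbedding I (Encodable.encode k) : I) : WithTop I)
  have hd : Function.Injective d := fun a b h =>
    Encodable.encode_injective ((Infinite.natEmbedding I).injective (WithTop.coe_injective h))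
  refine ⟨S7.X τ d, inferInstance, S7.X_metrizable, S7.X_card τ d α hα hI, ?_⟩
  intro M hM Q le hQ hr ht
  obtain ⟨emb⟩ : Nonempty (Q ↪ I) := by
    rw [← hI] at hQ
    exact hQ
  refine ⟨S7.Xq τ d le emb, S7.Xq_clopen le emb, ?_, ?_⟩
  · intro q q' hqq
    exact ⟨fun e => S7.not_homeo hτ hd le hr emb emb.injective q q' hqq e⟩
  · intro q q'
    constructor
    · intro h
      obtain ⟨f, hf⟩ := S7.map_of_le (τ := τ) (d := d) le ht emb q q' h
      exact ⟨f, hM.2.1 _ _ f hf⟩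
    · rintro ⟨f, hf⟩
      exact S7.le_of_map hτ le hr emb emb.injective q q' f f.continuous (hM.1 _ _ f hf)
end

section
/- For every cardinal number α ≥ 𝔠 and every index set Q with |Q| = α, there exists a family {(A_q, B_q) : q ∈ Q} of pairs of metrizable topological spaces, each of cardinality α, such that for every q ∈ Q: A_q is homeomorphic to a clopen subset of B_q, B_q is homeomorphic to a closed subset of A_q but to no clopen subset of A_q; and moreover, whenever q ≠ q', there exists no injective continuous map from any of the spaces A_q, B_q into any of the spaces A_{q'}, B_{q'}. -/
universe u

open Cardinal

/-- `A` is homeomorphic to a clopen subset of `B`. -/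
def HomeoToClopenSubset (A : Type*) [TopologicalSpace A]
    (B : Type*) [TopologicalSpace B] : Prop :=
  ∃ t : Set B, IsClopen t ∧ Nonempty (A ≃ₜ t)

/-- `A` is homeomorphic to a closed subset of `B`. -/
def HomeoToClosedSubset (A : Type*) [TopologicalSpace A]
    (B : Type*) [TopologicalSpace B] : Prop :=
  ∃ t : Set B, IsClosed t ∧ Nonempty (A ≃ₜ t)

/-- There exists no injective continuous map from `A` into `B`. -/
def NoInjCont (A : Type*) [TopologicalSpace A]
    (B : Type*) [TopologicalSpace B] : Prop :=
  ¬ ∃ f : A → B, Continuous f ∧ Function.Injective f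

/-- The conditions on a single pair `(A, B)`: both metrizable of cardinality `α`,
`A` is homeomorphic to a clopen subset of `B`, and `B` is homeomorphic to a closed
subset of `A` but to no clopen subset of `A`. -/
def Stmt8Pair (α : Cardinal.{u}) (A B : Type u)
    [TopologicalSpace A] [TopologicalSpace B] : Prop :=
  TopologicalSpace.MetrizableSpace A ∧ TopologicalSpace.MetrizableSpace B ∧
  #A = α ∧ #B = α ∧
  HomeoToClopenSubset A B ∧ HomeoToClosedSubset B A ∧ ¬ HomeoToClopenSubset B A


theorem s8_diag {P Ξ : Type} (hP : #Ξ ≤ 𝔠) (S : Ξ → Set P) (h : Ξ → P → P)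
    (T : Set P) (hT : T.Countable) (hS : ∀ ξ, 𝔠 ≤ #(S ξ))
    (hinj : ∀ ξ, Set.InjOn (h ξ) (S ξ)) (hfix : ∀ ξ, ∀ p ∈ S ξ, h ξ p ≠ p) :
    ∃ E : Set P, T ⊆ E ∧ ∀ ξ, ∃ p ∈ S ξ, p ∈ E ∧ h ξ p ∉ E := by
  classical
  obtain ⟨r, wo, hr⟩ := Cardinal.exists_ord_eq Ξ
  have hcard : ∀ ξ, #{η // r η ξ} < 𝔠 := by
    intro ξ
    refine lt_of_lt_of_le ?_ hP
    exact Cardinal.card_typein_lt ξ hr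
  have key : ∀ ξ, ∀ prev : (η : Ξ) → r η ξ → P, ∃ p ∈ S ξ,
      (∀ η (hη : r η ξ), p ≠ h η (prev η hη)) ∧ (∀ η (hη : r η ξ), h ξ p ≠ prev η hη) ∧
      h ξ p ∉ T := by
    intro ξ prev
    by_contra hcon
    push Not at hcon
    let A : Set P := Set.range (fun x : {η // r η ξ} => h x.1 (prev x.1 x.2))
    let B : Set P := Set.range (fun x : {η // r η ξ} => prev x.1 x.2)
    have hA : #A < 𝔠 := lt_of_le_of_lt mk_range_le (hcard ξ)
    have hB : #B < 𝔠 := lt_of_le_of_lt mk_range_le (hcard ξ)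
    have hT' : #T < 𝔠 := lt_of_le_of_lt (mk_le_aleph0_iff.2 hT.to_subtype) aleph0_lt_continuum
    have hsub : S ξ ⊆ A ∪ {p | p ∈ S ξ ∧ h ξ p ∈ B ∪ T} := by
      intro p hp
      by_cases h1 : p ∈ A
      · exact Or.inl h1
      · right
        refine ⟨hp, ?_⟩
        by_cases h2 : h ξ p ∈ B
        · exact Or.inl h2
        · right
          refine hcon p hp ?_ ?_
          · intro η hη he
            exact h1 ⟨⟨η, hη⟩, he.symm⟩
          · intro η hη he
            exact h2 ⟨⟨η, hη⟩, he.symm⟩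
    have hBT : #(B ∪ T : Set P) < 𝔠 :=
      lt_of_le_of_lt (mk_union_le _ _) (add_lt_of_lt aleph0_le_continuum hB hT')
    have hC : #{p | p ∈ S ξ ∧ h ξ p ∈ B ∪ T} < 𝔠 := by
      refine lt_of_le_of_lt ?_ hBT
      refine mk_le_of_injective (f := fun p => ⟨h ξ p.1, p.2.2⟩) ?_
      intro p q hpq
      have := hinj ξ p.2.1 q.2.1 (congrArg Subtype.val hpq)
      exact Subtype.ext this
    have := lt_of_le_of_lt ((mk_le_mk_of_subset hsub).trans (mk_union_le _ _))
      (add_lt_of_lt aleph0_le_continuum hA hC)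
    exact absurd (hS ξ) (not_le.2 this)
  choose G hG using key
  let p : Ξ → P := wo.wf.fix (fun ξ prev => G ξ prev)
  have hp : ∀ ξ, p ξ = G ξ (fun η _ => p η) := fun ξ => wo.wf.fix_eq _ ξ
  refine ⟨T ∪ Set.range p, Set.subset_union_left, fun ξ => ⟨p ξ, ?_, Or.inr ⟨ξ, rfl⟩, ?_⟩⟩
  · rw [hp]; exact (hG ξ _).1
  · rintro (ht | ⟨η, hη⟩)
    · rw [hp] at ht
      exact (hG ξ _).2.2.2 ht
    · by_cases h1 : r η ξ
      · have := (hG ξ (fun η _ => p η)).2.2.1 η h1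
        rw [← hp] at this
        exact this hη.symm
      · by_cases h2 : r ξ η
        · have := (hG η (fun η _ => p η)).2.1 ξ h2
          rw [← hp] at this
          exact this hη
        · have h3 : η = ξ := wo.trichotomous η ξ h1 h2
          subst h3
          have h4 : p η ∈ S η := by rw [hp]; exact (hG η _).1
          exact hfix η _ h4 hη.symm

/-- Extension by limits of a function on the dense sequence. -/
noncomputable def s8Ext (g : ℕ → ℂ) (x : ℂ) : ℂ :=
  Filter.limUnder (Filter.comap (TopologicalSpace.denseSeq ℂ) (nhds x)) g

def S8Valid (t : ℕ × ℕ × ℂ × ℝ × (ℕ → ℂ)) (S : Set (ℕ × ℂ)) : Prop :=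
  S ⊆ {p | p.1 = t.1 ∧ p.2 ∈ Metric.ball t.2.2.1 t.2.2.2.1} ∧ 𝔠 ≤ #S ∧
  Set.InjOn (fun p : ℕ × ℂ => ((t.2.1, s8Ext t.2.2.2.2 p.2) : ℕ × ℂ)) S ∧
  ∀ p ∈ S, ((t.2.1, s8Ext t.2.2.2.2 p.2) : ℕ × ℂ) ≠ p

theorem s8_closed_card {F : Set ℂ} (hF : IsClosed F) (hunc : ¬ F.Countable) :
    𝔠 ≤ #(F \ {0, 1} : Set ℂ) := by
  obtain ⟨f, hf, -, hinj⟩ := hF.exists_nat_bool_injection_of_not_countable hunc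
  have h1 : 𝔠 ≤ #F := by
    have : #(ℕ → Bool) = 𝔠 := by simp
    rw [← this]
    exact mk_le_of_injective (f := fun x => ⟨f x, hf ⟨x, rfl⟩⟩)
      (fun a b hab => hinj (congrArg Subtype.val hab))
  by_contra hlt
  rw [not_le] at hlt
  have h2 : #({0, 1} : Set ℂ) < 𝔠 :=
    lt_of_le_of_lt (mk_le_aleph0_iff.2 ((Set.toFinite ({0, 1} : Set ℂ)).countable).to_subtype)
      aleph0_lt_continuum
  have h3 : F ⊆ (F \ {0, 1}) ∪ {0, 1} := by
    intro x hx; by_cases h : x ∈ ({0, 1} : Set ℂ)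
    · exact Or.inr h
    · exact Or.inl ⟨hx, h⟩
  exact absurd (h1.trans ((mk_le_mk_of_subset h3).trans (mk_union_le _ _)))
    (not_le.2 (add_lt_of_lt aleph0_le_continuum hlt h2))

theorem s8_preconn {Y : Set ℂ} (hY : ∀ F : Set ℂ, IsClosed F → ¬ F.Countable → (Y ∩ F).Nonempty) :
    IsPreconnected Y := by
  intro u v hu hv huv hYu hYv
  by_contra hcon
  have hdis : u ∩ v = ∅ := by
    by_contra hne
    obtain ⟨x, hx⟩ := Set.nonempty_iff_ne_empty.2 hne
    obtain ⟨r, hr, hb⟩ := Metric.nhds_basis_closedBall.mem_iff.1 ((hu.inter hv).mem_nhds hx)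
    have hunc : ¬ (Metric.closedBall x r).Countable := by
      intro hc
      have h1 := hc.mono Metric.ball_subset_closedBall
      have h2 := Set.Countable.dense_compl ℝ h1
      obtain ⟨y, hy, hy'⟩ := h2.inter_open_nonempty _ Metric.isOpen_ball ⟨x, Metric.mem_ball_self hr⟩
      exact hy' hy
    obtain ⟨y, hy1, hy2⟩ := hY _ Metric.isClosed_closedBall hunc
    exact hcon ⟨y, hy1, hb hy2⟩
  have hcount : ((u ∪ v)ᶜ).Countable := by
    by_contra hunc
    obtain ⟨y, hy1, hy2⟩ := hY _ (hu.union hv).isClosed_compl hunc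
    exact hy2 (huv hy1)
  have hc := hcount.isConnected_compl_of_one_lt_rank
    (by rw [Complex.rank_real_complex]; exact one_lt_two)
  rw [compl_compl] at hc
  obtain ⟨a, -, ha⟩ := hYu
  obtain ⟨b, -, hb⟩ := hYv
  obtain ⟨z, -, hz⟩ := hc.isPreconnected u v hu hv subset_rfl ⟨a, Or.inl ha, ha⟩ ⟨b, Or.inr hb, hb⟩
  rw [hdis] at hz
  exact hz

theorem s8_ball_card {Y : Set ℂ} (hY : ∀ F : Set ℂ, IsClosed F → ¬ F.Countable → (Y ∩ F).Nonempty)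
    (x : ℂ) {r : ℝ} (hr : 0 < r) : 𝔠 ≤ #(Y ∩ Metric.ball x r : Set ℂ) := by
  have key : ∀ t : Set.Ioo (0 : ℝ) (r / 2), ∃ y ∈ Y ∩ Metric.ball x r, (y - x).im = t := by
    rintro ⟨t, ht0, ht1⟩
    let γ : ℝ → ℂ := fun s => x + ⟨s, t⟩
    have hγ : Continuous γ := by
      have : γ = fun s : ℝ => x + ((s : ℂ) + t * Complex.I) := by
        funext s; apply Complex.ext <;> simp [γ]
      rw [this]; fun_prop
    have hγi : Function.Injective γ := by
      intro a b hab
      have := congrArg Complex.re hab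
      simpa [γ] using this
    have hcl : IsClosed (γ '' Set.Icc 0 (r / 2)) := (isCompact_Icc.image hγ).isClosed
    have hunc : ¬ (γ '' Set.Icc 0 (r / 2)).Countable := by
      intro hc
      have h1 := Set.countable_of_injective_of_countable_image hγi.injOn hc
      have h2 := Cardinal.mk_Icc_real (half_pos hr)
      have h3 := mk_le_aleph0_iff.2 h1.to_subtype
      rw [h2] at h3
      exact absurd h3 (not_le.2 aleph0_lt_continuum)
    obtain ⟨y, hy, s, hs, rfl⟩ := hY _ hcl hunc
    refine ⟨_, ⟨hy, ?_⟩, ?_⟩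
    · rw [Metric.mem_ball, dist_eq_norm]
      have : γ s - x = ⟨s, t⟩ := by simp [γ]
      rw [this]
      refine lt_of_le_of_lt (Complex.norm_le_abs_re_add_abs_im _) ?_
      simp only
      rw [abs_of_nonneg hs.1, abs_of_pos ht0]
      linarith [hs.2]
    · simp [γ]
  choose y hy hyt using key
  rw [← Cardinal.mk_Ioo_real (half_pos hr)]
  refine mk_le_of_injective (f := fun t => ⟨y t, hy t⟩) ?_
  intro a b hab
  have := congrArg Subtype.val hab
  simp only at this
  apply Subtype.ext
  rw [← hyt a, ← hyt b, this]

theorem s8_exists_E : ∃ E : ℕ → Set ℂ,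
    (∀ c, 0 ∈ E c ∧ 1 ∈ E c ∧ Dense (E c)) ∧
    (∀ c, ∀ F : Set ℂ, IsClosed F → ¬ F.Countable → ((E c \ {0, 1}) ∩ F).Nonempty) ∧
    (∀ c d, ∀ O : Set ℂ, IsOpen O → ∀ h : ℂ → ℂ, ContinuousOn h (O ∩ E c) →
      Set.InjOn h (O ∩ E c) → Set.MapsTo h (O ∩ E c) (E d) → ∀ x ∈ O ∩ E c, c = d ∧ h x = x) := by
  classical
  let Ξ₁ := {t : ℕ × ℕ × ℂ × ℝ × (ℕ → ℂ) // ∃ S, S8Valid t S}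
  let Ξ₂ := {t : ℕ × (ℕ → ℂ) // ¬ (closure (Set.range t.2)).Countable}
  let S : Ξ₁ ⊕ Ξ₂ → Set (ℕ × ℂ) := Sum.elim (fun t => t.2.choose)
    (fun t => {p | p.1 = t.1.1 ∧ p.2 ∈ closure (Set.range t.1.2) \ {0, 1}})
  let h : Ξ₁ ⊕ Ξ₂ → ℕ × ℂ → ℕ × ℂ := Sum.elim (fun t p => (t.1.2.1, s8Ext t.1.2.2.2.2 p.2))
    (fun t p => (p.1 + 1, p.2))
  let D : Set ℂ := Set.range (TopologicalSpace.denseSeq ℂ) ∪ {0, 1}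
  have hD : D.Countable := (Set.countable_range _).union (Set.toFinite ({0, 1} : Set ℂ)).countable
  let T : Set (ℕ × ℂ) := Set.univ ×ˢ D
  have hT : T.Countable := Set.countable_univ.prod hD
  have hcseq : #(ℕ → ℂ) = 𝔠 := by simp
  have h1 : #Ξ₁ ≤ 𝔠 := by
    refine (mk_subtype_le _).trans ?_
    simp [Cardinal.mk_real]
  have h2 : #Ξ₂ ≤ 𝔠 := by
    refine (mk_subtype_le _).trans ?_
    simp
  obtain ⟨E, hTE, hE⟩ := s8_diag (P := ℕ × ℂ) (Ξ := Ξ₁ ⊕ Ξ₂) (by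
      rw [mk_sum, lift_id, lift_id]
      exact (add_le_add h1 h2).trans (by simp)) S h T hT
    (by
      rintro (t | t)
      · exact t.2.choose_spec.2.1
      · refine (s8_closed_card isClosed_closure t.2).trans ?_
        refine mk_le_of_injective (f := fun x => ⟨(t.1.1, x.1), rfl, x.2⟩) ?_
        intro a b hab
        have := congrArg (fun z => z.1.2) hab
        exact Subtype.ext this)
    (by
      rintro (t | t)
      · exact t.2.choose_spec.2.2.1
      · rintro ⟨a, b⟩ - ⟨a', b'⟩ - hab
        simpa [h] using hab)
    (by
      rintro (t | t)
      · exact t.2.choose_spec.2.2.2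
      · rintro ⟨a, b⟩ - hab
        simp [h] at hab)
  have hDE : ∀ c, D ⊆ {x | (c, x) ∈ E} := fun c x hx => hTE ⟨trivial, hx⟩
  have hmeet : ∀ c, ∀ F : Set ℂ, IsClosed F → ¬ F.Countable →
      (({x | (c, x) ∈ E} \ {0, 1}) ∩ F).Nonempty := by
    intro c F hF hunc
    obtain ⟨s, hs⟩ : ∃ s : ℕ → ℂ, closure (Set.range s) = F := by
      obtain ⟨C, hCF, hC, hFC⟩ := TopologicalSpace.IsSeparable.exists_countable_dense_subset
        (TopologicalSpace.IsSeparable.of_separableSpace F)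
      have hne : C.Nonempty := by
        rw [Set.nonempty_iff_ne_empty]
        rintro rfl
        simp at hFC
        rw [hFC] at hunc
        exact hunc Set.countable_empty
      obtain ⟨s, hs⟩ := hC.exists_eq_range hne
      refine ⟨s, ?_⟩
      rw [← hs]
      exact subset_antisymm (closure_minimal hCF hF) hFC
    obtain ⟨⟨a, x⟩, ⟨hp1, hp2⟩, hp3, -⟩ := hE (Sum.inr ⟨(c, s), by simpa [hs] using hunc⟩)
    simp only at hp1 hp2
    rw [hs] at hp2
    subst hp1
    exact ⟨x, ⟨hp3, hp2.2⟩, hp2.1⟩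
  have hmeet' : ∀ c, ∀ F : Set ℂ, IsClosed F → ¬ F.Countable →
      ({x | (c, x) ∈ E} ∩ F).Nonempty := by
    intro c F hF hunc
    obtain ⟨x, hx, hx'⟩ := hmeet c F hF hunc
    exact ⟨x, hx.1, hx'⟩
  refine ⟨fun c => {x | (c, x) ∈ E}, ?_, hmeet, ?_⟩
  · intro c
    refine ⟨hDE c (Or.inr (by simp)), hDE c (Or.inr (by simp)), ?_⟩
    exact (TopologicalSpace.denseRange_denseSeq ℂ).mono (Set.subset_union_left.trans (hDE c))
  · intro c d O hO f hf hfi hfm x hx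
    by_contra hcon
    obtain ⟨r, hr, hrO, hrne⟩ : ∃ r > 0, Metric.ball x r ⊆ O ∧
        ∀ y ∈ Metric.ball x r, (c, y) ∈ E → ((d, f y) : ℕ × ℂ) ≠ (c, y) := by
      by_cases hcd : c = d
      · subst hcd
        have hne : f x ≠ x := fun h => hcon ⟨rfl, h⟩
        have hev : ∀ᶠ y in nhdsWithin x (O ∩ {x | (c, x) ∈ E}), f y ≠ y :=
          by
          have h1 := ((hf x hx).sub continuousWithinAt_id).tendsto.eventually_ne (sub_ne_zero.2 hne)
          filter_upwards [h1] with y hy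
          exact sub_ne_zero.1 hy
        rw [eventually_nhdsWithin_iff] at hev
        obtain ⟨r, hr, hb⟩ := Metric.nhds_basis_ball.mem_iff.1
          (Filter.inter_mem hev (hO.mem_nhds hx.1))
        refine ⟨r, hr, fun y hy => (hb hy).2, fun y hy hyE he => ?_⟩
        exact (hb hy).1 ⟨(hb hy).2, hyE⟩ (congrArg Prod.snd he)
      · obtain ⟨r, hr, hb⟩ := Metric.nhds_basis_ball.mem_iff.1 (hO.mem_nhds hx.1)
        exact ⟨r, hr, hb, fun y hy hyE he => hcd (congrArg Prod.fst he).symm⟩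
    let g : ℕ → ℂ := fun n => f (TopologicalSpace.denseSeq ℂ n)
    have hext : ∀ y ∈ Metric.ball x r, (c, y) ∈ E → s8Ext g y = f y := by
      intro y hy hyE
      have : (Filter.comap (TopologicalSpace.denseSeq ℂ) (nhds y)).NeBot :=
        Filter.comap_neBot_iff_frequently.2
          (mem_closure_iff_frequently.1 (TopologicalSpace.denseRange_denseSeq ℂ y))
      apply Filter.Tendsto.limUnder_eq
      have h1 := hf y ⟨hrO hy, hyE⟩
      refine h1.tendsto.comp ?_
      refine tendsto_nhdsWithin_iff.2 ⟨Filter.tendsto_comap, ?_⟩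
      have := Filter.tendsto_comap.eventually (hO.mem_nhds (hrO hy))
        (f := TopologicalSpace.denseSeq ℂ)
      filter_upwards [this] with n hn
      exact ⟨hn, hDE c (Or.inl ⟨n, rfl⟩)⟩
    have hval : ∃ S, S8Valid (c, d, x, r, g) S := by
      refine ⟨{p | p.1 = c ∧ p.2 ∈ {x | (c, x) ∈ E} ∩ Metric.ball x r}, ?_, ?_, ?_, ?_⟩
      · rintro p ⟨hp1, hp2⟩
        exact ⟨hp1, hp2.2⟩
      · refine (s8_ball_card (hmeet' c) x hr).trans ?_
        refine mk_le_of_injective (f := fun x => ⟨(c, x.1), rfl, x.2⟩) ?_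
        intro a b hab
        have := congrArg (fun z => z.1.2) hab
        exact Subtype.ext this
      · rintro ⟨a, y⟩ ⟨rfl, hy⟩ ⟨a', y'⟩ ⟨h1, hy'⟩ he
        simp only at h1 hy hy' he
        subst h1
        rw [hext y hy.2 hy.1, hext y' hy'.2 hy'.1] at he
        have := hfi ⟨hrO hy.2, hy.1⟩ ⟨hrO hy'.2, hy'.1⟩ (congrArg Prod.snd he)
        rw [this]
      · rintro ⟨a, y⟩ ⟨rfl, hy⟩ he
        simp only at hy he
        rw [hext y hy.2 hy.1] at he
        exact hrne y hy.2 hy.1 he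
    obtain ⟨⟨a, y⟩, hpS, hpE, hpn⟩ := hE (Sum.inl ⟨(c, d, x, r, g), hval⟩)
    have hsub := hval.choose_spec.1 hpS
    obtain ⟨h1, h2⟩ := hsub
    simp only at h1 h2
    subst h1
    apply hpn
    change (d, s8Ext g y) ∈ E
    rw [hext y h2 hpE]
    exact hfm ⟨hrO h2, hpE⟩

theorem s8_comb (V : Type u) [LinearOrder V] [WellFoundedLT V] [OrderTop V] :
    ∃ col : V → V → V → ℕ, (∀ m i j, col m i j ≤ 1 ↔ i = j) ∧
      ∀ m m' : V, ∀ g : V → V, (∀ i j, i ≤ j → g i ≤ g j ∧ col m' (g i) (g j) = col m i j) →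
        m = m' := by
  classical
  let Lad : V → Prop := fun d => ∃ s : ℕ → V, StrictMono s ∧ IsLUB (Set.range s) d
  have hl : ∀ d, ∃ s : ℕ → V, Lad d → (StrictMono s ∧ IsLUB (Set.range s) d) := by
    intro d
    by_cases h : Lad d
    · obtain ⟨s, hs⟩ := h; exact ⟨s, fun _ => hs⟩
    · exact ⟨fun _ => d, fun h' => absurd h' h⟩
  choose l hl using hl
  let col : V → V → V → ℕ := fun m i j => if i = j then (if i = m then 1 else 0) else
    if h : Lad j ∧ ∃ n, l j n = i then h.2.choose + 3 else 2
  have hcol : ∀ m i j, col m i j ≤ 1 ↔ i = j := by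
    intro m i j
    by_cases h : i = j
    · simp only [col, if_pos h]; split_ifs <;> simp [h]
    · simp only [col, if_neg h]; split_ifs <;> simp [h]
  have hlad1 : ∀ m d n, Lad d → col m (l d n) d = n + 3 := by
    intro m d n hd
    have hlt : l d n < d :=
      lt_of_lt_of_le ((hl d hd).1 (Nat.lt_succ_self n)) ((hl d hd).2.1 ⟨n + 1, rfl⟩)
    have hh : Lad d ∧ ∃ k, l d k = l d n := ⟨hd, n, rfl⟩
    simp only [col, if_neg hlt.ne, dif_pos hh]
    rw [(hl d hd).1.injective hh.2.choose_spec]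
  have hlad2 : ∀ m i d n, col m i d = n + 3 → Lad d ∧ l d n = i := by
    intro m i d n h
    simp only [col] at h
    split_ifs at h with h1 h2 h3
    all_goals try omega
    refine ⟨h3.1, ?_⟩
    have : h3.2.choose = n := by omega
    rw [← this]; exact h3.2.choose_spec
  refine ⟨col, hcol, ?_⟩
  intro m m' g hg
  have hmono : StrictMono g := by
    intro i j hij
    refine lt_of_le_of_ne (hg i j hij.le).1 ?_
    intro he
    have h1 := (hcol m' (g i) (g j)).2 he
    rw [(hg i j hij.le).2] at h1
    exact hij.ne ((hcol m i j).1 h1)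
  have hge : ∀ i, i ≤ g i := fun i => hmono.le_apply
  have hm : g m = m' := by
    have h1 := (hg m m le_rfl).2
    simp only [col, if_true] at h1
    by_contra hne
    simp [hne] at h1
  by_contra hne
  have hlt : m < g m := lt_of_le_of_ne (hge m) (by rw [hm]; exact hne)
  let s : ℕ → V := fun n => g^[n] m
  have hs1 : ∀ n, s (n + 1) = g (s n) := fun n => Function.iterate_succ_apply' g n m
  have hs : StrictMono s := by
    refine strictMono_nat_of_lt_succ ?_
    intro n
    induction n with
    | zero => exact hlt
    | succ n ih => rw [hs1 (n + 1)]; nth_rewrite 1 [hs1 n]; exact hmono ih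
  obtain ⟨d, hd⟩ : ∃ d, IsLUB (Set.range s) d := by
    have hne : (upperBounds (Set.range s)).Nonempty := ⟨⊤, fun _ _ => le_top⟩
    refine ⟨wellFounded_lt.min _ hne, WellFounded.min_mem _ _ hne, ?_⟩
    intro x hx
    exact not_lt.1 (WellFounded.not_lt_min _ _ hx)
  have hLd : Lad d := ⟨s, hs, hd⟩
  have hltd : ∀ n, l d n < d := fun n =>
    lt_of_lt_of_le ((hl d hLd).1 (Nat.lt_succ_self n)) ((hl d hLd).2.1 ⟨n + 1, rfl⟩)
  have hstep : ∀ n, Lad (g d) ∧ l (g d) n = g (l d n) := by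
    intro n
    apply hlad2 m'
    rw [(hg _ _ (hltd n).le).2]
    exact hlad1 m d n hLd
  have hgd : g d = d := by
    refine le_antisymm ?_ (hge d)
    refine (hl _ (hstep 0).1).2.2 ?_
    rintro _ ⟨n, rfl⟩
    rw [(hstep n).2]
    obtain ⟨_, ⟨k, rfl⟩, hk, -⟩ := hd.exists_between (hltd n)
    exact (hmono hk).le.trans ((hs1 k).symm.le.trans (hd.1 ⟨k + 1, rfl⟩))
  have hfix : ∀ n, g (l d n) = l d n := by
    intro n
    have := (hstep n).2
    rw [hgd] at this
    exact this.symm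
  have hmd : m < d := lt_of_lt_of_le (hs (Nat.zero_lt_one)) (hd.1 ⟨1, rfl⟩)
  obtain ⟨_, ⟨k, rfl⟩, hk, -⟩ := (hl d hLd).2.exists_between hmd
  have hall : ∀ n, s n < l d k := by
    intro n
    induction n with
    | zero => exact hk
    | succ n ih => rw [hs1, ← hfix k]; exact hmono ih
  have : d ≤ l d k := hd.2 (by rintro _ ⟨n, rfl⟩; exact (hall n).le)
  exact absurd (hltd k) (not_lt.2 this)

open Classical in
/-- Distance between points at heights `s`, `t` on two spines of a hedgehog. -/
noncomputable def s8h {K : Type u} (k l : K) (s t : ℝ) : ℝ := if k = l then |s - t| else s + t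

theorem s8h_self {K : Type u} (k : K) (s : ℝ) : s8h k k s s = 0 := by simp [s8h]

theorem s8h_comm {K : Type u} (k l : K) (s t : ℝ) : s8h k l s t = s8h l k t s := by
  unfold s8h
  by_cases h : k = l
  · rw [if_pos h, if_pos h.symm, abs_sub_comm]
  · rw [if_neg h, if_neg (Ne.symm h), add_comm]

theorem s8h_nonneg {K : Type u} (k l : K) {s t : ℝ} (hs : 0 ≤ s) (ht : 0 ≤ t) :
    0 ≤ s8h k l s t := by
  unfold s8h
  split_ifs <;> positivity

theorem s8h_tri {K : Type u} (k l m : K) {s t r : ℝ} (hs : 0 ≤ s) (ht : 0 ≤ t) (hr : 0 ≤ r) :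
    s8h k m s r ≤ s8h k l s t + s8h l m t r := by
  unfold s8h
  rcases abs_cases (s - r) with h1 | h1 <;> rcases abs_cases (s - t) with h2 | h2 <;>
    rcases abs_cases (t - r) with h3 | h3 <;> split_ifs <;>
    first
    | linarith
    | (exfalso; simp_all)

/-- The pieces `E (col j)`, one for each `j`, before gluing. -/
def S8X {J V : Type u} (E : ℕ → Set ℂ) (col : J → ℕ) (_L₁ _L₂ : J → V) : Type u :=
  {a : J × ℂ // a.2 ∈ E (col a.1)}

section
variable {J V : Type u} {E : ℕ → Set ℂ} {col col' : J → ℕ} {L₁ L₂ : J → V}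

noncomputable instance : PseudoMetricSpace (S8X E col L₁ L₂) where
  dist a b := dist a.1.2 b.1.2 + s8h a.1.1 b.1.1 (‖a.1.2‖ * ‖a.1.2 - 1‖) (‖b.1.2‖ * ‖b.1.2 - 1‖)
    + s8h (L₁ a.1.1) (L₁ b.1.1) ‖a.1.2 - 1‖ ‖b.1.2 - 1‖
    + s8h (L₂ a.1.1) (L₂ b.1.1) ‖a.1.2‖ ‖b.1.2‖
  dist_self a := by simp [s8h_self]
  dist_comm a b := by
    rw [dist_comm a.1.2, s8h_comm a.1.1, s8h_comm (L₁ a.1.1), s8h_comm (L₂ a.1.1)]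
  dist_triangle a b c := by
    have h0 := dist_triangle a.1.2 b.1.2 c.1.2
    have h1 := s8h_tri a.1.1 b.1.1 c.1.1 (s := ‖a.1.2‖ * ‖a.1.2 - 1‖) (t := ‖b.1.2‖ * ‖b.1.2 - 1‖)
      (r := ‖c.1.2‖ * ‖c.1.2 - 1‖) (by positivity) (by positivity) (by positivity)
    have h2 := s8h_tri (L₁ a.1.1) (L₁ b.1.1) (L₁ c.1.1) (norm_nonneg (a.1.2 - 1))
      (norm_nonneg (b.1.2 - 1)) (norm_nonneg (c.1.2 - 1))
    have h3 := s8h_tri (L₂ a.1.1) (L₂ b.1.1) (L₂ c.1.1) (norm_nonneg a.1.2)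
      (norm_nonneg b.1.2) (norm_nonneg c.1.2)
    linarith

theorem s8_dist (a b : S8X E col L₁ L₂) : dist a b =
    dist a.1.2 b.1.2 + s8h a.1.1 b.1.1 (‖a.1.2‖ * ‖a.1.2 - 1‖) (‖b.1.2‖ * ‖b.1.2 - 1‖)
    + s8h (L₁ a.1.1) (L₁ b.1.1) ‖a.1.2 - 1‖ ‖b.1.2 - 1‖
    + s8h (L₂ a.1.1) (L₂ b.1.1) ‖a.1.2‖ ‖b.1.2‖ := rfl

theorem s8_bounds (a b : S8X E col L₁ L₂) : dist a.1.2 b.1.2 ≤ dist a b ∧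
    s8h a.1.1 b.1.1 (‖a.1.2‖ * ‖a.1.2 - 1‖) (‖b.1.2‖ * ‖b.1.2 - 1‖) ≤ dist a b ∧
    s8h (L₁ a.1.1) (L₁ b.1.1) ‖a.1.2 - 1‖ ‖b.1.2 - 1‖ ≤ dist a b ∧
    s8h (L₂ a.1.1) (L₂ b.1.1) ‖a.1.2‖ ‖b.1.2‖ ≤ dist a b := by
  rw [s8_dist]
  have h0 := dist_nonneg (x := a.1.2) (y := b.1.2)
  have h1 := s8h_nonneg a.1.1 b.1.1 (s := ‖a.1.2‖ * ‖a.1.2 - 1‖) (t := ‖b.1.2‖ * ‖b.1.2 - 1‖)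
    (by positivity) (by positivity)
  have h2 := s8h_nonneg (L₁ a.1.1) (L₁ b.1.1) (norm_nonneg (a.1.2 - 1)) (norm_nonneg (b.1.2 - 1))
  have h3 := s8h_nonneg (L₂ a.1.1) (L₂ b.1.1) (norm_nonneg a.1.2) (norm_nonneg b.1.2)
  refine ⟨?_, ?_, ?_, ?_⟩ <;> linarith

theorem s8_key_eq (a b : S8X E col L₁ L₂) 
    (h : dist a b < ‖b.1.2‖ * ‖b.1.2 - 1‖) : a.1.1 = b.1.1 := by
  by_contra hne
  have := (s8_bounds a b).2.1
  rw [s8h, if_neg hne] at this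
  have h2 : 0 ≤ ‖a.1.2‖ * ‖a.1.2 - 1‖ := by positivity
  linarith

theorem s8_snd_cont : Continuous (fun a : S8X E col L₁ L₂ => a.1.2) := by
  have : LipschitzWith 1 (fun a : S8X E col L₁ L₂ => a.1.2) := by
    refine LipschitzWith.of_dist_le_mul fun a b => ?_
    simpa using (s8_bounds a b).1
  exact this.continuous

/-- The inclusion of a piece. -/
def s8in (L₁ L₂ : J → V) (j : J) (x : E (col j)) : S8X E col L₁ L₂ := ⟨(j, x.1), x.2⟩

theorem s8_dist_in (j k : J) (x : E (col j)) (y : E (col k)) :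
    dist (s8in (E := E) (col := col) L₁ L₂ j x) (s8in L₁ L₂ k y) =
    dist x.1 y.1 + s8h j k (‖x.1‖ * ‖x.1 - 1‖) (‖y.1‖ * ‖y.1 - 1‖)
    + s8h (L₁ j) (L₁ k) ‖x.1 - 1‖ ‖y.1 - 1‖ + s8h (L₂ j) (L₂ k) ‖x.1‖ ‖y.1‖ := rfl

theorem s8in_cont (j : J) : Continuous (s8in (E := E) (col := col) L₁ L₂ j) := by
  rw [continuous_iff_continuousAt]
  intro x
  rw [ContinuousAt, tendsto_iff_dist_tendsto_zero]
  have : (fun y => dist (s8in (E := E) (col := col) L₁ L₂ j y) (s8in L₁ L₂ j x)) =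
      fun y => dist y.1 x.1 + |‖y.1‖ * ‖y.1 - 1‖ - ‖x.1‖ * ‖x.1 - 1‖| +
        |‖y.1 - 1‖ - ‖x.1 - 1‖| + |‖y.1‖ - ‖x.1‖| := by
    funext y
    simp [s8_dist_in, s8h]
  rw [this]
  have hc : Continuous (fun y : E (col j) => dist y.1 x.1 +
      |‖y.1‖ * ‖y.1 - 1‖ - ‖x.1‖ * ‖x.1 - 1‖| +
        |‖y.1 - 1‖ - ‖x.1 - 1‖| + |‖y.1‖ - ‖x.1‖|) := by fun_prop
  have := hc.tendsto x
  simpa using this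

theorem s8_fiber (a b : S8X E col L₁ L₂) (ha : a.1.2 = 0 ∨ a.1.2 = 1) (hb : b.1.2 = 0 ∨ b.1.2 = 1)
    (h : dist a b < 1) : dist a b = 0 := by
  obtain ⟨h0, h1, h2, h3⟩ := s8_bounds a b
  have hab : a.1.2 = b.1.2 := by
    rcases ha with ha | ha <;> rcases hb with hb | hb <;> rw [ha, hb]
    · rw [ha, hb] at h0; simp at h0; linarith
    · rw [ha, hb] at h0; simp at h0; linarith
  rcases hb with hb | hb
  · have hL : L₁ a.1.1 = L₁ b.1.1 := by
      by_contra hne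
      rw [s8h, if_neg hne, hab, hb] at h2
      norm_num at h2
      linarith
    rw [s8_dist, hab, hb, hL]
    simp [s8h]
  · have hL : L₂ a.1.1 = L₂ b.1.1 := by
      by_contra hne
      rw [s8h, if_neg hne, hab, hb] at h3
      norm_num at h3
      linarith
    rw [s8_dist, hab, hb, hL]
    simp [s8h]

theorem s8_core
    (hden : ∀ c, Dense (E c))
    (hpre : ∀ c, IsPreconnected (E c \ {0, 1}))
    (hrig : ∀ c d, ∀ O : Set ℂ, IsOpen O → ∀ h : ℂ → ℂ, ContinuousOn h (O ∩ E c) →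
      Set.InjOn h (O ∩ E c) → Set.MapsTo h (O ∩ E c) (E d) → ∀ x ∈ O ∩ E c, c = d ∧ h x = x)
    (R : S8X E col L₁ L₂ → S8X E col' L₁ L₂) (hR : Continuous R)
    (hinj : ∀ a b, dist (R a) (R b) = 0 → dist a b = 0) (j : J) :
    ∃ k, ∃ hk : col' k = col j, ∀ x : E (col j),
      dist (R (s8in L₁ L₂ j x)) (s8in L₁ L₂ k ⟨x.1, by rw [hk]; exact x.2⟩) = 0 := by
  classical
  let G : E (col j) → S8X E col' L₁ L₂ := fun x => R (s8in L₁ L₂ j x)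
  have hG : Continuous G := hR.comp (s8in_cont j)
  have hGi : ∀ x y, dist (G x) (G y) = 0 → x = y := by
    intro x y h
    have h1 := (s8_bounds _ _).1.trans (hinj _ _ h).le
    exact Subtype.ext (dist_le_zero.1 h1)
  let φ : E (col j) → ℂ := fun x => (G x).1.2
  let κ : E (col j) → J := fun x => (G x).1.1
  have hφ : Continuous φ := s8_snd_cont.comp hG
  have stepA : ∀ x, φ x ≠ 0 → φ x ≠ 1 → ∀ᶠ y in nhds x, κ y = κ x := by
    intro x h0 h1
    have hpos : 0 < ‖φ x‖ * ‖φ x - 1‖ :=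
      mul_pos (norm_pos_iff.2 h0) (norm_pos_iff.2 (sub_ne_zero.2 h1))
    filter_upwards [Metric.tendsto_nhds.1 (hG.tendsto x) _ hpos] with y hy
    exact s8_key_eq (G y) (G x) hy
  have stepB : ∀ x, φ x ≠ 0 → φ x ≠ 1 → col j = col' (κ x) ∧ φ x = x.1 := by
    intro x h0 h1
    obtain ⟨N, hN, hNs⟩ := mem_nhds_subtype _ _ _ |>.1 (stepA x h0 h1)
    obtain ⟨O, hON, hO, hxO⟩ := mem_nhds_iff.1 hN
    let h : ℂ → ℂ := fun y => if hy : y ∈ E (col j) then φ ⟨y, hy⟩ else 0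
    have hh : ∀ y : E (col j), h y.1 = φ y := fun y => by simp [h]
    have hcont : ContinuousOn h (E (col j)) := by
      rw [continuousOn_iff_continuous_domRestrict]
      convert hφ using 1
      funext y; exact hh y
    have hκ : ∀ y (hy : y ∈ O ∩ E (col j)), κ ⟨y, hy.2⟩ = κ x := fun y hy => hNs (hON hy.1)
    have := hrig (col j) (col' (κ x)) O hO h (hcont.mono Set.inter_subset_right) ?_ ?_ x.1
      ⟨hxO, x.2⟩
    · rw [hh] at this; exact this
    · intro y hy y' hy' he
      rw [hh ⟨y, hy.2⟩, hh ⟨y', hy'.2⟩] at he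
      have hGG : G ⟨y, hy.2⟩ = G ⟨y', hy'.2⟩ :=
        Subtype.ext (Prod.ext ((hκ y hy).trans (hκ y' hy').symm) he)
      have := hGi ⟨y, hy.2⟩ ⟨y', hy'.2⟩ (by rw [hGG]; exact dist_self _)
      exact congrArg Subtype.val this
    · intro y hy
      rw [hh ⟨y, hy.2⟩, ← hκ y hy]
      exact (G ⟨y, hy.2⟩).2
  have stepC : ∀ x : E (col j), x.1 ≠ 0 → x.1 ≠ 1 → φ x ≠ 0 ∧ φ x ≠ 1 := by
    intro x h0 h1
    by_contra hcon
    have hx01 : φ x = 0 ∨ φ x = 1 := by tauto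
    have hne : φ x ≠ x.1 := by
      rcases hx01 with h | h <;> rw [h]
      · exact h0.symm
      · exact h1.symm
    have e1 : ∀ᶠ y in nhds x, φ y - y.1 ≠ 0 :=
      ((hφ.sub continuous_subtype_val).tendsto x).eventually_ne (sub_ne_zero.2 hne)
    have e2 := Metric.tendsto_nhds.1 (hG.tendsto x) 1 one_pos
    have e3 : ∀ᶠ y in nhds x, y = x := by
      filter_upwards [e1, e2] with y hy1 hy2
      have hy01 : φ y = 0 ∨ φ y = 1 := by
        by_contra hc
        rw [not_or] at hc
        exact hy1 (sub_eq_zero.2 (stepB y hc.1 hc.2).2)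
      exact hGi y x (s8_fiber _ _ hy01 hx01 hy2)
    obtain ⟨r, hr, hb⟩ := Metric.eventually_nhds_iff.1 e3
    obtain ⟨y, hy, hyx⟩ := ((hden (col j)).sdiff_singleton x.1).exists_dist_lt x.1 hr
    have := hb (y := ⟨y, hy.1⟩) (by rw [dist_comm] at hyx; exact hyx)
    exact hy.2 (congrArg Subtype.val this)
  let Y : Set (E (col j)) := {x | x.1 ∉ ({0, 1} : Set ℂ)}
  have hYimg : Subtype.val '' Y = E (col j) \ {0, 1} := by
    ext x; constructor
    · rintro ⟨y, hy, rfl⟩; exact ⟨y.2, hy⟩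
    · rintro ⟨h1, h2⟩; exact ⟨⟨x, h1⟩, h2, rfl⟩
  have hYpre : IsPreconnected Y := by
    rw [← Topology.IsInducing.subtypeVal.isPreconnected_image, hYimg]
    exact hpre _
  have hYdc : Dense (E (col j) \ {0, 1}) := (hden _).sdiff_finite (Set.toFinite _)
  have hYd : Dense Y := by
    intro x
    rw [closure_subtype, hYimg]
    exact hYdc x.1
  have hYφ : ∀ x ∈ Y, φ x ≠ 0 ∧ φ x ≠ 1 := by
    intro x hx
    have hx' : x.1 ≠ 0 ∧ x.1 ≠ 1 := by simpa [Y] using hx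
    exact stepC x hx'.1 hx'.2
  obtain ⟨x₁, hx₁, -⟩ := hYdc.exists_dist_lt 0 one_pos
  let x₀ : E (col j) := ⟨x₁, hx₁.1⟩
  have hx₀ : x₀ ∈ Y := hx₁.2
  have hopen : ∀ Q : J → Prop, IsOpen {x | (φ x ≠ 0 ∧ φ x ≠ 1) ∧ Q (κ x)} := by
    intro Q
    rw [isOpen_iff_mem_nhds]
    rintro x ⟨⟨h0, h1⟩, hQ⟩
    filter_upwards [stepA x h0 h1, hφ.continuousAt.eventually_ne h0,
      hφ.continuousAt.eventually_ne h1] with y hy hy0 hy1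
    refine ⟨⟨hy0, hy1⟩, ?_⟩
    rw [hy]; exact hQ
  have hsub := hYpre.subset_left_of_subset_union (hopen (fun k => k = κ x₀))
    (hopen (fun k => k ≠ κ x₀)) (by
      rw [Set.disjoint_left]
      rintro x ⟨-, h1⟩ ⟨-, h2⟩
      exact h2 h1) (by
      intro x hx
      by_cases h : κ x = κ x₀
      · exact Or.inl ⟨hYφ x hx, h⟩
      · exact Or.inr ⟨hYφ x hx, h⟩) ⟨x₀, hx₀, hYφ _ hx₀, rfl⟩
  have hk : col' (κ x₀) = col j := (stepB x₀ (hYφ _ hx₀).1 (hYφ _ hx₀).2).1.symm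
  refine ⟨κ x₀, hk, ?_⟩
  let G' : E (col j) → S8X E col' L₁ L₂ :=
    fun x => s8in L₁ L₂ (κ x₀) ⟨x.1, by rw [hk]; exact x.2⟩
  have hG' : Continuous G' := (s8in_cont (κ x₀)).comp (by fun_prop)
  have hcl : IsClosed {x | dist (G x) (G' x) = 0} :=
    isClosed_eq (hG.dist hG') continuous_const
  have hY0 : Y ⊆ {x | dist (G x) (G' x) = 0} := by
    intro x hx
    have h1 := hsub hx
    have h2 := stepB x h1.1.1 h1.1.2
    have : G x = G' x := Subtype.ext (Prod.ext h1.2 h2.2)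
    simp [this]
  intro x
  exact closure_minimal hY0 hcl (hYd x)

theorem s8_core_map
    (h01 : ∀ c, 0 ∈ E c ∧ 1 ∈ E c) (hden : ∀ c, Dense (E c))
    (hpre : ∀ c, IsPreconnected (E c \ {0, 1}))
    (hrig : ∀ c d, ∀ O : Set ℂ, IsOpen O → ∀ h : ℂ → ℂ, ContinuousOn h (O ∩ E c) →
      Set.InjOn h (O ∩ E c) → Set.MapsTo h (O ∩ E c) (E d) → ∀ x ∈ O ∩ E c, c = d ∧ h x = x)
    (F : SeparationQuotient (S8X E col L₁ L₂) → SeparationQuotient (S8X E col' L₁ L₂))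
    (hF : Continuous F) (hFi : Function.Injective F) :
    ∃ f : J → J, (∀ j, col' (f j) = col j) ∧ (∀ j j', L₁ j = L₁ j' → L₁ (f j) = L₁ (f j')) ∧
      (∀ j j', L₂ j = L₂ j' → L₂ (f j) = L₂ (f j')) := by
  have hex : ∀ a : S8X E col L₁ L₂, ∃ b : S8X E col' L₁ L₂,
      SeparationQuotient.mk b = F (SeparationQuotient.mk a) :=
    fun a => SeparationQuotient.surjective_mk _
  choose R hR using hex
  have hRc : Continuous R := by
    rw [SeparationQuotient.isInducing_mk.continuous_iff]
    have : (SeparationQuotient.mk ∘ R) = F ∘ SeparationQuotient.mk := funext hR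
    rw [this]
    exact hF.comp SeparationQuotient.continuous_mk
  have hiff : ∀ a b, dist (R a) (R b) = 0 ↔ dist a b = 0 := by
    intro a b
    rw [← Metric.inseparable_iff, ← Metric.inseparable_iff, ← SeparationQuotient.mk_eq_mk,
      ← SeparationQuotient.mk_eq_mk, hR, hR]
    exact hFi.eq_iff
  choose f hf hfd using s8_core hden hpre hrig R hRc (fun a b => (hiff a b).1)
  have comb : ∀ j j' (x : ℂ) (hx : ∀ c, x ∈ E c),
      dist (s8in (E := E) (col := col) L₁ L₂ j ⟨x, hx _⟩) (s8in L₁ L₂ j' ⟨x, hx _⟩) = 0 →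
      dist (s8in (E := E) (col := col') L₁ L₂ (f j) ⟨x, hx _⟩) (s8in L₁ L₂ (f j') ⟨x, hx _⟩) = 0 := by
    intro j j' x hx h
    have h1 := hfd j ⟨x, hx _⟩
    have h2 := hfd j' ⟨x, hx _⟩
    have h3 := (hiff _ _).2 h
    rw [dist_comm] at h1
    have h4 := dist_triangle4 (s8in (E := E) (col := col') L₁ L₂ (f j) ⟨x, hx _⟩)
      (R (s8in (E := E) (col := col) L₁ L₂ j ⟨x, hx _⟩))
      (R (s8in (E := E) (col := col) L₁ L₂ j' ⟨x, hx _⟩))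
      (s8in (E := E) (col := col') L₁ L₂ (f j') ⟨x, hx _⟩)
    rw [h1, h2, h3] at h4
    exact le_antisymm (by simpa using h4) dist_nonneg
  refine ⟨f, hf, ?_, ?_⟩
  · intro j j' h
    have h1 := comb j j' 0 (fun c => (h01 c).1) (by simp [s8_dist_in, s8h, h])
    have h2 : s8h (L₁ (f j)) (L₁ (f j')) ‖(0 : ℂ) - 1‖ ‖(0 : ℂ) - 1‖ ≤ 0 :=
      (s8_bounds _ _).2.2.1.trans h1.le
    by_contra hne
    rw [s8h, if_neg hne] at h2
    norm_num at h2
  · intro j j' h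
    have h1 := comb j j' 1 (fun c => (h01 c).2) (by simp [s8_dist_in, s8h, h])
    have h2 : s8h (L₂ (f j)) (L₂ (f j')) ‖(1 : ℂ)‖ ‖(1 : ℂ)‖ ≤ 0 :=
      (s8_bounds _ _).2.2.2.trans h1.le
    by_contra hne
    rw [s8h, if_neg hne] at h2
    norm_num at h2

end

theorem s8_pair (α : Cardinal.{u}) (hα : 𝔠 ≤ α) (W : Type u) [TopologicalSpace W]
    [TopologicalSpace.MetrizableSpace W] [ConnectedSpace W] [Nontrivial W] (hW : #W = α) :
    Stmt8Pair α (ℕ × W) ((ℕ × W) ⊕ PUnit.{u + 1}) := by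
  have hω : ℵ₀ ≤ α := aleph0_le_continuum.trans hα
  have hA : #(ℕ × W) = α := by
    rw [mk_prod, hW]
    simp [hω]
  have hB : TopologicalSpace.MetrizableSpace ((ℕ × W) ⊕ PUnit.{u + 1}) := by
    letI : MetricSpace (ℕ × W) := TopologicalSpace.metrizableSpaceMetric _
    letI : MetricSpace ((ℕ × W) ⊕ PUnit.{u + 1}) := Metric.metricSpaceSum
    infer_instance
  refine ⟨inferInstance, hB, hA, ?_, ?_, ?_, ?_⟩
  · rw [mk_sum, hA]
    simp [add_one_eq hω]
  · refine ⟨Set.range Sum.inl, ⟨isClosed_range_inl, isOpen_range_inl⟩, ⟨?_⟩⟩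
    exact Topology.IsEmbedding.inl.toHomeomorph
  · obtain ⟨w⟩ : Nonempty W := inferInstance
    let e : (ℕ × W) ⊕ PUnit.{u + 1} → ℕ × W :=
      Sum.elim (fun p => (p.1 + 1, p.2)) (fun _ => (0, w))
    have he : Topology.IsClosedEmbedding e := by
      refine Topology.IsClosedEmbedding.of_continuous_injective_isClosedMap ?_ ?_ ?_
      · refine Continuous.sumElim ?_ continuous_const
        exact (((continuous_of_discreteTopology (f := fun n : ℕ => n + 1)).comp
          continuous_fst)).prodMk continuous_snd
      · rintro (⟨a, b⟩ | a) (⟨a', b'⟩ | a') h <;> simp_all [e]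
      · refine IsClosedMap.sumElim ?_ ?_
        · have h1 : Topology.IsClosedEmbedding (fun n : ℕ => n + 1) :=
            Topology.IsClosedEmbedding.of_continuous_injective_isClosedMap
              continuous_of_discreteTopology (fun a b h => by simpa using h)
              (fun s _ => isClosed_discrete _)
          have h2 : Topology.IsClosedEmbedding (Prod.map (fun n : ℕ => n + 1) (id : W → W)) := 
            h1.prodMap Topology.IsClosedEmbedding.id
          exact h2.isClosedMap
        · intro s _
          exact (Set.Subsingleton.isClosed (by
            rintro _ ⟨x, -, rfl⟩ _ ⟨y, -, rfl⟩; rfl))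
    exact ⟨Set.range e, he.isClosed_range, ⟨he.isEmbedding.toHomeomorph⟩⟩
  · rintro ⟨t, ht, ⟨f⟩⟩
    have h1 : IsOpen ({Sum.inr PUnit.unit} : Set ((ℕ × W) ⊕ PUnit.{u + 1})) := by
      have : ({Sum.inr PUnit.unit} : Set ((ℕ × W) ⊕ PUnit.{u + 1})) = Set.range Sum.inr := by
        ext x
        constructor
        · rintro rfl
          exact ⟨_, rfl⟩
        · rintro ⟨y, rfl⟩
          rfl
      rw [this]; exact isOpen_range_inr
    have h2 := f.isOpenMap _ h1
    have h3 := ht.2.isOpenMap_subtype_val _ h2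
    rw [Set.image_singleton, Set.image_singleton] at h3
    generalize ((f (Sum.inr PUnit.unit) : t) : ℕ × W) = p at h3
    have h4 : IsOpen ({p.2} : Set W) := by
      have := isOpenMap_snd _ h3
      rwa [Set.image_singleton] at this
    exact not_isOpen_singleton p.2 h4

theorem s8_noinj (W W' : Type u) [TopologicalSpace W] [TopologicalSpace W']
    [ConnectedSpace W] [Nontrivial W] [Nonempty W'] (h : NoInjCont W W') :
    NoInjCont (ℕ × W) ((ℕ × W') ⊕ PUnit.{u + 1}) := by
  rintro ⟨f, hf, hfi⟩
  apply h
  let g : W → (ℕ × W') ⊕ PUnit.{u + 1} := fun w => f (0, w)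
  have hg : Continuous g := hf.comp (by fun_prop)
  have hgi : Function.Injective g := fun a b hab => by simpa using hfi hab
  let tag : (ℕ × W') ⊕ PUnit.{u + 1} → ℕ := Sum.elim (fun p => p.1 + 1) (fun _ => 0)
  have htag : Continuous tag := by
    refine Continuous.sumElim ?_ continuous_const
    exact (continuous_of_discreteTopology (f := fun n : ℕ => n + 1)).comp continuous_fst
  have hc : ∀ a b, tag (g a) = tag (g b) := fun a b =>
    PreconnectedSpace.constant inferInstance (htag.comp hg)
  obtain ⟨w'⟩ : Nonempty W' := inferInstance
  let pr : (ℕ × W') ⊕ PUnit.{u + 1} → W' := Sum.elim Prod.snd (fun _ => w')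
  have hpr : Continuous pr := Continuous.sumElim continuous_snd continuous_const
  refine ⟨pr ∘ g, hpr.comp hg, ?_⟩
  intro a b hab
  have htab := hc a b
  by_cases h0 : tag (g a) = 0
  · exfalso
    obtain ⟨x, y, hxy⟩ := exists_pair_ne W
    have hinr : ∀ z, g z = Sum.inr PUnit.unit := by
      intro z
      have hz : tag (g z) = 0 := (hc z a).trans h0
      rcases hgz : g z with p | p
      · rw [hgz] at hz; simp [tag] at hz
      · rfl
    exact hxy (hgi ((hinr x).trans (hinr y).symm))
  · apply hgi
    simp only [Function.comp] at hab
    rcases hga : g a with p | p <;> rcases hgb : g b with p' | p' <;>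
      rw [hga, hgb] at hab htab <;> simp_all [tag, pr]
    exact Prod.ext htab hab

theorem s8_main (α : Cardinal.{u}) (hα : 𝔠 ≤ α) (Q : Type u) (hQ : #Q = α) :
    ∃ (W : Q → Type u) (tW : ∀ q, TopologicalSpace (W q)),
      (∀ q, TopologicalSpace.MetrizableSpace (W q) ∧ ConnectedSpace (W q) ∧ Nontrivial (W q) ∧
        #(W q) = α) ∧ ∀ q q', q ≠ q' → NoInjCont (W q) (W q') := by
  classical
  obtain ⟨lo, wf, -⟩ := Cardinal.exists_ord_eq_type_lt Q
  have hω : ℵ₀ ≤ α := aleph0_le_continuum.trans hα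
  let V := WithTop Q
  have hV : #V = α := by
    change #(Option Q) = α
    rw [mk_option, hQ, add_one_eq hω]
  obtain ⟨E, hE1, hE2, hE3⟩ := s8_exists_E
  obtain ⟨col, hcol, hcolr⟩ := s8_comb V
  let J := {p : V × V // p.1 ≤ p.2}
  let L₁ : J → V := fun p => p.1.1
  let L₂ : J → V := fun p => p.1.2
  let c : Q → J → ℕ := fun q p => col (q : V) p.1.1 p.1.2
  have hpre' : ∀ k, IsPreconnected (E k \ {0, 1}) := fun k => s8_preconn (hE2 k)
  have hpre : ∀ k, IsPreconnected (E k) := fun k => s8_preconn (fun F h1 h2 =>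
    (hE2 k F h1 h2).mono (Set.inter_subset_inter_left _ Set.diff_subset))
  let W : Q → Type u := fun q => SeparationQuotient (S8X E (c q) L₁ L₂)
  have hzero : ∀ k, (0 : ℂ) ∈ E k := fun k => (hE1 k).1
  have hone : ∀ k, (1 : ℂ) ∈ E k := fun k => (hE1 k).2.1
  refine ⟨W, fun q => inferInstanceAs (TopologicalSpace (SeparationQuotient (S8X E (c q) L₁ L₂))),
    ?_, ?_⟩
  · intro q
    let P : J → Set (W q) := fun j =>
      Set.range (fun x => SeparationQuotient.mk (s8in (E := E) (col := c q) L₁ L₂ j x))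
    have hP : ∀ j, IsPreconnected (P j) := by
      intro j
      have : PreconnectedSpace (E (c q j)) := Subtype.preconnectedSpace (hpre _)
      exact isPreconnected_range (SeparationQuotient.continuous_mk.comp (s8in_cont j))
    have hmk : ∀ j k (x : ℂ) (hx : ∀ k, x ∈ E k),
        dist (s8in (E := E) (col := c q) L₁ L₂ j ⟨x, hx _⟩) (s8in L₁ L₂ k ⟨x, hx _⟩) = 0 →
        SeparationQuotient.mk (s8in (E := E) (col := c q) L₁ L₂ j ⟨x, hx _⟩) =
          SeparationQuotient.mk (s8in L₁ L₂ k ⟨x, hx _⟩) := by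
      intro j k x hx h
      rw [SeparationQuotient.mk_eq_mk, Metric.inseparable_iff]
      exact h
    let jt : J := ⟨(⊤, ⊤), le_rfl⟩
    let b : W q := SeparationQuotient.mk (s8in L₁ L₂ jt ⟨0, hzero _⟩)
    let b' : W q := SeparationQuotient.mk (s8in L₁ L₂ jt ⟨1, hone _⟩)
    have hbb : b ≠ b' := by
      intro h
      have h1 := Metric.inseparable_iff.1 (SeparationQuotient.mk_eq_mk.1 h)
      rw [s8_dist_in] at h1
      simp [s8h] at h1
      norm_num at h1
    refine ⟨inferInstanceAs (TopologicalSpace.MetrizableSpace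
      (SeparationQuotient (S8X E (c q) L₁ L₂))), ?_, ⟨b, b', hbb⟩, ?_⟩
    · have : Nonempty (W q) := ⟨b⟩
      refine @ConnectedSpace.mk _ _ ⟨?_⟩ this
      refine isPreconnected_of_forall b ?_
      intro y _
      obtain ⟨⟨⟨j, x⟩, hx⟩, rfl⟩ := SeparationQuotient.surjective_mk y
      let k : J := ⟨(j.1.1, ⊤), le_top⟩
      refine ⟨P j ∪ P k ∪ P jt, Set.subset_univ _, Or.inr ⟨_, rfl⟩, Or.inl (Or.inl ⟨⟨x, hx⟩, rfl⟩), ?_⟩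
      refine IsPreconnected.union (SeparationQuotient.mk (s8in L₁ L₂ k ⟨1, hone _⟩))
        (Or.inr ⟨_, rfl⟩) ⟨⟨1, hone _⟩, ?_⟩
        (IsPreconnected.union (SeparationQuotient.mk (s8in L₁ L₂ j ⟨0, hzero _⟩))
          ⟨_, rfl⟩ ⟨⟨0, hzero _⟩, ?_⟩ (hP j) (hP k)) (hP jt)
      · refine hmk jt k 1 hone ?_
        rw [s8_dist_in]
        simp [s8h, L₂, k, jt]
      · refine hmk k j 0 hzero ?_
        rw [s8_dist_in]
        simp [s8h, L₁, k]
    · apply le_antisymm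
      · have h1 : #(W q) ≤ #(S8X E (c q) L₁ L₂) :=
          mk_le_of_surjective SeparationQuotient.surjective_mk
        have h2 : #(S8X E (c q) L₁ L₂) ≤ #(J × ℂ) := mk_subtype_le _
        have h3 : #J ≤ α := by
          refine (mk_subtype_le _).trans ?_
          rw [mk_prod, lift_id, hV, mul_eq_self hω]
        refine h1.trans (h2.trans ?_)
        rw [mk_prod, Cardinal.mk_complex, lift_continuum]
        refine (mul_le_mul' (by simpa using h3) hα).trans ?_
        rw [mul_eq_self hω]
      · rw [← hV]
        refine mk_le_of_injective (f := fun v : V => (SeparationQuotient.mk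
          (s8in (E := E) (col := c q) L₁ L₂ ⟨(v, v), le_rfl⟩ ⟨0, hzero _⟩) : W q)) ?_
        intro v v' h
        have h1 := Metric.inseparable_iff.1 (SeparationQuotient.mk_eq_mk.1 h)
        rw [s8_dist_in] at h1
        by_contra hne
        simp [s8h, L₁, hne] at h1
  · rintro q q' hqq ⟨F, hF, hFi⟩
    obtain ⟨f, hf0, hf1, hf2⟩ := s8_core_map (E := E) (L₁ := L₁) (L₂ := L₂) (col := c q)
      (col' := c q') (fun k => ⟨hzero k, hone k⟩) (fun k => (hE1 k).2.2) hpre' hE3 F hF hFi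
    let dg : V → J := fun v => ⟨(v, v), le_rfl⟩
    let g : V → V := fun v => L₁ (f (dg v))
    have hg2 : ∀ v, L₂ (f (dg v)) = g v := by
      intro v
      have h1 : col (q : V) v v ≤ 1 := (hcol _ _ _).2 rfl
      have h2 := hf0 (dg v)
      change col (q' : V) (L₁ (f (dg v))) (L₂ (f (dg v))) = col (q : V) v v at h2
      rw [← h2] at h1
      exact ((hcol _ _ _).1 h1).symm
    apply hqq
    have := hcolr (q : V) (q' : V) g (by
      intro i j hij
      let p : J := ⟨(i, j), hij⟩
      have h1 : L₁ (f p) = g i := hf1 p (dg i) rfl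
      have h2 : L₂ (f p) = g j := (hf2 p (dg j) rfl).trans (hg2 j)
      have h3 := (f p).2
      have h4 := hf0 p
      change L₁ (f p) ≤ L₂ (f p) at h3
      change col (q' : V) (L₁ (f p)) (L₂ (f p)) = col (q : V) i j at h4
      rw [h1, h2] at h3 h4
      exact ⟨h3, h4⟩)
    exact WithTop.coe_injective this

theorem statement8 (α : Cardinal.{u}) (hα : Cardinal.continuum ≤ α)
    (Q : Type u) (hQ : #Q = α) :
    ∃ (A B : Q → Type u) (tA : ∀ q, TopologicalSpace (A q))
      (tB : ∀ q, TopologicalSpace (B q)),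
      (∀ q, @Stmt8Pair α (A q) (B q) (tA q) (tB q)) ∧
      (∀ q q', q ≠ q' →
        @NoInjCont (A q) (tA q) (A q') (tA q') ∧
        @NoInjCont (A q) (tA q) (B q') (tB q') ∧
        @NoInjCont (B q) (tB q) (A q') (tA q') ∧
        @NoInjCont (B q) (tB q) (B q') (tB q')) := by
  obtain ⟨W, tW, hW, hN⟩ := s8_main α hα Q hQ
  refine ⟨fun q => ℕ × W q, fun q => (ℕ × W q) ⊕ PUnit.{u + 1}, fun q => inferInstance,
    fun q => inferInstance, ?_, ?_⟩
  · intro q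
    obtain ⟨h1, h2, h3, h4⟩ := hW q
    exact s8_pair α hα (W q) h4
  · intro q q' hqq
    obtain ⟨-, h2, h3, -⟩ := hW q
    obtain ⟨-, -, h3', -⟩ := hW q'
    have key := s8_noinj (W q) (W q') (hN q q' hqq)
    refine ⟨?_, key, ?_, ?_⟩
    · rintro ⟨f, hf, hfi⟩
      exact key ⟨Sum.inl ∘ f, continuous_inl.comp hf, Sum.inl_injective.comp hfi⟩
    · rintro ⟨f, hf, hfi⟩
      exact key ⟨Sum.inl ∘ f ∘ Sum.inl, continuous_inl.comp (hf.comp continuous_inl),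
        Sum.inl_injective.comp (hfi.comp Sum.inl_injective)⟩
    · rintro ⟨f, hf, hfi⟩
      exact key ⟨f ∘ Sum.inl, hf.comp continuous_inl, hfi.comp Sum.inl_injective⟩
end

section
/- For every cardinal number α ≥ 𝔠 and every index set Q with |Q| = α, there exists a family {(D_q, E_q) : q ∈ Q} of pairs of metrizable topological spaces, each of cardinality α, such that for every q ∈ Q: D_q is homeomorphic to a closed subset of E_q, E_q is homeomorphic to a closed subset of D_q, but D_q is homeomorphic to no clopen subset of E_q and E_q is homeomorphic to no clopen subset of D_q; and moreover, whenever q ≠ q', there exists no injective continuous map from any of the spaces D_q, E_q into any of the spaces D_{q'}, E_{q'}. -/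
universe u

open Cardinal

/-- The conditions on a single pair `(D, E)`: both metrizable of cardinality `α`,
each is homeomorphic to a closed subset of the other, but neither is homeomorphic
to a clopen subset of the other. -/
def Stmt9Pair (α : Cardinal.{u}) (D E : Type u)
    [TopologicalSpace D] [TopologicalSpace E] : Prop :=
  TopologicalSpace.MetrizableSpace D ∧ TopologicalSpace.MetrizableSpace E ∧
  #D = α ∧ #E = α ∧
  HomeoToClosedSubset D E ∧ HomeoToClosedSubset E D ∧
  ¬ HomeoToClopenSubset D E ∧ ¬ HomeoToClopenSubset E D

section Comb

variable {V : Type u} [LinearOrder V]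

/-- `l` is the supremum of a strictly increasing sequence. -/
def OmegaLim (l : V) (c : ℕ → V) : Prop := StrictMono c ∧ IsLUB (Set.range c) l

/-- the tuple `(a, c 0, c 1, ...)`. -/
def consSeq (a : V) (c : ℕ → V) : ℕ → V := fun n => Nat.casesOn n a c

@[simp] theorem consSeq_zero (a : V) (c : ℕ → V) : consSeq a c 0 = a := rfl
@[simp] theorem consSeq_succ (a : V) (c : ℕ → V) (n : ℕ) : consSeq a c (n+1) = c n := rfl

open Classical in
/-- A chosen increasing sequence converging to `l`, if any. -/
noncomputable def ladder (l : V) : ℕ → V :=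
  if h : ∃ c, OmegaLim l c then h.choose else fun _ => l

theorem ladder_spec {l : V} (h : ∃ c, OmegaLim l c) : OmegaLim l (ladder l) := by
  unfold ladder; rw [dif_pos h]; exact h.choose_spec

/-- The infinitary relation. -/
def rel (q : V) : Set (ℕ → V) :=
  {s | (∃ a b, a < b ∧ s = consSeq a (fun _ => b)) ∨
       (∃ l, (∃ c, OmegaLim l c) ∧ s = consSeq l (ladder l)) ∨ s = fun _ => q}

theorem rel_rigid [WellFoundedLT V] [OrderTop V] {q q' : V} (F : V → V)
    (hF : Function.Injective F) (h : ∀ s ∈ rel q, (F ∘ s) ∈ rel q') : q = q' := by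
  have hq : F q = q' := by
    rcases h (fun _ => q) (Or.inr (Or.inr rfl)) with ⟨a, b, hab, e⟩ | ⟨l, hl, e⟩ | e
    · have h0 := congrFun e 0
      have h1 := congrFun e 1
      simp at h0 h1
      exact absurd (h0.symm.trans h1) hab.ne
    · have h1 := congrFun e 1
      have h2 := congrFun e 2
      simp at h1 h2
      have := (ladder_spec hl).1.injective (h1.symm.trans h2)
      omega
    · exact congrFun e 0
  have hmono : StrictMono F := by
    intro a b hab
    rcases h (consSeq a (fun _ => b)) (Or.inl ⟨a, b, hab, rfl⟩) with ⟨a', b', hab', e⟩ | ⟨l, hl, e⟩ | e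
    · have h0 := congrFun e 0
      have h1 := congrFun e 1
      simp at h0 h1
      rw [h0, h1]; exact hab'
    · have h1 := congrFun e 1
      have h2 := congrFun e 2
      simp at h1 h2
      have := (ladder_spec hl).1.injective (h1.symm.trans h2)
      omega
    · have h0 := congrFun e 0
      have h1 := congrFun e 1
      simp at h0 h1
      exact absurd (hF (h0.trans h1.symm)) hab.ne
  have hlad : ∀ l : V, (∃ c, OmegaLim l c) →
      (∃ c, OmegaLim (F l) c) ∧ ∀ n, F (ladder l n) = ladder (F l) n := by
    intro l hl
    have hne : ladder l 0 ≠ ladder l 1 := fun e => by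
      have := (ladder_spec hl).1.injective e; omega
    rcases h (consSeq l (ladder l)) (Or.inr (Or.inl ⟨l, hl, rfl⟩)) with
      ⟨a', b', hab', e⟩ | ⟨l', hl', e⟩ | e
    · have h0 := congrFun e 1
      have h1 := congrFun e 2
      simp at h0 h1
      exact absurd (hF (h0.trans h1.symm)) hne
    · have h0 := congrFun e 0
      simp at h0
      subst h0
      exact ⟨hl', fun n => by simpa using congrFun e (n+1)⟩
    · have h0 := congrFun e 1
      have h1 := congrFun e 2
      simp at h0 h1
      exact absurd (hF (h0.trans h1.symm)) hne
  have hid : ∀ b, F b = b := by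
    intro b
    by_contra hb
    have hlt : b < F b := lt_of_le_of_ne (hmono.le_apply) (Ne.symm hb)
    let s : ℕ → V := fun n => F^[n] b
    have hs : ∀ n, s (n+1) = F (s n) := fun n => Function.iterate_succ_apply' F n b
    have hsm : StrictMono s := by
      apply strictMono_nat_of_lt_succ
      intro n
      induction n with
      | zero => simpa [s] using hlt
      | succ n ih => rw [hs (n+1)]; conv_lhs => rw [hs n]
                     exact hmono ih
    obtain ⟨l, hl⟩ : ∃ l, IsLUB (Set.range s) l := by
      have hne : (upperBounds (Set.range s)).Nonempty := ⟨⊤, fun _ _ => le_top⟩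
      exact ⟨WellFounded.min wellFounded_lt _ hne, WellFounded.min_mem _ _ hne,
        fun x hx => WellFounded.min_le _ hx⟩
    have hex : ∃ c, OmegaLim l c := ⟨s, hsm, hl⟩
    obtain ⟨hex', hc⟩ := hlad l hex
    have L := ladder_spec hex
    have L' := ladder_spec hex'
    have hFl : F l = l := by
      apply le_antisymm _ hmono.le_apply
      apply L'.2.2
      rintro _ ⟨n, rfl⟩
      rw [← hc n]
      have h1 : ladder l n < l := lt_of_lt_of_le (L.1 (Nat.lt_succ_self n)) (L.2.1 ⟨_, rfl⟩)
      obtain ⟨_, ⟨m, rfl⟩, hm⟩ := (lt_isLUB_iff hl).1 h1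
      have h2 := (hmono hm).le
      rw [← hs] at h2
      exact h2.trans (hl.1 ⟨_, rfl⟩)
    rw [hFl] at hc
    have hbl : b < l := lt_of_lt_of_le hlt (hl.1 ⟨1, rfl⟩)
    obtain ⟨_, ⟨m, rfl⟩, hm⟩ := (lt_isLUB_iff L.2).1 hbl
    have hk : ∀ k, s k < ladder l m := by
      intro k
      induction k with
      | zero => exact hm
      | succ k ih => rw [hs, ← hc m]; exact hmono ih
    have h3 : l ≤ ladder l m := hl.2 (by rintro _ ⟨k, rfl⟩; exact (hk k).le)
    have h1 : ladder l m < l := lt_of_lt_of_le (L.1 (Nat.lt_succ_self m)) (L.2.1 ⟨_, rfl⟩)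
    exact absurd h1 (not_lt.2 h3)
  rw [← hq, hid]

theorem rel_card [Infinite V] (q : V) : #(rel q) ≤ #V := by
  have : rel q ⊆ (Set.range fun p : V × V => consSeq p.1 (fun _ => p.2)) ∪
      ((Set.range fun l : V => consSeq l (ladder l)) ∪ {fun _ => q}) := by
    rintro s (⟨a, b, -, rfl⟩ | ⟨l, -, rfl⟩ | rfl)
    · exact Or.inl ⟨(a, b), rfl⟩
    · exact Or.inr (Or.inl ⟨l, rfl⟩)
    · exact Or.inr (Or.inr rfl)
  have hV : ℵ₀ ≤ #V := aleph0_le_mk V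
  refine (mk_le_mk_of_subset this).trans ((mk_union_le _ _).trans ?_)
  refine add_le_of_le hV ?_ ((mk_union_le _ _).trans (add_le_of_le hV mk_range_le ?_))
  · refine mk_range_le.trans ?_
    rw [mk_prod, lift_id, mul_eq_self hV]
  · rw [mk_singleton]; exact one_le_aleph0.trans hV

theorem rel_cover [OrderTop V] [Nontrivial V] (q v : V) : ∃ s ∈ rel q, ∃ n, s n = v := by
  by_cases h : v = ⊤
  · obtain ⟨w, hw⟩ := exists_ne v
    exact ⟨consSeq w (fun _ => v), Or.inl ⟨w, v, by rw [h] at hw ⊢; exact lt_top_iff_ne_top.2 hw, rfl⟩, 1, rfl⟩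
  · exact ⟨consSeq v (fun _ => ⊤), Or.inl ⟨v, ⊤, lt_top_iff_ne_top.2 h, rfl⟩, 0, rfl⟩

end Comb

theorem exists_transversal {T : Type} (hT : #T ≤ 𝔠) (A : T → Set (ℂ × ℂ))
    (hA : ∀ t, 𝔠 ≤ #(A t)) (h1 : ∀ t, Set.InjOn Prod.fst (A t)) (h2 : ∀ t, Set.InjOn Prod.snd (A t))
    (hne : ∀ t, ∀ p ∈ A t, p.1 ≠ p.2) :
    ∃ s : T → ℂ × ℂ, (∀ t, s t ∈ A t) ∧ (Function.Injective fun t => (s t).1) ∧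
      ∀ t t', (s t).1 ≠ (s t').2 := by
  obtain ⟨r, wo, hr⟩ := exists_ord_eq T
  have hseg : ∀ t, #{t' // r t' t} < 𝔠 := fun t => by
    have := Cardinal.card_typein_lt (r := r) t hr
    rw [Ordinal.card_typein] at this
    exact lt_of_lt_of_le this hT
  have key : ∀ t, ∀ g : (∀ t', r t' t → ℂ × ℂ), ∃ p ∈ A t, ∀ t' (h : r t' t),
      p.1 ≠ (g t' h).1 ∧ p.1 ≠ (g t' h).2 ∧ p.2 ≠ (g t' h).1 := by
    intro t g
    by_contra hcon
    push Not at hcon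
    let U : Set ℂ := (Set.range fun x : {t' // r t' t} => (g x.1 x.2).1) ∪
      Set.range fun x : {t' // r t' t} => (g x.1 x.2).2
    have hU : #U < 𝔠 := (mk_union_le _ _).trans_lt
      (add_lt_of_lt aleph0_le_continuum (mk_range_le.trans_lt (hseg t)) (mk_range_le.trans_lt (hseg t)))
    have hsub : A t ⊆ (A t ∩ Prod.fst ⁻¹' U) ∪ (A t ∩ Prod.snd ⁻¹' U) := by
      intro p hp
      obtain ⟨t', h, hh⟩ := hcon p hp
      by_cases c1 : p.1 = (g t' h).1
      · exact Or.inl ⟨hp, Or.inl ⟨⟨t', h⟩, c1.symm⟩⟩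
      by_cases c2 : p.1 = (g t' h).2
      · exact Or.inl ⟨hp, Or.inr ⟨⟨t', h⟩, c2.symm⟩⟩
      · exact Or.inr ⟨hp, Or.inl ⟨⟨t', h⟩, (hh c1 c2).symm⟩⟩
    have e1 : #(A t ∩ Prod.fst ⁻¹' U : Set (ℂ × ℂ)) ≤ #U := by
      refine mk_le_of_injective (f := fun x => ⟨x.1.1, x.2.2⟩) ?_
      intro x y hxy
      exact Subtype.ext (h1 t x.2.1 y.2.1 (congrArg Subtype.val hxy))
    have e2 : #(A t ∩ Prod.snd ⁻¹' U : Set (ℂ × ℂ)) ≤ #U := by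
      refine mk_le_of_injective (f := fun x => ⟨x.1.2, x.2.2⟩) ?_
      intro x y hxy
      exact Subtype.ext (h2 t x.2.1 y.2.1 (congrArg Subtype.val hxy))
    have := (hA t).trans ((mk_le_mk_of_subset hsub).trans (mk_union_le _ _))
    exact absurd this (not_le.2 (add_lt_of_lt aleph0_le_continuum (e1.trans_lt hU) (e2.trans_lt hU)))
  choose pick hpick hpick' using key
  have wf : WellFounded r := wo.wf
  let s : T → ℂ × ℂ := wf.fix pick
  have hs : ∀ t, s t = pick t (fun t' _ => s t') := fun t => wf.fix_eq pick t
  have hb : ∀ t t', r t' t → (s t).1 ≠ (s t').1 ∧ (s t).1 ≠ (s t').2 ∧ (s t).2 ≠ (s t').1 := by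
    intro t t' h
    have := hpick' t (fun t' _ => s t') t' h
    rw [← hs] at this
    exact this
  have hmem : ∀ t, s t ∈ A t := fun t => by rw [hs]; exact hpick _ _
  refine ⟨s, hmem, ?_, ?_⟩
  · intro t t' e
    rcases trichotomous_of r t t' with h | h | h
    · exact absurd e.symm (hb _ _ h).1
    · exact h
    · exact absurd e (hb _ _ h).1
  · intro t t'
    rcases trichotomous_of r t t' with h | h | h
    · exact (hb _ _ h).2.2.symm
    · subst h; exact hne _ _ (hmem t)
    · exact (hb _ _ h).2.1

theorem mk_closed_uncountable {F : Set ℂ} (hF : IsClosed F) (hc : ¬ F.Countable) : 𝔠 ≤ #F := by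
  obtain ⟨f, hf, -, hinj⟩ := hF.exists_nat_bool_injection_of_not_countable hc
  have : #(ℕ → Bool) ≤ #F := mk_le_of_injective (f := fun x => ⟨f x, hf ⟨x, rfl⟩⟩)
    fun x y h => hinj (congrArg Subtype.val h)
  simpa using this

theorem mk_diff_countable {X : Type} {S N : Set X} (hS : 𝔠 ≤ #S) (hN : N.Countable) :
    𝔠 ≤ #(S \ N : Set X) := by
  by_contra h
  push Not at h
  have : #S ≤ #(S \ N : Set X) + #N :=
    (mk_le_mk_of_subset (by intro x hx; by_cases hxn : x ∈ N; exacts [Or.inr hxn, Or.inl ⟨hx, hxn⟩])).trans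
      (mk_union_le _ _)
  exact absurd (hS.trans this) (not_le.2 (add_lt_of_lt aleph0_le_continuum h
    (lt_of_le_of_lt (mk_le_aleph0_iff.2 hN.to_subtype) aleph0_lt_continuum)))

/-- admissible sets of pairs for the first kind of tasks -/
def task1 (s : ℕ → ℂ) : Set (ℂ × ℂ) := {p | p.1 ∈ closure (Set.range s) ∧ p.2 = p.1 + 1}

def task2 (s : (ℕ → ℂ × ℂ) × ℂ × ℝ) : Set (ℂ × ℂ) :=
  {p | p.1 ∈ Metric.ball s.2.1 s.2.2 ∧ p.1 ≠ p.2 ∧ p ∈ closure (Set.range s.1) ∧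
    ∀ y, (p.1, y) ∈ closure (Set.range s.1) → y = p.2}

theorem exists_bernstein : ∃ B : Set ℂ, (∀ z ∈ B, ∀ n : ℤ, z ≠ n) ∧
    (∀ F : Set ℂ, IsClosed F → ¬ F.Countable → 𝔠 ≤ #(B ∩ F : Set ℂ)) ∧
    (∀ O : Set ℂ, IsOpen O → ∀ f : ℂ → ℂ, ContinuousOn f (B ∩ O) → Set.InjOn f (B ∩ O) →
      Set.MapsTo f (B ∩ O) B → ∀ z ∈ B ∩ O, f z = z) := by
  let Z : Set ℂ := Set.range (fun n : ℤ => (n : ℂ))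
  have hZ : Z.Countable := Set.countable_range _
  let big : Set (Set (ℂ × ℂ)) := {A | 𝔠 ≤ #A ∧ Set.InjOn Prod.fst A ∧ Set.InjOn Prod.snd A ∧
    ∀ p ∈ A, p.1 ≠ p.2 ∧ p.1 ∉ Z}
  let raw : (ℕ → ℂ) ⊕ ((ℕ → ℂ × ℂ) × ℂ × ℝ) → Set (ℂ × ℂ) := Sum.elim task1 task2
  let T0 := {t // ∃ A ∈ big, A ⊆ raw t}
  let T := T0 × ℝ
  have hT : #T ≤ 𝔠 := by
    have h0 : #((ℕ → ℂ) ⊕ ((ℕ → ℂ × ℂ) × ℂ × ℝ)) ≤ 𝔠 := by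
      simp [mk_complex, mk_real]
    have h1 : #T0 ≤ 𝔠 := (mk_subtype_le _).trans h0
    have : #T = #T0 * #ℝ := by simp [T]
    rw [this, mk_real]
    exact (mul_le_mul' h1 le_rfl).trans (by simp)
  choose A hA hAr using fun t : T0 => t.2
  obtain ⟨s, hs, hsi, hsd⟩ := exists_transversal hT (fun t => A t.1) (fun t => (hA t.1).1)
    (fun t => (hA t.1).2.1) (fun t => (hA t.1).2.2.1) (fun t p hp => ((hA t.1).2.2.2 p hp).1)
  let B : Set ℂ := Set.range fun t => (s t).1
  have hB1 : ∀ F : Set ℂ, IsClosed F → ¬ F.Countable → 𝔠 ≤ #(B ∩ F : Set ℂ) := by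
    intro F hF hc
    have hne : F.Nonempty := by
      by_contra h; rw [Set.not_nonempty_iff_eq_empty] at h; simp [h] at hc
    obtain ⟨u, hu⟩ : ∃ u : ℕ → ℂ, closure (Set.range u) = F := by
      have : Nonempty F := hne.to_subtype
      refine ⟨fun n => (TopologicalSpace.denseSeq F n : ℂ), ?_⟩
      have := (TopologicalSpace.denseRange_denseSeq F)
      apply Set.Subset.antisymm
      · apply closure_minimal _ hF
        rintro _ ⟨n, rfl⟩; exact Subtype.coe_prop _
      · have h3 := Subtype.dense_iff.1 this
        rw [← Set.range_comp] at h3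
        exact h3
    have hbig : ∃ A ∈ big, A ⊆ raw (Sum.inl u) := by
      refine ⟨(fun x => (x, x + 1)) '' (F \ Z), ⟨?_, ?_, ?_, ?_⟩, ?_⟩
      · rw [mk_image_eq (fun x y h => by simpa using h)]
        exact mk_diff_countable (mk_closed_uncountable hF hc) hZ
      · rintro _ ⟨x, -, rfl⟩ _ ⟨y, -, rfl⟩ h
        simp at h; simp [h]
      · rintro _ ⟨x, -, rfl⟩ _ ⟨y, -, rfl⟩ h
        simp at h; simp [h]
      · rintro _ ⟨x, hx, rfl⟩
        exact ⟨by simp, hx.2⟩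
      · rintro _ ⟨x, hx, rfl⟩
        exact ⟨by rw [hu]; exact hx.1, rfl⟩
    have : #ℝ ≤ #(B ∩ F : Set ℂ) := by
      refine mk_le_of_injective (f := fun c : ℝ => ⟨(s (⟨_, hbig⟩, c)).1, ⟨_, rfl⟩, ?_⟩) ?_
      · have := (hAr _ (hs (⟨_, hbig⟩, c))).1
        rwa [hu] at this
      · intro c d h
        have := hsi (congrArg Subtype.val h)
        exact (Prod.ext_iff.1 this).2
    rwa [mk_real] at this
  have hBZ : ∀ z ∈ B, z ∉ Z := by
    rintro _ ⟨t, rfl⟩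
    exact ((hA t.1).2.2.2 _ (hs t)).2
  refine ⟨B, fun z hz n h => hBZ z hz ⟨n, h.symm⟩, hB1, ?_⟩
  intro O hO f hf hinj hmaps z hz
  by_contra hfz
  -- a ball
  obtain ⟨r, hr, hball⟩ : ∃ r > 0, ∀ w ∈ B ∩ Metric.ball z r, w ∈ O ∧ w ≠ f w := by
    have h1 : ∀ᶠ w in nhdsWithin z (B ∩ O), w ≠ f w :=
      by
      have h0 : ContinuousWithinAt (fun w => w - f w) (B ∩ O) z := continuousWithinAt_id.sub (hf z hz)
      have h1 := Filter.Tendsto.eventually_ne h0 (sub_ne_zero.2 (Ne.symm hfz))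
      exact h1.mono fun w hw e => hw (sub_eq_zero.2 e)
    rw [nhdsWithin_inter_of_mem' (mem_nhdsWithin_of_mem_nhds (hO.mem_nhds hz.2))] at h1
    have h2 : ∀ᶠ w in nhdsWithin z B, w ∈ O ∧ w ≠ f w :=
      (Filter.Eventually.filter_mono nhdsWithin_le_nhds (hO.mem_nhds hz.2)).and h1
    obtain ⟨r, hr, h⟩ := Metric.mem_nhdsWithin_iff.1 h2
    exact ⟨r, hr, fun w hw => h ⟨hw.2, hw.1⟩⟩
  let W := B ∩ Metric.ball z r
  have hWO : W ⊆ B ∩ O := fun w hw => ⟨hw.1, (hball w hw).1⟩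
  have hWc : 𝔠 ≤ #W := by
    have h1 : ¬ (Metric.closedBall z (r/2)).Countable := by
      intro hcount
      have h3 := (hcount.mono Metric.ball_subset_closedBall).dense_compl ℝ
      obtain ⟨w, hw, hw'⟩ := h3.inter_open_nonempty _ Metric.isOpen_ball ⟨z, Metric.mem_ball_self (half_pos hr)⟩
      exact hw' hw
    refine (hB1 _ Metric.isClosed_closedBall h1).trans (mk_le_mk_of_subset ?_)
    exact Set.inter_subset_inter_right _ (Metric.closedBall_subset_ball (half_lt_self hr))
  let G : Set (ℂ × ℂ) := (fun w => (w, f w)) '' W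
  obtain ⟨u, huG, hu⟩ : ∃ u : ℕ → ℂ × ℂ, Set.range u ⊆ G ∧ G ⊆ closure (Set.range u) := by
    have : Nonempty G := ⟨⟨_, z, ⟨hz.1, Metric.mem_ball_self hr⟩, rfl⟩⟩
    refine ⟨fun n => (TopologicalSpace.denseSeq G n : ℂ × ℂ), ?_, ?_⟩
    · rintro _ ⟨n, rfl⟩; exact Subtype.coe_prop _
    · have h3 := Subtype.dense_iff.1 (TopologicalSpace.denseRange_denseSeq G)
      rw [← Set.range_comp] at h3
      exact h3
  have huniq : ∀ w ∈ W, ∀ y, (w, y) ∈ closure (Set.range u) → y = f w := by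
    intro w hw y hy
    obtain ⟨v, hv, hlim⟩ := mem_closure_iff_seq_limit.1 hy
    have hv' : ∀ n, (v n).1 ∈ W ∧ (v n).2 = f (v n).1 := by
      intro n
      obtain ⟨x, hx, hx'⟩ := huG (hv n)
      rw [← hx']; exact ⟨hx, rfl⟩
    have l1 : Filter.Tendsto (fun n => (v n).1) Filter.atTop (nhds w) :=
      (continuous_fst.tendsto _).comp hlim
    have l2 : Filter.Tendsto (fun n => (v n).2) Filter.atTop (nhds y) :=
      (continuous_snd.tendsto _).comp hlim
    have l3 : Filter.Tendsto (fun n => f (v n).1) Filter.atTop (nhds (f w)) :=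
      Filter.Tendsto.comp (hf w (hWO hw)) (tendsto_nhdsWithin_iff.2
        ⟨l1, Filter.Eventually.of_forall fun n => hWO (hv' n).1⟩)
    refine tendsto_nhds_unique l2 (l3.congr fun n => (hv' n).2.symm)
  have hbig : ∃ A ∈ big, A ⊆ raw (Sum.inr (u, z, r)) := by
    refine ⟨G, ⟨?_, ?_, ?_, ?_⟩, ?_⟩
    · rw [mk_image_eq (fun x y h => (Prod.ext_iff.1 h).1)]
      exact hWc
    · rintro _ ⟨x, -, rfl⟩ _ ⟨y, -, rfl⟩ h
      simp at h; simp [h]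
    · rintro _ ⟨x, hx, rfl⟩ _ ⟨y, hy, rfl⟩ h
      have := hinj (hWO hx) (hWO hy) h
      simp [this]
    · rintro _ ⟨x, hx, rfl⟩
      exact ⟨(hball x hx).2, hBZ _ hx.1⟩
    · rintro _ ⟨x, hx, rfl⟩
      exact ⟨hx.2, (hball x hx).2, hu ⟨x, hx, rfl⟩, huniq x hx⟩
  let t : T := (⟨_, hbig⟩, 0)
  have ht : s t ∈ task2 (u, z, r) := hAr _ (hs t)
  have hW : (s t).1 ∈ W := ⟨⟨t, rfl⟩, ht.1⟩
  have h5 : (s t).2 = f (s t).1 := huniq _ hW _ ht.2.2.1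
  have h6 : f (s t).1 ∈ B := hmaps (hWO hW)
  rw [← h5] at h6
  obtain ⟨t', ht'⟩ := h6
  exact hsd _ _ ht'

structure IsBern (B : Set ℂ) : Prop where
  int : ∀ z ∈ B, ∀ n : ℤ, z ≠ n
  meets : ∀ F : Set ℂ, IsClosed F → ¬ F.Countable → 𝔠 ≤ #(B ∩ F : Set ℂ)
  rigid : ∀ O : Set ℂ, IsOpen O → ∀ f : ℂ → ℂ, ContinuousOn f (B ∩ O) → Set.InjOn f (B ∩ O) →
      Set.MapsTo f (B ∩ O) B → ∀ z ∈ B ∩ O, f z = z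

theorem open_not_countable {O : Set ℂ} (hO : IsOpen O) (hne : O.Nonempty) : ¬ O.Countable := by
  intro hc
  obtain ⟨w, hw, hw'⟩ := (hc.dense_compl ℝ).inter_open_nonempty _ hO hne
  exact hw' hw

theorem IsBern.meets_diff {B : Set ℂ} (hB : IsBern B) {N F : Set ℂ} (hN : N.Countable)
    (hF : IsClosed F) (hc : ¬ F.Countable) : ((B \ N) ∩ F).Nonempty := by
  by_contra h
  rw [Set.not_nonempty_iff_eq_empty] at h
  have h1 : B ∩ F ⊆ N := by
    intro x hx
    by_contra hxN
    have : x ∈ (B \ N) ∩ F := ⟨⟨hx.1, hxN⟩, hx.2⟩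
    rw [h] at this
    exact this
  have h2 := (hB.meets F hF hc).trans (mk_le_mk_of_subset h1)
  have h3 : #N ≤ ℵ₀ := mk_le_aleph0_iff.2 hN.to_subtype
  exact absurd (h2.trans h3) (not_le.2 aleph0_lt_continuum)

theorem meets_open {S : Set ℂ} (hS : ∀ F : Set ℂ, IsClosed F → ¬ F.Countable → (S ∩ F).Nonempty)
    {O : Set ℂ} (hO : IsOpen O) (hne : O.Nonempty) : (S ∩ O).Nonempty := by
  obtain ⟨z, hz⟩ := hne
  obtain ⟨r, hr, h⟩ := Metric.isOpen_iff.1 hO z hz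
  have h1 : ¬ (Metric.closedBall z (r/2)).Countable := fun hc =>
    open_not_countable Metric.isOpen_ball ⟨z, Metric.mem_ball_self (half_pos hr)⟩
      (hc.mono Metric.ball_subset_closedBall)
  obtain ⟨x, hx, hx'⟩ := hS _ Metric.isClosed_closedBall h1
  exact ⟨x, hx, h (Metric.closedBall_subset_ball (half_lt_self hr) hx')⟩

theorem preconn_of_meets {S : Set ℂ}
    (hS : ∀ F : Set ℂ, IsClosed F → ¬ F.Countable → (S ∩ F).Nonempty) : IsPreconnected S := by
  intro u v hu hv huv hSu hSv
  by_contra hcon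
  have huv0 : ¬ (u ∩ v).Nonempty := fun h => hcon (meets_open hS (hu.inter hv) h)
  have hF : ((u ∪ v)ᶜ).Countable := by
    by_contra hc
    obtain ⟨x, hx, hx'⟩ := hS _ (hu.union hv).isClosed_compl hc
    exact hx' (huv hx)
  have hconn := (hF.isConnected_compl_of_one_lt_rank (E := ℂ) (by simp)).isPreconnected
  rw [compl_compl] at hconn
  obtain ⟨x, -, hx⟩ := hconn u v hu hv subset_rfl
    (hSu.mono fun x hx => ⟨Or.inl hx.2, hx.2⟩) (hSv.mono fun x hx => ⟨Or.inr hx.2, hx.2⟩)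
  exact huv0 ⟨x, hx⟩

theorem dense_of_meets {S : Set ℂ}
    (hS : ∀ F : Set ℂ, IsClosed F → ¬ F.Countable → (S ∩ F).Nonempty) : Dense S :=
  dense_iff_inter_open.2 fun _ hO hne => (meets_open hS hO hne).mono fun _ h => ⟨h.2, h.1⟩

section Space

open scoped UniformConvergence

variable {V : Type u}

/-- The glued space: vertices `V` together with one copy of `B` for every tuple in `ρ`. -/
inductive Spc (B : Set ℂ) (ρ : Set (ℕ → V)) : Type u
  | vert (v : V) : Spc B ρ
  | pt (e : ρ) (b : B) : Spc B ρ

noncomputable def hfun (e : ℕ → V) (z : ℂ) (v : V) : ℝ :=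
  min (1/2) (Metric.infDist z (⋃ n ∈ {n : ℕ | e n = v}, Metric.ball (n : ℂ) (1/2))ᶜ)

open Classical in
noncomputable def kfun {ρ : Set (ℕ → V)} (e : ρ) (z : ℂ) (e' : ρ) : ℂ × ℂ :=
  if e' = e then (Complex.sin (z * Real.pi), Complex.sin (z * Real.pi) * z) else 0

open Classical in
noncomputable def emb (B : Set ℂ) (ρ : Set (ℕ → V)) : Spc B ρ → (V →ᵤ ℝ) × (ρ →ᵤ ℂ × ℂ)
  | .vert v => (UniformFun.ofFun fun w => if w = v then 1/2 else 0, UniformFun.ofFun fun _ => 0)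
  | .pt e b => (UniformFun.ofFun (hfun e.1 b), UniformFun.ofFun (kfun e b))

noncomputable instance (B : Set ℂ) (ρ : Set (ℕ → V)) : TopologicalSpace (Spc B ρ) :=
  TopologicalSpace.induced (emb B ρ) inferInstance

theorem emb_ind (B : Set ℂ) (ρ : Set (ℕ → V)) : Topology.IsInducing (emb B ρ) := ⟨rfl⟩

theorem sin_ne {B : Set ℂ} (hB : IsBern B) {z : ℂ} (hz : z ∈ B) : Complex.sin (z * Real.pi) ≠ 0 := by
  intro h
  obtain ⟨k, hk⟩ := Complex.sin_eq_zero_iff.1 h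
  exact hB.int z hz k (mul_right_cancel₀ (by exact_mod_cast Real.pi_ne_zero) hk)

theorem sin_nat (n : ℕ) : Complex.sin ((n : ℂ) * Real.pi) = 0 := Complex.sin_nat_mul_pi n

open Classical in
noncomputable def arc (B : Set ℂ) {ρ : Set (ℕ → V)} (e : ρ) (z : ℂ) : Spc B ρ :=
  if h : z ∈ B then Spc.pt e ⟨z, h⟩ else
    if h : ∃ n : ℕ, z = n then Spc.vert (e.1 h.choose) else Spc.vert (e.1 0)

theorem arc_mem {B : Set ℂ} {ρ : Set (ℕ → V)} (e : ρ) {z : ℂ} (hz : z ∈ B) :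
    arc B e z = Spc.pt e ⟨z, hz⟩ := by
  unfold arc; rw [dif_pos hz]

theorem arc_nat {B : Set ℂ} (hB : IsBern B) {ρ : Set (ℕ → V)} (e : ρ) (n : ℕ) :
    arc B e n = Spc.vert (e.1 n) := by
  have h1 : (n : ℂ) ∉ B := fun h => hB.int _ h n (by simp)
  have h2 : ∃ m : ℕ, (n : ℂ) = m := ⟨n, rfl⟩
  unfold arc
  rw [dif_neg h1, dif_pos h2]
  have : n = h2.choose := by exact_mod_cast h2.choose_spec
  rw [← this]

theorem hfun_nat (e : ℕ → V) (n : ℕ) (v : V) [Decidable (v = e n)] :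
    hfun e n v = if v = e n then 1/2 else 0 := by
  unfold hfun
  set S := (⋃ n ∈ {n : ℕ | e n = v}, Metric.ball (n : ℂ) (1/2))ᶜ with hS
  split_ifs with h
  · apply min_eq_left
    have hne : S.Nonempty := by
      refine ⟨Complex.I, ?_⟩
      simp only [hS, Set.mem_compl_iff, Set.mem_iUnion, not_exists, Metric.mem_ball, not_lt]
      intro m _
      rw [Complex.dist_eq]
      have := Complex.abs_im_le_norm (Complex.I - m)
      simp at this
      linarith
    rw [Metric.le_infDist hne]
    intro y hy
    simp only [hS, Set.mem_compl_iff, Set.mem_iUnion, not_exists, Metric.mem_ball, not_lt] at hy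
    rw [dist_comm]
    exact hy n h.symm
  · have : (n : ℂ) ∈ S := by
      simp only [hS, Set.mem_compl_iff, Set.mem_iUnion, not_exists, Metric.mem_ball, not_lt]
      intro m hm
      have hmn : n ≠ m := by rintro rfl; exact h hm.symm
      have h1 : (1 : ℝ) ≤ dist (n : ℤ) (m : ℤ) := by
        rw [Int.dist_eq]
        have : (1 : ℤ) ≤ |(n : ℤ) - m| := Int.one_le_abs (by omega)
        exact_mod_cast this
      have h2 : dist (n : ℂ) (m : ℂ) = dist (n : ℤ) (m : ℤ) := by
        rw [Int.dist_eq, Complex.dist_eq]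
        have : (n : ℂ) - m = (((n : ℝ) - m : ℝ) : ℂ) := by push_cast; rfl
        rw [this, Complex.norm_real]; simp
      rw [h2]; linarith
    rw [Metric.infDist_zero_of_mem this]
    norm_num

theorem continuous_usingle {ι : Type*} {E : Type*} [PseudoEMetricSpace E] (F : E → ι → E) (i : ι) (c : E)
    (h1 : ∀ x, F x i = x) (h2 : ∀ x j, j ≠ i → F x j = c) :
    Continuous fun x => UniformFun.ofFun (F x) := by
  have : LipschitzWith 1 fun x => UniformFun.ofFun (F x) := by
    rw [UniformFun.lipschitzWith_ofFun_iff]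
    intro j
    by_cases hj : j = i
    · subst hj; simp only [h1]; exact LipschitzWith.id
    · simp only [h2 _ j hj]; exact LipschitzWith.const' c
  exact this.continuous

theorem arc_cont {B : Set ℂ} (hB : IsBern B) {ρ : Set (ℕ → V)} (e : ρ) :
    ContinuousOn (arc B e) (B ∪ Set.range (Nat.cast : ℕ → ℂ)) := by
  classical
  rw [(emb_ind B ρ).continuousOn_iff]
  have hc : Continuous fun z => ((UniformFun.ofFun (hfun e.1 z), UniformFun.ofFun (kfun e z)) :
      (V →ᵤ ℝ) × (ρ →ᵤ ℂ × ℂ)) := by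
    apply Continuous.prodMk
    · have : LipschitzWith 1 fun z => UniformFun.ofFun (hfun e.1 z) := by
        rw [UniformFun.lipschitzWith_ofFun_iff]
        intro v
        exact (Metric.lipschitz_infDist_pt _).const_min _
      exact this.continuous
    · have h1 : Continuous fun x : ℂ × ℂ => UniformFun.ofFun (fun e' : ρ => if e' = e then x else 0) :=
        continuous_usingle _ e 0 (by simp) (by intro x j hj; simp [hj])
      have h2 : Continuous fun z : ℂ => (Complex.sin (z * Real.pi), Complex.sin (z * Real.pi) * z) := by
        fun_prop
      exact h1.comp h2
  refine hc.continuousOn.congr ?_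
  rintro z (hz | ⟨n, rfl⟩)
  · simp only [Function.comp, arc_mem e hz]
    rfl
  · simp only [Function.comp, arc_nat hB]
    refine Prod.ext ?_ ?_
    · funext v
      exact (hfun_nat e.1 n v).symm
    · funext e'
      change (0 : ℂ × ℂ) = kfun e n e'
      unfold kfun
      rw [sin_nat, zero_mul]
      split_ifs <;> rfl

/-- coordinates -/
noncomputable def kc {B : Set ℂ} {ρ : Set (ℕ → V)} (e : ρ) (x : Spc B ρ) : ℂ × ℂ :=
  UniformFun.toFun (emb B ρ x).2 e

theorem kc_cont {B : Set ℂ} {ρ : Set (ℕ → V)} (e : ρ) : Continuous (kc (B := B) e) :=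
  ((UniformFun.lipschitzWith_eval e).continuous.comp continuous_snd).comp (emb_ind B ρ).continuous

theorem kc_inl {B : Set ℂ} {ρ : Set (ℕ → V)} (e : ρ) (v : V) :
    kc (B := B) e (Spc.vert v) = 0 := rfl

theorem kc_inr {B : Set ℂ} {ρ : Set (ℕ → V)} (e : ρ) (b : B) :
    kc (B := B) e (Spc.pt e b) = (Complex.sin (b * Real.pi), Complex.sin (b * Real.pi) * b) := by
  change kfun e b e = _
  simp [kfun]

theorem kc_inr_ne {B : Set ℂ} {ρ : Set (ℕ → V)} {e e' : ρ} (h : e ≠ e') (b : B) :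
    kc (B := B) e (Spc.pt e' b) = 0 := by
  change kfun e' b e = _
  simp [kfun, h]

theorem kc_ne_zero {B : Set ℂ} (hB : IsBern B) {ρ : Set (ℕ → V)} (e : ρ) (x : Spc B ρ) :
    (kc e x).1 ≠ 0 ↔ ∃ b, x = Spc.pt e b := by
  constructor
  · intro h
    rcases x with v | ⟨e', b⟩
    · exact absurd (by rw [kc_inl]; rfl) h
    · by_cases c : e = e'
      · subst c; exact ⟨b, rfl⟩
      · exact absurd (by rw [kc_inr_ne c]; rfl) h
  · rintro ⟨b, rfl⟩
    rw [kc_inr]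
    exact sin_ne hB b.2

noncomputable def vc {B : Set ℂ} {ρ : Set (ℕ → V)} (v : V) (x : Spc B ρ) : ℝ :=
  UniformFun.toFun (emb B ρ x).1 v

theorem vc_cont {B : Set ℂ} {ρ : Set (ℕ → V)} (v : V) : Continuous (vc (B := B) (ρ := ρ) v) :=
  ((UniformFun.lipschitzWith_eval v).continuous.comp continuous_fst).comp (emb_ind B ρ).continuous

open Classical in
theorem vc_inl {B : Set ℂ} {ρ : Set (ℕ → V)} (v w : V) :
    vc (B := B) (ρ := ρ) v (Spc.vert w) = if v = w then 1/2 else 0 := rfl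

theorem emb_inj {B : Set ℂ} (hB : IsBern B) (ρ : Set (ℕ → V)) : Function.Injective (emb B ρ) := by
  intro x y h
  have hk : ∀ e, kc e x = kc e y := fun e => by unfold kc; rw [h]
  have hv : ∀ v, vc v x = vc v y := fun e => by unfold vc; rw [h]
  rcases x with v | ⟨e, b⟩
  · rcases y with w | ⟨e, b⟩
    · have h1 := hv v
      by_cases c : v = w
      · rw [c]
      · rw [vc_inl, vc_inl, if_pos rfl, if_neg c] at h1
        norm_num at h1
    · have h1 := (kc_ne_zero hB e (Spc.pt e b)).2 ⟨b, rfl⟩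
      rw [← hk] at h1
      obtain ⟨b, hb⟩ := (kc_ne_zero hB e _).1 h1
      cases hb
  · have h1 := (kc_ne_zero hB e (Spc.pt e b)).2 ⟨b, rfl⟩
    have h3 := hk e
    rw [hk] at h1
    obtain ⟨b', rfl⟩ := (kc_ne_zero hB e _).1 h1
    rw [kc_inr, kc_inr] at h3
    obtain ⟨h4, h5⟩ := Prod.ext_iff.1 h3
    simp only at h4 h5
    rw [← h4] at h5
    rw [Subtype.ext (mul_left_cancel₀ (sin_ne hB b.2) h5)]

theorem spc_metrizable {B : Set ℂ} (hB : IsBern B) (ρ : Set (ℕ → V)) :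
    TopologicalSpace.MetrizableSpace (Spc B ρ) :=
  haveI : TopologicalSpace.MetrizableSpace ((V →ᵤ ℝ) × (ρ →ᵤ ℂ × ℂ)) :=
    UniformSpace.metrizableSpace
  (Topology.IsEmbedding.mk (emb_ind B ρ) (emb_inj hB ρ)).metrizableSpace

end Space

section Key

variable {V V' : Type u}

/-- The piece with its ports. -/
def Bp (B : Set ℂ) : Set ℂ := B ∪ Set.range (Nat.cast : ℕ → ℂ)

theorem bp_preconn {B : Set ℂ} (hB : IsBern B) : IsPreconnected (Bp B) :=
  preconn_of_meets fun _ hF hc => (hB.meets_diff Set.countable_empty hF hc).mono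
    fun _ hx => ⟨Or.inl hx.1.1, hx.2⟩

theorem bern_nontriv {B : Set ℂ} (hB : IsBern B) : ∃ z ∈ B, ∃ w ∈ B, z ≠ w := by
  have hu : ¬ (Set.univ : Set ℂ).Countable := open_not_countable isOpen_univ ⟨0, trivial⟩
  obtain ⟨z, ⟨hz, -⟩, -⟩ := hB.meets_diff Set.countable_empty isClosed_univ hu
  obtain ⟨w, ⟨hw, hzw⟩, -⟩ := hB.meets_diff (Set.countable_singleton z) isClosed_univ hu
  exact ⟨z, hz, w, hw, fun h => hzw h.symm⟩

theorem const_of_td {B : Set ℂ} (hB : IsBern B) {Z : Type*} [TopologicalSpace Z]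
    [TotallyDisconnectedSpace Z] {G : ℂ → Z} (hG : ContinuousOn G (Bp B)) {z w : ℂ}
    (hz : z ∈ Bp B) (hw : w ∈ Bp B) : G z = G w :=
  ((bp_preconn hB).image G hG).subsingleton ⟨z, hz, rfl⟩ ⟨w, hw, rfl⟩

theorem arc_injOn {B : Set ℂ} {ρ : Set (ℕ → V)} (e : ρ) : Set.InjOn (arc B e) B := by
  intro z hz w hw h
  rw [arc_mem e hz, arc_mem e hw] at h
  cases h; rfl

theorem key {B : Set ℂ} (hB : IsBern B) {ρ : Set (ℕ → V)} {ρ' : Set (ℕ → V')} {Z : Type*}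
    [TopologicalSpace Z] [TotallyDisconnectedSpace Z] (g : Spc B ρ → Spc B ρ' ⊕ Z)
    (hg : Continuous g) (hgi : Function.Injective g) (e : ρ) :
    ∃ e' : ρ', ∀ n, g (Spc.vert (e.1 n)) = Sum.inl (Spc.vert (e'.1 n)) := by
  let G : ℂ → Spc B ρ' ⊕ Z := fun z => g (arc B e z)
  have hG : ContinuousOn G (Bp B) := hg.comp_continuousOn (arc_cont hB e)
  have hGi : Set.InjOn G B := fun z hz w hw h => arc_injOn e hz hw (hgi h)
  obtain ⟨a, ha, b, hb, hab⟩ := bern_nontriv hB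
  have hleft : ∀ z ∈ Bp B, ∃ x, G z = Sum.inl x := by
    intro z hz
    rcases hw : G z with x | w
    · exact ⟨x, rfl⟩
    · exfalso
      let m : Spc B ρ' ⊕ Z → Bool × Z := Sum.elim (fun _ => (false, w)) (fun z => (true, z))
      have hm : Continuous m := by
        apply Continuous.sumElim
        · exact continuous_const
        · exact continuous_const.prodMk continuous_id
      have hc : ∀ y ∈ Bp B, G y = Sum.inr w := by
        intro y hy
        have h1 := const_of_td hB (hm.comp_continuousOn hG) hy hz
        have h2 : m (G y) = m (G z) := h1
        rw [hw] at h2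
        rcases hy' : G y with x | w'
        · rw [hy'] at h2; simp [m] at h2
        · rw [hy'] at h2; simp [m] at h2; rw [h2]
      exact hab (hGi ha hb ((hc a (Or.inl ha)).trans (hc b (Or.inl hb)).symm))
  obtain ⟨x0, -⟩ := hleft a (Or.inl ha)
  let G1 : ℂ → Spc B ρ' := fun z => Sum.elim id (fun _ => x0) (G z)
  have hG1 : ContinuousOn G1 (Bp B) :=
    (Continuous.sumElim continuous_id continuous_const).comp_continuousOn hG
  have hGG : ∀ z ∈ Bp B, G z = Sum.inl (G1 z) := by
    intro z hz
    obtain ⟨x, hx⟩ := hleft z hz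
    simp [G1, hx]
  have hG1B : ContinuousOn G1 B := hG1.mono fun _ h => Or.inl h
  have hG1i : Set.InjOn G1 B := by
    intro z hz w hw h
    apply hGi hz hw
    rw [hGG z (Or.inl hz), hGG w (Or.inl hw), h]
  let N : Set ℂ := {z | z ∈ B ∧ ∃ v, G1 z = Spc.vert v}
  have hN : N.Countable := by
    have hcN : Continuous (fun z : N => G1 z) :=
      continuousOn_iff_continuous_domRestrict.1 (hG1B.mono fun z hz => hz.1)
    have hd : DiscreteTopology N := by
      rw [discreteTopology_iff_forall_isOpen]
      have hs : ∀ z : N, IsOpen ({z} : Set N) := by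
        rintro ⟨z, hz, v, hv⟩
        have h1 : IsOpen {y : N | 1/4 < vc v (G1 y)} :=
          isOpen_lt continuous_const ((vc_cont v).comp hcN)
        convert h1
        ext ⟨y, hy, w, hw⟩
        simp only [Set.mem_singleton_iff, Set.mem_ofPred_eq, Subtype.mk.injEq, hw, vc_inl]
        constructor
        · rintro rfl
          rw [hv] at hw
          cases hw
          simp; norm_num
        · intro h
          by_cases c : v = w
          · exact hG1i hy hz (by rw [hv, hw, c])
          · rw [if_neg c] at h; norm_num at h
      intro s
      rw [← Set.biUnion_of_singleton s]
      exact isOpen_biUnion fun i _ => hs i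
    exact Set.countable_coe_iff.1 (TopologicalSpace.separableSpace_iff_countable.1 inferInstance)
  have hopen : ∀ e' : ρ', IsOpen {x : Spc B ρ' | (kc e' x).1 ≠ 0} := fun e' =>
    isOpen_ne_fun (continuous_fst.comp (kc_cont e')) continuous_const
  have hcoord : ∀ z ∈ B, ∀ e' b, G1 z = Spc.pt e' b → (b : ℂ) = z := by
    intro z hz e' b hzb
    obtain ⟨O, hO, hOB⟩ := continuousOn_iff'.1 hG1B _ (hopen e')
    have hmem : ∀ y, y ∈ B ∩ O ↔ y ∈ B ∧ ∃ b, G1 y = Spc.pt e' b := by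
      intro y
      rw [Set.inter_comm, ← hOB, ← kc_ne_zero hB]
      exact and_comm
    let f : ℂ → ℂ := fun y => (kc e' (G1 y)).2 / (kc e' (G1 y)).1
    have hf : ∀ y b, G1 y = Spc.pt e' b → f y = b := by
      intro y b h
      simp only [f, h, kc_inr]
      exact mul_div_cancel_left₀ _ (sin_ne hB b.2)
    have hfc : ContinuousOn f (B ∩ O) := by
      have hk := (kc_cont e').comp_continuousOn (hG1B.mono (Set.inter_subset_left (t := O)))
      refine ContinuousOn.div (continuous_snd.comp_continuousOn hk) (continuous_fst.comp_continuousOn hk) ?_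
      intro y hy
      exact (kc_ne_zero hB e' _).2 ((hmem y).1 hy).2
    have := hB.rigid O hO f hfc ?_ ?_ z ((hmem z).2 ⟨hz, b, hzb⟩)
    · rw [← hf z b hzb, this]
    · intro y hy w hw h
      obtain ⟨hy1, b1, hb1⟩ := (hmem y).1 hy
      obtain ⟨hw1, b2, hb2⟩ := (hmem w).1 hw
      rw [hf y b1 hb1, hf w b2 hb2] at h
      apply hG1i hy1 hw1
      rw [hb1, hb2, Subtype.ext h]
    · intro y hy
      obtain ⟨hy1, b1, hb1⟩ := (hmem y).1 hy
      rw [hf y b1 hb1]; exact b1.2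
  have hS : ∀ F : Set ℂ, IsClosed F → ¬ F.Countable → ((B \ N) ∩ F).Nonempty :=
    fun F hF hc => hB.meets_diff hN hF hc
  have hSpt : ∀ z ∈ B \ N, ∃ e' b, G1 z = Spc.pt e' b := by
    intro z hz
    rcases h : G1 z with v | ⟨e', b⟩
    · exact absurd ⟨hz.1, v, h⟩ hz.2
    · exact ⟨e', b, rfl⟩
  obtain ⟨z0, hz0, -⟩ := hS _ isClosed_univ (open_not_countable isOpen_univ ⟨0, trivial⟩)
  obtain ⟨e', b0, hb0⟩ := hSpt z0 hz0
  have hall : ∀ z ∈ B \ N, ∃ b, G1 z = Spc.pt e' b := by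
    have : PreconnectedSpace (B \ N : Set ℂ) :=
      isPreconnected_iff_preconnectedSpace.1 (preconn_of_meets hS)
    have hcS : Continuous (fun z : (B \ N : Set ℂ) => G1 z) :=
      continuousOn_iff_continuous_domRestrict.1 (hG1B.mono fun z hz => hz.1)
    let A : ρ' → Set (B \ N : Set ℂ) := fun e => {z | (kc e (G1 z)).1 ≠ 0}
    have hA : ∀ e, IsOpen (A e) := fun e => (hopen e).preimage hcS
    have hAm : ∀ e z, z ∈ A e ↔ ∃ b, G1 z = Spc.pt e b := fun e z => kc_ne_zero hB e _
    have hcl : (A e')ᶜ = ⋃ e ∈ {e | e ≠ e'}, A e := by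
      ext z
      simp only [Set.mem_compl_iff, Set.mem_iUnion, hAm, exists_prop, Set.mem_ofPred_eq]
      obtain ⟨e1, b, hb⟩ := hSpt z z.2
      constructor
      · intro h
        exact ⟨e1, fun h' => h (h' ▸ ⟨b, hb⟩), b, hb⟩
      · rintro ⟨e2, h2, b2, hb2⟩ ⟨b3, hb3⟩
        rw [hb2] at hb3
        cases hb3
        exact h2 rfl
    have hclopen : IsClopen (A e') := by
      refine ⟨⟨?_⟩, hA e'⟩
      rw [hcl]
      exact isOpen_biUnion fun e _ => hA e
    have huniv := hclopen.eq_univ ⟨⟨z0, hz0⟩, (hAm _ _).2 ⟨b0, hb0⟩⟩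
    intro z hz
    have : (⟨z, hz⟩ : (B \ N : Set ℂ)) ∈ A e' := by rw [huniv]; trivial
    exact (hAm _ _).1 this
  have heq : Set.EqOn G1 (arc B e') (B \ N) := by
    intro z hz
    obtain ⟨b, hb⟩ := hall z hz
    have h1 := hcoord z hz.1 e' b hb
    rw [arc_mem e' hz.1, hb]
    congr 1
    exact Subtype.ext h1
  have := spc_metrizable hB ρ'
  have heq' : Set.EqOn G1 (arc B e') (Bp B) :=
    heq.of_subset_closure hG1 (arc_cont hB e') (fun z hz => Or.inl hz.1)
      (fun z _ => dense_of_meets hS z)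
  refine ⟨e', fun n => ?_⟩
  have hn : (n : ℂ) ∈ Bp B := Or.inr ⟨n, rfl⟩
  have h1 := hGG _ hn
  rw [heq' hn, arc_nat hB] at h1
  rw [← h1]
  simp only [G, arc_nat hB]

theorem clopen_contains {B : Set ℂ} (hB : IsBern B) {ρ : Set (ℕ → V)}
    (hρ : ∀ v, ∃ s ∈ ρ, ∃ n, s n = v) {K : Set (Spc B ρ)} (hK : IsClopen K) (hne : K.Nonempty) :
    ∃ e : ρ, ∀ z ∈ Bp B, arc B e z ∈ K := by
  obtain ⟨x, hx⟩ := hne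
  obtain ⟨e, z, hz, hzx⟩ : ∃ e : ρ, ∃ z ∈ Bp B, arc B e z = x := by
    rcases x with v | ⟨e, b⟩
    · obtain ⟨s, hs, n, hn⟩ := hρ v
      exact ⟨⟨s, hs⟩, n, Or.inr ⟨n, rfl⟩, by rw [arc_nat hB]; exact congrArg _ hn⟩
    · exact ⟨e, b, Or.inl b.2, arc_mem e b.2⟩
  refine ⟨e, fun y hy => ?_⟩
  exact ((bp_preconn hB).image _ (arc_cont hB e)).subset_isClopen hK
    ⟨x, ⟨z, hz, hzx⟩, hx⟩ ⟨y, hy, rfl⟩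

theorem spc_mk {B : Set ℂ} {ρ : Set (ℕ → V)} (hV : 𝔠 ≤ #V) (hρ : #ρ ≤ #V) : #(Spc B ρ) = #V := by
  apply le_antisymm
  · have h1 : #(Spc B ρ) ≤ #(V ⊕ (ρ × B)) := by
      refine mk_le_of_injective (f := fun x => match x with
        | .vert v => Sum.inl v
        | .pt e b => Sum.inr (e, b)) ?_
      rintro (v | ⟨e, b⟩) (v | ⟨e, b⟩) h <;> simp at h
      · rw [h]
      · rw [h.1, h.2]
    refine h1.trans ?_
    have hV' := aleph0_le_continuum.trans hV
    rw [mk_sum, mk_prod, lift_id, lift_uzero]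
    simp only [lift_id]
    refine add_le_of_le hV' (by simp) ?_
    have hb : lift.{u} #B ≤ #V := by
      have : #B ≤ 𝔠 := (mk_set_le B).trans (by rw [mk_complex])
      exact (lift_le.2 this).trans (by simpa using hV)
    simp
    exact (mul_le_mul' hρ hb).trans (by rw [mul_eq_self hV'])
  · exact mk_le_of_injective (f := fun v => Spc.vert v) fun v w h => by cases h; rfl

end Key

section Final

abbrev CZ := ℕ → Bool
abbrev HZ := CZ × ℚ × ℕ
abbrev ZD := HZ ⊕ Unit
abbrev ZE := HZ ⊕ CZ

theorem sum_metrizable {A B : Type*} [TopologicalSpace A] [TopologicalSpace B]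
    [TopologicalSpace.MetrizableSpace A] [TopologicalSpace.MetrizableSpace B] :
    TopologicalSpace.MetrizableSpace (A ⊕ B) := by
  letI := TopologicalSpace.metrizableSpaceMetric A
  letI := TopologicalSpace.metrizableSpaceMetric B
  letI : MetricSpace (A ⊕ B) := Metric.metricSpaceSum
  infer_instance

theorem clopen_emb {A B : Type*} [TopologicalSpace A] [TopologicalSpace B]
    (h : HomeoToClopenSubset A B) :
    ∃ i : A → B, Topology.IsOpenEmbedding i ∧ Topology.IsClosedEmbedding i := by
  obtain ⟨t, ht, ⟨φ⟩⟩ := h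
  exact ⟨fun a => (φ a : B), ht.isOpen.isOpenEmbedding_subtypeVal.comp φ.isOpenEmbedding,
    ht.isClosed.isClosedEmbedding_subtypeVal.comp φ.isClosedEmbedding⟩

theorem closed_of_emb {A B : Type*} [TopologicalSpace A] [TopologicalSpace B]
    {i : A → B} (h : Topology.IsClosedEmbedding i) : HomeoToClosedSubset A B :=
  ⟨Set.range i, h.isClosed_range, ⟨h.isEmbedding.toHomeomorph⟩⟩

theorem cz_not_isolated (c : CZ) : ¬ IsOpen ({c} : Set CZ) := by
  intro h
  have h1 : Filter.Tendsto (fun n : ℕ => Function.update c n (!c n)) Filter.atTop (nhds c) := by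
    rw [tendsto_pi_nhds]
    intro k
    apply tendsto_const_nhds.congr'
    filter_upwards [Filter.eventually_gt_atTop k] with n hn
    rw [Function.update_of_ne hn.ne]
  obtain ⟨n, hn⟩ := (h1.eventually (h.mem_nhds rfl)).exists
  have := congrFun hn n
  simp at this

theorem rat_not_isolated (q : ℚ) (h : IsOpen ({q} : Set ℚ)) : False := by
  have h1 := Rat.interior_compact_eq_empty (isCompact_singleton (x := q))
  rw [h.interior_eq] at h1
  exact Set.singleton_ne_empty q h1

theorem slice_emb (c : CZ) (n : ℕ) : Topology.IsClosedEmbedding (fun q : ℚ => ((c, q, n) : HZ)) := by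
  refine Topology.IsClosedEmbedding.of_continuous_injective_isClosedMap (by fun_prop)
    (fun a b h => by simpa using h) ?_
  intro s hs
  have : (fun q : ℚ => ((c, q, n) : HZ)) '' s = {c} ×ˢ (s ×ˢ {n}) := by
    ext ⟨a, b, d⟩
    simp only [Set.mem_image, Prod.mk.injEq, Set.mem_prod, Set.mem_singleton_iff]
    constructor
    · rintro ⟨x, hx, rfl, rfl, rfl⟩; exact ⟨rfl, hx, rfl⟩
    · rintro ⟨rfl, hx, rfl⟩; exact ⟨b, hx, rfl, rfl, rfl⟩
  rw [this]
  exact isClosed_singleton.prod (hs.prod isClosed_singleton)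

/-- Shift `HZ` and put a closed subspace of `CZ` into the bottom level. -/
theorem absorb {A X : Type*} [TopologicalSpace A] [TopologicalSpace X] {Y : Type*} [TopologicalSpace Y]
    {j : A → CZ} (hj : Topology.IsClosedEmbedding j) :
    HomeoToClosedSubset (X ⊕ (HZ ⊕ A)) (X ⊕ (HZ ⊕ Y)) := by
  let a : HZ → HZ := fun x => (x.1, x.2.1, x.2.2 + 1)
  let b : A → HZ := fun x => (j x, 0, 0)
  have ha : Topology.IsClosedEmbedding a := by
    refine Topology.IsClosedEmbedding.prodMap Topology.IsClosedEmbedding.id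
      (Topology.IsClosedEmbedding.prodMap Topology.IsClosedEmbedding.id (g := fun n : ℕ => n + 1) ?_)
    exact Topology.IsClosedEmbedding.of_continuous_injective_isClosedMap (by fun_prop)
      (fun a b h => by simpa using h) (fun s _ => isClosed_discrete _)
  have hb : Topology.IsClosedEmbedding b := by
    have : Topology.IsClosedEmbedding (fun c : CZ => ((c, 0, 0) : HZ)) := by
      refine Topology.IsClosedEmbedding.of_continuous_injective_isClosedMap (by fun_prop)
        (fun a b h => by simpa using h) ?_
      intro s hs
      have : (fun c : CZ => ((c, 0, 0) : HZ)) '' s = s ×ˢ ({0} ×ˢ {0}) := by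
        ext ⟨a, b, d⟩
        simp only [Set.mem_image, Prod.mk.injEq, Set.mem_prod, Set.mem_singleton_iff]
        constructor
        · rintro ⟨x, hx, rfl, rfl, rfl⟩; exact ⟨hx, rfl, rfl⟩
        · rintro ⟨hx, rfl, rfl⟩; exact ⟨a, hx, rfl, rfl, rfl⟩
      rw [this]
      exact hs.prod (isClosed_singleton.prod isClosed_singleton)
    exact this.comp hj
  have hab : Topology.IsClosedEmbedding (Sum.elim a b) := by
    refine Topology.IsClosedEmbedding.of_continuous_injective_isClosedMap
      (Continuous.sumElim ha.continuous hb.continuous) ?_ ?_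
    · refine Function.Injective.sumElim ha.injective hb.injective ?_
      intro x y h
      simp [a, b] at h
    · exact IsClosedMap.sumElim ha.isClosedMap hb.isClosedMap
  have hin : Topology.IsClosedEmbedding (Sum.inl : HZ → HZ ⊕ Y) := Topology.IsClosedEmbedding.inl
  have h2 := hin.comp hab
  let i : X ⊕ (HZ ⊕ A) → X ⊕ (HZ ⊕ Y) := Sum.map id (Sum.inl ∘ Sum.elim a b)
  have hi : Topology.IsClosedEmbedding i := by
    refine Topology.IsClosedEmbedding.of_continuous_injective_isClosedMap
      (continuous_id.sumMap h2.continuous) ?_ ?_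
    · exact Function.Injective.sumMap Function.injective_id h2.injective
    · have : i = Sum.elim (Sum.inl ∘ id) (Sum.inr ∘ (Sum.inl ∘ Sum.elim a b)) := by
        ext x; rcases x with x | x <;> rfl
      rw [this]
      exact IsClosedMap.sumElim (Topology.IsClosedEmbedding.inl.isClosedMap)
        (Topology.IsClosedEmbedding.inr.isClosedMap.comp h2.isClosedMap)
  exact closed_of_emb hi

variable {V : Type u} {B : Set ℂ} {ρ : Set (ℕ → V)}

theorem td_clopen_false (hB : IsBern B) (hρ : ∀ v, ∃ s ∈ ρ, ∃ n, s n = v) {A Y : Type*}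
    [TopologicalSpace A] [TotallyDisconnectedSpace A] [TopologicalSpace Y]
    {j : A → Spc B ρ ⊕ Y} (hj : Topology.IsOpenEmbedding j) (hj' : Topology.IsClosedEmbedding j)
    {c : A} {x : Spc B ρ} (hx : j c = Sum.inl x) : False := by
  have hK : IsClopen (Sum.inl ⁻¹' (Set.range j) : Set (Spc B ρ)) :=
    IsClopen.preimage ⟨hj'.isClosed_range, hj.isOpen_range⟩ continuous_inl
  obtain ⟨e, he⟩ := clopen_contains hB hρ hK ⟨x, c, hx⟩
  have : Nonempty A := ⟨c⟩
  choose! k hk using he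
  have hkc : ContinuousOn k (Bp B) := by
    rw [hj.isEmbedding.isInducing.continuousOn_iff]
    exact (continuous_inl.comp_continuousOn (arc_cont hB e)).congr fun z hz => hk z hz
  obtain ⟨a, ha, b, hb, hab⟩ := bern_nontriv hB
  have h1 := const_of_td hB hkc (Or.inl ha : a ∈ Bp B) (Or.inl hb)
  have h2 := hk a (Or.inl ha)
  rw [h1, hk b (Or.inl hb)] at h2
  exact hab (arc_injOn e ha hb (Sum.inl_injective h2.symm))

theorem not_clopen_DE (hB : IsBern B) (hρ : ∀ v, ∃ s ∈ ρ, ∃ n, s n = v) :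
    ¬ HomeoToClopenSubset (Spc B ρ ⊕ ZD) (Spc B ρ ⊕ ZE) := by
  intro h
  obtain ⟨i, hi, hi'⟩ := clopen_emb h
  let j : Unit → Spc B ρ ⊕ ZE := i ∘ Sum.inr ∘ Sum.inr
  have hj : Topology.IsOpenEmbedding j :=
    hi.comp (Topology.IsOpenEmbedding.inr.comp Topology.IsOpenEmbedding.inr)
  have hj' : Topology.IsClosedEmbedding j :=
    hi'.comp (Topology.IsClosedEmbedding.inr.comp Topology.IsClosedEmbedding.inr)
  have hop : IsOpen (Set.range j) := hj.isOpen_range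
  have hr : Set.range j = {j ()} := by
    ext x; constructor
    · rintro ⟨⟨⟩, rfl⟩; rfl
    · rintro rfl; exact ⟨(), rfl⟩
  rw [hr] at hop
  rcases hx : j () with x | (⟨c, q, n⟩ | c)
  · exact td_clopen_false hB hρ hj hj' hx
  · rw [hx] at hop
    have h1 : IsOpen ((fun q : ℚ => (Sum.inr (Sum.inl (c, q, n)) : Spc B ρ ⊕ ZE)) ⁻¹'
        {Sum.inr (Sum.inl (c, q, n))}) := hop.preimage (by fun_prop)
    apply rat_not_isolated q
    convert h1
    ext y; simp
  · rw [hx] at hop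
    have h1 : IsOpen ((fun c : CZ => (Sum.inr (Sum.inr c) : Spc B ρ ⊕ ZE)) ⁻¹'
        {Sum.inr (Sum.inr c)}) := hop.preimage (by fun_prop)
    apply cz_not_isolated c
    convert h1
    ext y; simp

theorem not_clopen_ED (hB : IsBern B) (hρ : ∀ v, ∃ s ∈ ρ, ∃ n, s n = v) :
    ¬ HomeoToClopenSubset (Spc B ρ ⊕ ZE) (Spc B ρ ⊕ ZD) := by
  intro h
  obtain ⟨i, hi, hi'⟩ := clopen_emb h
  let j : CZ → Spc B ρ ⊕ ZD := i ∘ Sum.inr ∘ Sum.inr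
  have hj : Topology.IsOpenEmbedding j :=
    hi.comp (Topology.IsOpenEmbedding.inr.comp Topology.IsOpenEmbedding.inr)
  have hj' : Topology.IsClosedEmbedding j :=
    hi'.comp (Topology.IsClosedEmbedding.inr.comp Topology.IsClosedEmbedding.inr)
  let c0 : CZ := fun _ => false
  rcases hx : j c0 with x | (⟨c, q, n⟩ | c)
  · exact td_clopen_false hB hρ hj hj' hx
  · have hm : Topology.IsClosedEmbedding
        (fun q : ℚ => (Sum.inr (Sum.inl (c, q, n)) : Spc B ρ ⊕ ZD)) :=
      Topology.IsClosedEmbedding.inr.comp (Topology.IsClosedEmbedding.inl.comp (slice_emb c n))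
    have hcomp := hm.isCompact_preimage (isCompact_range hj.continuous)
    have hop := hj.isOpen_range.preimage hm.continuous
    have h1 := Rat.interior_compact_eq_empty hcomp
    rw [hop.interior_eq] at h1
    have : q ∈ (∅ : Set ℚ) := by rw [← h1]; exact ⟨c0, hx⟩
    exact this
  · have hop : IsOpen ({Sum.inr (Sum.inr c)} : Set (Spc B ρ ⊕ ZD)) := by
      have := (Topology.IsOpenEmbedding.inr (X := Spc B ρ) (Y := ZD)).comp
        (Topology.IsOpenEmbedding.inr (X := HZ) (Y := Unit))
      convert this.isOpen_range
      ext x; constructor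
      · rintro rfl; exact ⟨c, rfl⟩
      · rintro ⟨⟨⟩, rfl⟩; rfl
    apply cz_not_isolated c0
    convert hop.preimage hj.continuous
    ext y
    simp only [Set.mem_singleton_iff, Set.mem_preimage, ← hx]
    exact hj.injective.eq_iff.symm

theorem no_inj [LinearOrder V] [WellFoundedLT V] [OrderTop V] [Nontrivial V] (hB : IsBern B) {q q' : V}
    (hqq : q ≠ q') {Z Z' : Type*} [TopologicalSpace Z] [TopologicalSpace Z']
    [TotallyDisconnectedSpace Z'] : NoInjCont (Spc B (rel q) ⊕ Z) (Spc B (rel q') ⊕ Z') := by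
  rintro ⟨f, hf, hfi⟩
  have hk := key hB (fun x => f (Sum.inl x)) (hf.comp continuous_inl)
    (hfi.comp Sum.inl_injective)
  have hF : ∀ v, ∃ w, f (Sum.inl (Spc.vert v)) = Sum.inl (Spc.vert w) := by
    intro v
    obtain ⟨s, hs, n, hn⟩ := rel_cover q v
    obtain ⟨e', he'⟩ := hk ⟨s, hs⟩
    have := he' n
    simp only [hn] at this
    exact ⟨_, this⟩
  choose F hF using hF
  apply hqq
  apply rel_rigid F
  · intro v w h
    have h1 : f (Sum.inl (Spc.vert v)) = f (Sum.inl (Spc.vert w)) := by rw [hF, hF, h]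
    have h2 := Sum.inl_injective (hfi h1)
    cases h2; rfl
  · intro s hs
    obtain ⟨e', he'⟩ := hk ⟨s, hs⟩
    have : F ∘ s = e'.1 := by
      funext n
      have h1 := he' n
      rw [hF] at h1
      have h2 := Sum.inl_injective h1
      simpa using h2
    rw [this]; exact e'.2

theorem card_sum_eq {α : Cardinal.{u}} (hα : 𝔠 ≤ α) {X : Type u} {Z : Type} (hX : #X = α) (hZ : #Z ≤ 𝔠) :
    #(X ⊕ Z) = α := by
  rw [mk_sum, hX]
  simp only [lift_uzero]
  refine add_eq_left (aleph0_le_continuum.trans ?_) ?_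
  · simpa using hα
  · refine le_trans ?_ (by simpa using hα : 𝔠 ≤ _)
    simpa using (lift_le.{u}.2 hZ)

end Final

theorem statement9 (α : Cardinal.{u}) (hα : Cardinal.continuum ≤ α)
    (Q : Type u) (hQ : #Q = α) :
    ∃ (D E : Q → Type u) (tD : ∀ q, TopologicalSpace (D q))
      (tE : ∀ q, TopologicalSpace (E q)),
      (∀ q, @Stmt9Pair α (D q) (E q) (tD q) (tE q)) ∧
      (∀ q q', q ≠ q' →
        @NoInjCont (D q) (tD q) (D q') (tD q') ∧
        @NoInjCont (D q) (tD q) (E q') (tE q') ∧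
        @NoInjCont (E q) (tE q) (D q') (tD q') ∧
        @NoInjCont (E q) (tE q) (E q') (tE q')) := by
  obtain ⟨B, hB1, hB2, hB3⟩ := exists_bernstein
  have hB : IsBern B := ⟨hB1, hB2, hB3⟩
  obtain ⟨lo, wf, -⟩ := exists_ord_eq_type_lt Q
  have hQi : ℵ₀ ≤ #Q := by rw [hQ]; exact aleph0_le_continuum.trans hα
  have : Infinite Q := infinite_iff.2 hQi
  have hV : #(WithTop Q) = α := by
    have : #(WithTop Q) = #Q + 1 := mk_option
    rw [this, add_one_eq hQi, hQ]
  have : Infinite (WithTop Q) := infinite_iff.2 (by rw [hV]; exact aleph0_le_continuum.trans hα)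
  have hX : ∀ q : WithTop Q, #(Spc B (rel q)) = α := fun q => by
    rw [spc_mk (by rw [hV]; exact hα) (rel_card q), hV]
  have hH : #HZ ≤ 𝔠 := by simp
  have hZD : #ZD ≤ 𝔠 := by
    rw [mk_sum]; simp
    exact (add_one_eq aleph0_le_continuum).le
  have hZE : #ZE ≤ 𝔠 := by
    rw [mk_sum]; simp
  refine ⟨fun q => Spc B (rel (q : WithTop Q)) ⊕ ZD, fun q => Spc B (rel (q : WithTop Q)) ⊕ ZE,
    fun q => inferInstance, fun q => inferInstance, ?_, ?_⟩
  · intro q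
    have hm := spc_metrizable hB (rel (q : WithTop Q))
    have hmD : TopologicalSpace.MetrizableSpace ZD := sum_metrizable
    have hmE : TopologicalSpace.MetrizableSpace ZE := sum_metrizable
    refine ⟨sum_metrizable, sum_metrizable, card_sum_eq hα (hX q) hZD, card_sum_eq hα (hX q) hZE,
      absorb (j := fun _ => fun _ => false) ?_, absorb Topology.IsClosedEmbedding.id,
      not_clopen_DE hB (rel_cover _), not_clopen_ED hB (rel_cover _)⟩
    exact Topology.IsClosedEmbedding.of_continuous_injective_isClosedMap continuous_const
      (fun _ _ _ => rfl) (fun s _ => (Set.toFinite _).isClosed)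
  · intro q q' hqq
    have h : (q : WithTop Q) ≠ (q' : WithTop Q) := fun h => hqq (WithTop.coe_injective h)
    exact ⟨no_inj hB h, no_inj hB h, no_inj hB h, no_inj hB h⟩
end
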